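/- Under the null hypothesis, for any fixed x > 0, P( M_n^+ ≥ x / (2 log n · log log n) ) ≤ e^{-x} + o(1) as n → ∞. -/

import Mathlib

open MeasureTheory Filter Set

noncomputable section

/-- Density of the Beta(a,b) distribution on [0,1]. -/
def betaPDF (a b x : ℝ) : ℝ :=
  x ^ (a - 1) * (1 - x) ^ (b - 1) / (Real.Gamma a * Real.Gamma b / Real.Gamma (a + b))

/-- Regularized incomplete beta function `I_x(a,b) = P(Beta(a,b) < x)`. -/
def regIncBeta (a b x : ℝ) : ℝ := ∫ t in Set.Ioc (0:ℝ) x, betaPDF a b t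

/-- The `i`-th order statistic (0-based) of the sample `u`. -/
def orderStat {n : ℕ} (u : Fin n → ℝ) (i : Fin n) : ℝ := u (Tuple.sort u i)

/-- `p_{(i)} = P(Beta(i, n-i+1) < u_{(i)})` (with 1-based index `i = (i : Fin n) + 1`). -/
def pOrd {n : ℕ} (u : Fin n → ℝ) (i : Fin n) : ℝ :=
  regIncBeta ((i : ℕ) + 1 : ℝ) ((n : ℝ) - (i : ℕ)) (orderStat u i)

/-- One-sided exact Berk-Jones statistic `M_n^+`. -/
def MnPlus {n : ℕ} (u : Fin n → ℝ) : ℝ := ⨅ i, pOrd u i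

/-- One-sided exact Berk-Jones statistic `M_n^-`. -/
def MnMinus {n : ℕ} (u : Fin n → ℝ) : ℝ := ⨅ i, (1 - pOrd u i)

/-- Two-sided exact Berk-Jones statistic `M_n`. -/
def Mn {n : ℕ} (u : Fin n → ℝ) : ℝ := min (MnPlus u) (MnMinus u)

/-- Joint law of `n` i.i.d. `U[0,1]` random variables (the null hypothesis). -/
def nullMeasure (n : ℕ) : Measure (Fin n → ℝ) :=
  Measure.pi fun _ => MeasureTheory.volume.restrict (Set.Icc (0:ℝ) 1)

end

section BerkJonesPartA
open MeasureTheory Filter Set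

/-- Binomial probability mass function. -/
noncomputable def bp (m : ℕ) (q : ℝ) (k : ℕ) : ℝ := (m.choose k : ℝ) * q ^ k * (1 - q) ^ (m - k)

/-- Binomial upper tail. -/
noncomputable def bT (m : ℕ) (q : ℝ) (j : ℕ) : ℝ := ∑ k ∈ Finset.Icc j m, bp m q k

lemma bp_nonneg {m : ℕ} {q : ℝ} (h0 : 0 ≤ q) (h1 : q ≤ 1) (k : ℕ) : 0 ≤ bp m q k := by
  unfold bp
  have : 0 ≤ 1 - q := by linarith
  positivity

lemma bp_eq_zero {m k : ℕ} (q : ℝ) (h : m < k) : bp m q k = 0 := by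
  simp [bp, Nat.choose_eq_zero_of_lt h]

lemma bp_eq_bernstein (m : ℕ) (q : ℝ) (k : ℕ) : bp m q k = (bernsteinPolynomial ℝ m k).eval q := by
  simp [bp, bernsteinPolynomial]

lemma sum_bp (m : ℕ) (q : ℝ) : ∑ k ∈ Finset.range (m + 1), bp m q k = 1 := by
  have := congrArg (Polynomial.eval q) (bernsteinPolynomial.sum ℝ m)
  simpa [Polynomial.eval_finsetSum, bp_eq_bernstein] using this

lemma var_bp (m : ℕ) (q : ℝ) :
    ∑ k ∈ Finset.range (m + 1), ((k : ℝ) - m * q) ^ 2 * bp m q k = m * q * (1 - q) := by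
  have := congrArg (Polynomial.eval q) (bernsteinPolynomial.variance ℝ m)
  simp [Polynomial.eval_finsetSum, ← bp_eq_bernstein] at this
  rw [← this]
  apply Finset.sum_congr rfl
  intro k _
  ring

lemma mgf_bp (m : ℕ) (q l : ℝ) :
    ∑ k ∈ Finset.range (m + 1), bp m q k * Real.exp (l * k) = (1 - q + q * Real.exp l) ^ m := by
  rw [add_comm (1 - q), add_pow]
  apply Finset.sum_congr rfl
  intro k _
  rw [mul_pow, ← Real.exp_nat_mul, mul_comm l]
  unfold bp; ring

lemma bT_nonneg {m : ℕ} {q : ℝ} (h0 : 0 ≤ q) (h1 : q ≤ 1) (j : ℕ) : 0 ≤ bT m q j :=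
  Finset.sum_nonneg fun k _ => bp_nonneg h0 h1 k

lemma bT_anti {m : ℕ} {q : ℝ} (h0 : 0 ≤ q) (h1 : q ≤ 1) {j j' : ℕ} (h : j ≤ j') :
    bT m q j' ≤ bT m q j :=
  Finset.sum_le_sum_of_subset_of_nonneg (Finset.Icc_subset_Icc_left h) fun k _ _ => bp_nonneg h0 h1 k

lemma bT_zero (m : ℕ) (q : ℝ) : bT m q 0 = 1 := by
  rw [← sum_bp m q, bT]
  apply Finset.sum_congr _ fun _ _ => rfl
  ext k; simp

lemma bT_le_one {m : ℕ} {q : ℝ} (h0 : 0 ≤ q) (h1 : q ≤ 1) (j : ℕ) : bT m q j ≤ 1 := by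
  rw [← bT_zero m q]; exact bT_anti h0 h1 (Nat.zero_le _)

lemma bT_of_lt {m j : ℕ} (q : ℝ) (h : m < j) : bT m q j = 0 := by
  simp [bT, h]

lemma bT_succ (m : ℕ) (q : ℝ) (j : ℕ) : bT m q j = bp m q j + bT m q (j + 1) := by
  by_cases h : j ≤ m
  · unfold bT
    rw [← Finset.insert_Icc_succ_left_eq_Icc h]
    rw [Finset.sum_insert (by simp)]
    rfl
  · rw [bT_of_lt _ (by omega), bT_of_lt _ (by omega), bp_eq_zero _ (by omega)]; simp

lemma bp_succ_succ (m : ℕ) (q : ℝ) (k : ℕ) :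
    bp (m + 1) q (k + 1) = q * bp m q k + (1 - q) * bp m q (k + 1) := by
  unfold bp
  rw [Nat.choose_succ_succ]
  push_cast
  by_cases h : k + 1 ≤ m
  · obtain ⟨d, rfl⟩ := Nat.exists_eq_add_of_le h
    rw [show k + 1 + d - k = d + 1 by omega, show k + 1 + d - (k + 1) = d by omega]
    simp only [Nat.succ_eq_add_one]
    ring
  · rw [Nat.choose_eq_zero_of_lt (show m < k + 1 by omega)]
    push_cast; ring

lemma bT_succ_left (m : ℕ) (q : ℝ) (j : ℕ) :
    bT (m + 1) q (j + 1) = bT m q (j + 1) + q * bp m q j := by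
  by_cases h : j ≤ m
  · induction h using Nat.decreasingInduction with
    | self =>
      rw [bT_of_lt (m := m) _ (by omega), bT_succ, bT_of_lt _ (by omega)]
      simp [bp, pow_succ]; ring
    | of_succ k hk ih =>
      rw [bT_succ, bT_succ m q (k+1), ih, bp_succ_succ]; ring
  · rw [bT_of_lt _ (by omega), bT_of_lt _ (by omega), bp_eq_zero _ (by omega)]; simp

lemma bT_mono_left {q : ℝ} (h0 : 0 ≤ q) (h1 : q ≤ 1) (j : ℕ) {m m' : ℕ} (h : m ≤ m') :
    bT m q j ≤ bT m' q j := by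
  cases j with
  | zero => simp [bT_zero]
  | succ j =>
    exact monotone_nat_of_le_succ (f := fun m => bT m q (j + 1)) (fun m => by
      simp only [bT_succ_left]
      have := mul_nonneg h0 (bp_nonneg (m := m) h0 h1 j)
      linarith) h

lemma hasDerivAt_bT (m : ℕ) (q : ℝ) (j : ℕ) (h : j ≤ m) :
    HasDerivAt (fun q => bT m q (j + 1))
      (((m : ℝ) - j) * (m.choose j : ℝ) * q ^ j * (1 - q) ^ (m - j - 1)) q := by
  induction h using Nat.decreasingInduction with
  | self =>
    simp only [bT_of_lt (m := m) (j := m + 1) _ (by omega)]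
    simpa using hasDerivAt_const q (0:ℝ)
  | of_succ k hk ih =>
    have e : (fun q => bT m q (k + 1)) = fun q => bp m q (k + 1) + bT m q (k + 1 + 1) := by
      ext q; exact bT_succ m q (k+1)
    rw [e]
    have hd : HasDerivAt (fun q : ℝ => bp m q (k + 1))
        ((m.choose (k+1) : ℝ) * ((k + 1 : ℕ) * q ^ k) * (1 - q) ^ (m - (k + 1)) +
          (m.choose (k+1) : ℝ) * q ^ (k + 1) * (((m - (k + 1) : ℕ) : ℝ) * (1 - q) ^ (m - (k + 1) - 1) * (-1))) q := by
      unfold bp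
      have h1 : HasDerivAt (fun q : ℝ => q ^ (k + 1)) (((k + 1 : ℕ) : ℝ) * q ^ k) q := by
        simpa using hasDerivAt_pow (k + 1) q
      have h2 : HasDerivAt (fun q : ℝ => (1 - q) ^ (m - (k+1)))
          (((m - (k + 1) : ℕ) : ℝ) * (1 - q) ^ (m - (k + 1) - 1) * (-1)) q := by
        exact HasDerivAt.fun_pow ((hasDerivAt_id q).const_sub 1) (m - (k+1))
      exact (h1.const_mul _).mul h2
    refine (hd.fun_add ih).congr_deriv ?_
    symm
    have hc : ((m.choose (k+1) : ℝ)) * (k + 1 : ℕ) = (m.choose k : ℝ) * ((m : ℝ) - k) := by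
      have := Nat.choose_succ_right_eq m k
      rw [← Nat.cast_sub (by omega)]
      exact_mod_cast this
    rw [Nat.cast_sub (by omega)]
    rw [show m - k - 1 = m - (k + 1) by omega]
    push_cast at hc ⊢
    linear_combination (-q ^ k * (1 - q) ^ (m - (k + 1))) * hc

lemma bT_cont (m j : ℕ) : Continuous fun q => bT m q j := by
  unfold bT bp; fun_prop

lemma bT_strictMono (m j : ℕ) (h : j < m) : StrictMonoOn (fun q => bT m q (j + 1)) (Icc 0 1) := by
  apply strictMonoOn_of_deriv_pos (convex_Icc 0 1) (bT_cont _ _).continuousOn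
  intro q hq
  rw [interior_Icc] at hq
  rw [(hasDerivAt_bT m q j h.le).deriv]
  have h1 : 0 < 1 - q := by linarith [hq.2]
  have h2 := hq.1
  have h3 : (0:ℝ) < m - j := by
    have : (j:ℝ) < m := by exact_mod_cast h
    linarith
  have h4 : (0:ℝ) < m.choose j := by exact_mod_cast Nat.choose_pos h.le
  positivity

lemma bT_mono_q (m j : ℕ) {q q' : ℝ} (h0 : 0 ≤ q) (h : q ≤ q') (h1 : q' ≤ 1) :
    bT m q j ≤ bT m q' j := by
  cases j with
  | zero => simp [bT_zero]
  | succ j =>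
    by_cases hj : j < m
    · exact (bT_strictMono m j hj).monotoneOn ⟨h0, by linarith⟩ ⟨by linarith, h1⟩ h
    · rw [bT_of_lt _ (by omega), bT_of_lt _ (by omega)]

lemma bT_at_zero (m j : ℕ) : bT m 0 (j + 1) = 0 := by
  unfold bT bp
  apply Finset.sum_eq_zero
  intro k hk
  have : k ≠ 0 := by simp at hk; omega
  simp [this]

lemma bT_at_one (m j : ℕ) (h : j ≤ m) : bT m 1 j = 1 := by
  unfold bT bp
  rw [Finset.sum_eq_single m]
  · simp
  · intro k hk hkm
    have : m - k ≠ 0 := by simp at hk; omega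
    simp [this]
  · intro h'; simp [h] at h'

lemma exists_quantile (m j : ℕ) (h : j < m) {p : ℝ} (hp0 : 0 < p) (hp1 : p < 1) :
    ∃ c, 0 < c ∧ c < 1 ∧ bT m c (j + 1) = p := by
  have := intermediate_value_Icc (zero_le_one (α := ℝ)) (bT_cont m (j+1)).continuousOn
  rw [bT_at_zero, bT_at_one m (j+1) h] at this
  obtain ⟨c, hc, hcp⟩ := this ⟨hp0.le, hp1.le⟩
  simp only at hcp
  refine ⟨c, lt_of_le_of_ne hc.1 ?_, lt_of_le_of_ne hc.2 ?_, hcp⟩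
  · rintro rfl; rw [bT_at_zero] at hcp; linarith
  · rintro rfl; rw [bT_at_one m (j+1) h] at hcp; linarith

lemma regIncBeta_eq (n j : ℕ) (h : j < n) {t : ℝ} (ht0 : 0 ≤ t) (_ht1 : t ≤ 1) :
    regIncBeta ((j : ℝ) + 1) ((n : ℝ) - j) t = bT n t (j + 1) := by
  unfold regIncBeta
  rw [← intervalIntegral.integral_of_le ht0]
  have key : ∀ s : ℝ, betaPDF ((j : ℝ) + 1) ((n : ℝ) - j) s =
      ((n : ℝ) - j) * (n.choose j : ℝ) * s ^ j * (1 - s) ^ (n - j - 1) := by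
    intro s
    unfold betaPDF
    obtain ⟨d, rfl⟩ := Nat.exists_eq_add_of_lt h
    have e1 : ((j : ℝ) + 1 - 1) = (j : ℕ) := by ring
    have e2 : (((j + d + 1 : ℕ) : ℝ) - j - 1) = (d : ℕ) := by push_cast; ring
    have e3 : (((j + d + 1 : ℕ) : ℝ) - j) = (d : ℕ) + 1 := by push_cast; ring
    have e4 : ((j : ℝ) + 1 + ((d : ℕ) + 1)) = ((j + d + 1 : ℕ) : ℝ) + 1 := by push_cast; ring
    rw [e1, e2, e3, e4, Real.rpow_natCast, Real.rpow_natCast, Real.Gamma_nat_eq_factorial,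
      Real.Gamma_nat_eq_factorial, Real.Gamma_nat_eq_factorial]
    rw [show j + d + 1 - j - 1 = d by omega]
    have := Nat.choose_mul_factorial_mul_factorial h.le
    have h2 : (((j + d + 1).choose j : ℝ)) * (j.factorial : ℝ) * ((d + 1) * d.factorial : ℝ)
      = ((j + d + 1).factorial : ℝ) := by
      rw [← this, show j + d + 1 - j = d + 1 by omega, Nat.factorial_succ]; push_cast; ring
    rw [← h2]
    have hj : (j.factorial : ℝ) ≠ 0 := by positivity
    have hd : (d.factorial : ℝ) ≠ 0 := by positivity
    have hc : (((j + d + 1).choose j : ℝ)) ≠ 0 := by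
      have := Nat.choose_pos (show j ≤ j + d + 1 by omega)
      positivity
    field_simp
  simp_rw [key]
  rw [intervalIntegral.integral_eq_sub_of_hasDerivAt (fun s _ => hasDerivAt_bT n s j h.le)
    (by apply Continuous.intervalIntegrable; fun_prop)]
  rw [bT_at_zero, sub_zero]

end BerkJonesPartA

section BerkJonesPartB
open MeasureTheory Filter Set

lemma cheb_bp {m : ℕ} {q g : ℝ} (h0 : 0 ≤ q) (h1 : q ≤ 1) (hg : 0 < g) (S : Finset ℕ)
    (hS : ∀ k, k ≤ m → k ∉ S → g ≤ |(k : ℝ) - m * q|) :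
    1 - m * q * (1 - q) / g ^ 2 ≤ ∑ k ∈ S, bp m q k := by
  have h2 : ∑ k ∈ Finset.range (m + 1), (bp m q k - ((k : ℝ) - m * q) ^ 2 / g ^ 2 * bp m q k)
      ≤ ∑ k ∈ S, bp m q k := by
    calc _ ≤ ∑ k ∈ Finset.range (m + 1), (if k ∈ S then bp m q k else 0) := by
            apply Finset.sum_le_sum
            intro k hk
            have hb := bp_nonneg (m := m) h0 h1 k
            split_ifs with hkS
            · have : 0 ≤ ((k : ℝ) - m * q) ^ 2 / g ^ 2 * bp m q k := by positivity
              linarith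
            · have := hS k (by simp at hk; omega) hkS
              have h3 : 1 ≤ ((k : ℝ) - m * q) ^ 2 / g ^ 2 := by
                rw [le_div_iff₀ (by positivity), ← sq_abs ((k:ℝ) - m * q), one_mul]
                gcongr
              nlinarith
      _ = ∑ k ∈ Finset.range (m + 1) with k ∈ S, bp m q k := by rw [Finset.sum_filter]
      _ ≤ _ := Finset.sum_le_sum_of_subset_of_nonneg (by intro k; simp) fun k _ _ => bp_nonneg h0 h1 k
  rw [Finset.sum_sub_distrib, sum_bp] at h2
  have : ∑ k ∈ Finset.range (m + 1), ((k : ℝ) - m * q) ^ 2 / g ^ 2 * bp m q k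
      = m * q * (1 - q) / g ^ 2 := by
    rw [← var_bp, Finset.sum_div]
    apply Finset.sum_congr rfl; intro k _; ring
  linarith

lemma cheb_lower {m j : ℕ} {q g : ℝ} (h0 : 0 ≤ q) (h1 : q ≤ 1) (hg : 0 < g) (h : (j : ℝ) + g ≤ m * q) :
    1 - m * q * (1 - q) / g ^ 2 ≤ bT m q j := by
  apply cheb_bp h0 h1 hg
  intro k hk hkS
  have : k < j := by by_contra hh; apply hkS; simp; omega
  have : (k : ℝ) < j := by exact_mod_cast this
  rw [abs_of_nonpos (by linarith)]; linarith

lemma exp_neg_le_quad {x : ℝ} (hx : 0 ≤ x) : Real.exp (-x) ≤ 1 - x + x ^ 2 / 2 := by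
  have h := Real.quadratic_le_exp_of_nonneg hx
  rw [Real.exp_neg]
  apply inv_le_of_inv_le₀ (by nlinarith)
  refine le_trans ?_ h
  apply inv_le_of_inv_le₀ (by positivity)
  rw [inv_le_iff_one_le_mul₀ (by positivity)]
  nlinarith [sq_nonneg (x^2)]

lemma exp_le_cubic {y : ℝ} (h0 : 0 ≤ y) (h1 : y ≤ 1) :
    Real.exp y ≤ 1 + y + y ^ 2 / 2 * (1 + y) := by
  have := Real.exp_bound' h0 h1 (n := 3) (by norm_num)
  simp [Finset.sum_range_succ, Nat.factorial] at this
  nlinarith [pow_nonneg h0 3]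

lemma bern_mgf {q l : ℝ} (h0 : 0 ≤ q) (h1 : q ≤ 1) (hl0 : 0 ≤ l) (hl1 : l ≤ 1) :
    1 - q + q * Real.exp l ≤ Real.exp (l * q + q * (1 - q) * l ^ 2 * (1 + l) / 2) := by
  have a1 := exp_neg_le_quad (x := l * q) (by positivity)
  have hq : 0 ≤ 1 - q := by linarith
  have a2 := exp_le_cubic (y := l * (1 - q)) (by positivity) (by nlinarith)
  have e : 1 - q + q * Real.exp l = Real.exp (l * q) *
      ((1 - q) * Real.exp (-(l * q)) + q * Real.exp (l * (1 - q))) := by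
    rw [mul_add, mul_left_comm, ← Real.exp_add, mul_left_comm, ← Real.exp_add]
    have : l * q + l * (1 - q) = l := by ring
    simp [this]
  rw [e, Real.exp_add]
  gcongr
  calc _ ≤ (1 - q) * (1 - l * q + (l * q) ^ 2 / 2) +
        q * (1 + l * (1 - q) + (l * (1 - q)) ^ 2 / 2 * (1 + l * (1 - q))) := by gcongr
    _ ≤ q * (1 - q) * l ^ 2 * (1 + l) / 2 + 1 := by
        have : (1 - q) * (1 - l * q + (l * q) ^ 2 / 2) +
          q * (1 + l * (1 - q) + (l * (1 - q)) ^ 2 / 2 * (1 + l * (1 - q)))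
          = 1 + q * (1 - q) * l ^ 2 / 2 * (q + (1 - q) * (1 + l * (1 - q))) := by ring
        rw [this]
        have : q + (1 - q) * (1 + l * (1 - q)) ≤ 1 + l := by
          have : (1 - q) * (1 - q) ≤ 1 := by nlinarith
          nlinarith
        have h3 : 0 ≤ q * (1 - q) * l ^ 2 / 2 := by positivity
        nlinarith
    _ ≤ _ := Real.add_one_le_exp _

lemma bernstein_tail {m : ℕ} {q l : ℝ} (j : ℕ) (h0 : 0 ≤ q) (h1 : q ≤ 1) (hl0 : 0 ≤ l) (hl1 : l ≤ 1) :
    bT m q j ≤ Real.exp (-(l * (j - m * q)) + m * q * (1 - q) * l ^ 2 * (1 + l) / 2) := by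
  have hq : 0 ≤ 1 - q := by linarith
  have h2 : bT m q j * Real.exp (l * j) ≤ (1 - q + q * Real.exp l) ^ m := by
    rw [← mgf_bp, bT, Finset.sum_mul]
    calc _ ≤ ∑ k ∈ Finset.Icc j m, bp m q k * Real.exp (l * k) := by
          apply Finset.sum_le_sum
          intro k hk
          have hb := bp_nonneg (m := m) h0 h1 k
          have : (j:ℝ) ≤ k := by simp at hk; exact_mod_cast hk.1
          gcongr
      _ ≤ _ := by
          apply Finset.sum_le_sum_of_subset_of_nonneg
          · intro k; simp
          · intro k _ _
            have hb := bp_nonneg (m := m) h0 h1 k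
            positivity
  have h3 := pow_le_pow_left₀ (by positivity) (bern_mgf h0 h1 hl0 hl1) m
  rw [← Real.exp_nat_mul] at h3
  have h4 := h2.trans h3
  rw [← le_div_iff₀ (Real.exp_pos _), ← Real.exp_sub] at h4
  refine h4.trans (le_of_eq ?_)
  congr 1
  ring

lemma bp_ratio (m : ℕ) (q : ℝ) (l : ℕ) :
    bp m q (l + 1) * ((l + 1) * (1 - q)) = ((m : ℝ) - l) * q * bp m q l := by
  rcases lt_trichotomy l m with h | h | h
  · unfold bp
    have hc : ((m.choose (l+1) : ℝ)) * (l + 1) = (m.choose l : ℝ) * ((m : ℝ) - l) := by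
      have := Nat.choose_succ_right_eq m l
      rw [← Nat.cast_sub (by omega)]
      exact_mod_cast this
    obtain ⟨d, rfl⟩ := Nat.exists_eq_add_of_lt h
    rw [show l + d + 1 - l = d + 1 by omega, show l + d + 1 - (l + 1) = d by omega]
    linear_combination (q ^ (l+1) * (1 - q) ^ (d+1)) * hc
  · subst h; rw [bp_eq_zero _ (Nat.lt_succ_self l)]; simp
  · rw [bp_eq_zero _ h, bp_eq_zero _ (by omega)]; simp

lemma hazard {m j h : ℕ} {q X : ℝ} (h0 : 0 ≤ q) (h1 : q < 1) (hj : 1 ≤ j)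
    (hX0 : 0 ≤ X) (hX1 : X ≤ 1) (hhX : h * X ≤ 1 / 2)
    (hc : (j : ℝ) + h - m * q ≤ X * (j * (1 - q))) :
    (h : ℝ) / 2 * bp m q (j - 1) ≤ bT m q j := by
  obtain ⟨j, rfl⟩ := Nat.exists_eq_add_of_le' hj
  simp only [Nat.add_sub_cancel]
  have hq : 0 < 1 - q := by linarith
  have step : ∀ t : ℕ, t < h → (1 - X) * bp m q (j + t) ≤ bp m q (j + t + 1) := by
    intro t ht
    have hb := bp_nonneg (m := m) h0 h1.le (j + t)
    have hr := bp_ratio m q (j + t)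
    have hth : (t : ℝ) + 1 ≤ h := by exact_mod_cast ht
    have hpos : 0 < ((j + t : ℕ) : ℝ) + 1 := by positivity
    have h3 : (1 - X) * ((((j + t : ℕ) : ℝ) + 1) * (1 - q)) ≤ ((m : ℝ) - (j + t : ℕ)) * q := by
      push_cast at hc ⊢
      have : X * (t * (1 - q)) ≥ 0 := by positivity
      nlinarith
    have h4 := mul_le_mul_of_nonneg_right h3 hb
    have hp2 : 0 < (((j + t : ℕ) : ℝ) + 1) * (1 - q) := by positivity
    rw [← hr] at h4
    by_contra hcon
    push Not at hcon
    nlinarith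
  have pw : ∀ t : ℕ, t ≤ h → (1 - X) ^ t * bp m q j ≤ bp m q (j + t) := by
    intro t
    induction t with
    | zero => simp
    | succ t ih =>
      intro ht
      have h5 := ih (by omega)
      have h6 := step t (by omega)
      calc _ = (1 - X) * ((1 - X) ^ t * bp m q j) := by ring
        _ ≤ (1 - X) * bp m q (j + t) := by
          apply mul_le_mul_of_nonneg_left h5; linarith
        _ ≤ _ := h6
  have hb := bp_nonneg (m := m) h0 h1.le j
  have half : ∀ t : ℕ, t < h → 1 / 2 * bp m q j ≤ bp m q (j + 1 + t) := by
    intro t ht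
    have h5 := pw (t + 1) (by omega)
    have h6 : 1 - h * X ≤ (1 - X) ^ (t + 1) := by
      have := one_add_mul_le_pow (a := -X) (by linarith) (t + 1)
      have hth : (t : ℝ) + 1 ≤ h := by exact_mod_cast ht
      push_cast at this
      rw [← sub_eq_add_neg] at this
      nlinarith
    rw [show j + 1 + t = j + (t + 1) by ring]
    nlinarith
  have hsum : ∑ k ∈ Finset.Ico (j + 1) (j + 1 + h), bp m q k ≤ bT m q (j + 1) := by
    calc _ = ∑ k ∈ (Finset.Ico (j + 1) (j + 1 + h)).filter (· ≤ m), bp m q k := by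
          rw [Finset.sum_filter_of_ne]
          intro k _ hk
          by_contra hh
          exact hk (bp_eq_zero _ (by omega))
      _ ≤ _ := by
          apply Finset.sum_le_sum_of_subset_of_nonneg
          · intro k; simp; omega
          · intro k _ _; exact bp_nonneg h0 h1.le k
  refine le_trans ?_ hsum
  rw [Finset.sum_Ico_eq_sum_range]
  calc (h : ℝ) / 2 * bp m q j = ∑ t ∈ Finset.range h, 1 / 2 * bp m q j := by simp; ring
    _ ≤ _ := by
      rw [Nat.add_sub_cancel_left]
      apply Finset.sum_le_sum
      intro t ht
      exact half t (by simpa using ht)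

lemma far_ratio {m0 m j h : ℕ} {q X : ℝ} (h0 : 0 ≤ q) (h1 : q < 1) (hj : 1 ≤ j) (hh : 1 ≤ h)
    (hX0 : 0 ≤ X) (hX1 : X ≤ 1) (hhX : h * X ≤ 1 / 2) (hm : m0 ≤ m)
    (hc : (j : ℝ) + h - m0 * q ≤ X * (j * (1 - q))) :
    bT m q j ≤ Real.exp (2 * q / h * (m - m0)) * bT m0 q j := by
  have hhp : (0:ℝ) < h := by exact_mod_cast hh
  induction m, hm using Nat.le_induction with
  | base => simp
  | succ k hk ih =>
    have hkk : (m0 : ℝ) ≤ k := by exact_mod_cast hk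
    have hz := hazard (m := k) (j := j) (h := h) (q := q) (X := X) h0 h1 hj hX0 hX1 hhX
      (by have := mul_le_mul_of_nonneg_right hkk h0; linarith)
    have hs : bT (k + 1) q j = bT k q j + q * bp k q (j - 1) := by
      obtain ⟨j, rfl⟩ := Nat.exists_eq_add_of_le' hj
      exact bT_succ_left k q j
    have hT := bT_nonneg (m := k) h0 h1.le j
    have h5 : bT (k + 1) q j ≤ (1 + 2 * q / h) * bT k q j := by
      rw [hs]
      have : q * bp k q (j - 1) ≤ 2 * q / h * bT k q j := by
        calc q * bp k q (j - 1) = 2 * q / h * (h / 2 * bp k q (j - 1)) := by field_simp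
          _ ≤ _ := by gcongr
      linarith
    calc _ ≤ (1 + 2 * q / h) * bT k q j := h5
      _ ≤ Real.exp (2 * q / h) * (Real.exp (2 * q / h * (k - m0)) * bT m0 q j) := by
        gcongr
        rw [add_comm]; exact Real.add_one_le_exp _
      _ = _ := by
        rw [← mul_assoc, ← Real.exp_add]; congr 2; push_cast; ring

lemma pois_aux (r : ℕ) (hr : 1 ≤ r) (k : ℕ) :
    (r : ℝ) ^ (r + 1) * Real.exp (-r) / r.factorial ≤
      ((r + k : ℕ) : ℝ) ^ (r + k + 1) * Real.exp (-(r + k : ℕ)) / (r + k).factorial := by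
  induction k with
  | zero => simp
  | succ k ih =>
    refine ih.trans ?_
    set s := r + k with hs
    have hs1 : 1 ≤ s := by omega
    have hsp : (0:ℝ) < s := by exact_mod_cast hs1
    rw [show r + (k + 1) = s + 1 by omega, Nat.factorial_succ]
    rw [div_le_div_iff₀ (by positivity) (by positivity)]
    have hl : Real.exp 1 ≤ (((s:ℝ) + 1) / s) ^ (s + 1) := by
      rw [← Real.log_le_log_iff (Real.exp_pos _) (by positivity), Real.log_exp, Real.log_pow]
      have := Real.one_sub_inv_le_log_of_pos (x := ((s:ℝ)+1)/s) (by positivity)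
      have h2 : 1 - (((s:ℝ)+1)/s)⁻¹ = 1 / (s + 1) := by field_simp; ring
      rw [h2] at this
      push_cast
      calc (1:ℝ) = (s + 1) * (1 / (s + 1)) := by field_simp
        _ ≤ _ := by gcongr
    rw [div_pow, le_div_iff₀ (by positivity)] at hl
    have he : Real.exp (-(s:ℝ)) = Real.exp 1 * Real.exp (-((s + 1 : ℕ) : ℝ)) := by
      rw [← Real.exp_add]; push_cast; ring_nf
    rw [he]
    push_cast
    calc _ = (Real.exp 1 * (s:ℝ) ^ (s + 1)) * (Real.exp (-((s:ℝ) + 1)) * ((s + 1) * s.factorial)) := by ring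
      _ ≤ ((s:ℝ) + 1) ^ (s + 1) * (Real.exp (-((s:ℝ) + 1)) * ((s + 1) * s.factorial)) := by gcongr
      _ = _ := by ring

lemma bp_le_poisson {i k : ℕ} {q : ℝ} (hk : k < i) (h0 : 0 ≤ q) (h1 : q ≤ 1) :
    bp i q k ≤ (i : ℝ) / (i - k) * (Real.exp (-(i * q)) * (i * q) ^ k / k.factorial) := by
  obtain ⟨r, hr⟩ := Nat.exists_eq_add_of_lt hk
  set R := r + 1 with hR
  have hi : i = R + k := by omega
  have hRp : (0:ℝ) < R := by positivity
  have hip : (0:ℝ) < i := by exact_mod_cast (by omega : 0 < i)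
  have hik : (i:ℝ) - k = R := by rw [hi]; push_cast; ring
  have haux := pois_aux R (by omega) k
  rw [← hi] at haux
  have hq : 0 ≤ 1 - q := by linarith
  have h2 : (1 - q) ^ R ≤ ((R:ℝ) / i) ^ R * Real.exp (k - i * q) := by
    have hx : (1 - q) * i / R ≤ Real.exp ((1 - q) * i / R - 1) := by
      have := Real.add_one_le_exp ((1 - q) * i / R - 1); linarith
    have hx2 := pow_le_pow_left₀ (by positivity) hx R
    rw [← Real.exp_nat_mul] at hx2
    have e : (R:ℝ) * ((1 - q) * i / R - 1) = k - i * q := by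
      field_simp; rw [← hik]; ring
    rw [e] at hx2
    calc (1 - q) ^ R = ((R:ℝ) / i) ^ R * ((1 - q) * i / R) ^ R := by
          rw [← mul_pow]; congr 1; field_simp
      _ ≤ _ := by gcongr
  have hch : (i.choose k : ℝ) = i.factorial / (k.factorial * R.factorial) := by
    rw [Nat.cast_choose ℝ hk.le, show i - k = R by omega]
  unfold bp
  rw [hch, hik, show i - k = R by omega]
  calc _ ≤ (i.factorial : ℝ) / (k.factorial * R.factorial) * q ^ k * (((R:ℝ) / i) ^ R * Real.exp (k - i * q)) := by
        gcongr
    _ = ((R:ℝ) ^ (R + 1) * Real.exp (-R) / R.factorial) * (Real.exp R * i.factorial / (k.factorial * R * i ^ R) * q ^ k * Real.exp (k - i * q)) := by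
        rw [Real.exp_neg, div_pow]
        field_simp
        ring
    _ ≤ ((i:ℝ) ^ (i + 1) * Real.exp (-i) / i.factorial) * (Real.exp R * i.factorial / (k.factorial * R * i ^ R) * q ^ k * Real.exp (k - i * q)) := by
        gcongr
    _ = _ := by
        have e1 : Real.exp (-(i:ℝ)) * Real.exp R * Real.exp (k - i * q) = Real.exp (-(i * q)) := by
          rw [← Real.exp_add, ← Real.exp_add]; congr 1; rw [← hik]; ring
        rw [← e1, mul_pow]
        have e2 : (i:ℝ) ^ (i + 1) = i * i ^ R * i ^ k := by
          rw [← pow_succ', ← pow_add]; congr 1; omega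
        rw [e2]
        field_simp

/-- The quantile recursion. -/
lemma quantile_step {n l : ℕ} {y y' p : ℝ} (hl1 : 1 ≤ l) (hl : l < n) (hy0 : 0 < y) (hy1 : y < 1)
    (hy'0 : 0 < y') (hy'1 : y' < 1) (h1 : bT n y l = p) (h2 : bT n y' (l + 1) = p)
    (hD : n * y ≤ l) :
    2 / (l / y + (n - l + 1) / (1 - y)) ≤ y' - y := by
  have hbpos : 0 < bp n y l := by
    unfold bp
    have : (0:ℝ) < n.choose l := by exact_mod_cast Nat.choose_pos hl.le
    have : 0 < 1 - y := by linarith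
    positivity
  have hlt : y < y' := by
    have h3 : bT n y (l + 1) < bT n y' (l + 1) := by
      have := bT_succ n y l; linarith
    exact ((bT_strictMono n l hl).lt_iff_lt ⟨hy0.le, hy1.le⟩ ⟨hy'0.le, hy'1.le⟩).1 h3
  have hln : (l:ℝ) + 1 ≤ n := by exact_mod_cast hl
  have hlp : (1:ℝ) ≤ l := by exact_mod_cast hl1
  have hy1' : 0 < 1 - y := by linarith
  set κ : ℝ := (n - l) / (1 - y) with hκ
  set σ : ℝ := l / y - (n - l - 1) / (1 - y) with hσ
  have hκp : 0 < κ := by apply div_pos <;> linarith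
  have hσp : 0 < σ := by
    have e : σ = (l - n * y + y) / (y * (1 - y)) := by rw [hσ]; field_simp; ring
    rw [e]; apply div_pos <;> [linarith; positivity]
  -- comparison function
  have hanti : AntitoneOn (fun t => bT n t (l + 1) - bp n y l * κ / σ * Real.exp (σ * (t - y))) (Icc y y') := by
    have hd : ∀ t, HasDerivAt (fun t => bT n t (l + 1) - bp n y l * κ / σ * Real.exp (σ * (t - y)))
        (((n : ℝ) - l) * (n.choose l : ℝ) * t ^ l * (1 - t) ^ (n - l - 1) -
          bp n y l * κ / σ * (Real.exp (σ * (t - y)) * (σ * 1))) t := by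
      intro t
      refine (hasDerivAt_bT n t l hl.le).fun_sub ?_
      exact ((((hasDerivAt_id t).sub_const y).const_mul σ).exp).const_mul _
    apply antitoneOn_of_deriv_nonpos (convex_Icc _ _)
    · exact fun t _ => (hd t).continuousAt.continuousWithinAt
    · exact fun t _ => (hd t).differentiableAt.differentiableWithinAt
    · intro t ht
      rw [interior_Icc] at ht
      rw [(hd t).deriv]
      have ht0 : 0 < t := by linarith [ht.1]
      have ht1 : 0 < 1 - t := by linarith [ht.2]
      have b1 : (t / y) ^ l ≤ Real.exp (l / y * (t - y)) := by
        have : t / y ≤ Real.exp ((t - y) / y) := by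
          have := Real.add_one_le_exp ((t - y) / y)
          have e : (t - y) / y + 1 = t / y := by field_simp; ring
          linarith
        calc _ ≤ (Real.exp ((t - y) / y)) ^ l := by gcongr
          _ = _ := by rw [← Real.exp_nat_mul]; congr 1; ring
      have b2 : ((1 - t) / (1 - y)) ^ (n - l - 1) ≤ Real.exp (-((n - l - 1) / (1 - y) * (t - y))) := by
        have : (1 - t) / (1 - y) ≤ Real.exp (-(t - y) / (1 - y)) := by
          have := Real.add_one_le_exp (-(t - y) / (1 - y))
          have e : -(t - y) / (1 - y) + 1 = (1 - t) / (1 - y) := by field_simp; ring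
          linarith
        calc _ ≤ (Real.exp (-(t - y) / (1 - y))) ^ (n - l - 1) := by gcongr
          _ = _ := by
            rw [← Real.exp_nat_mul]; congr 1
            rw [Nat.cast_sub (by omega), Nat.cast_sub (by omega)]; push_cast; ring
      have b3 : (t / y) ^ l * ((1 - t) / (1 - y)) ^ (n - l - 1) ≤ Real.exp (σ * (t - y)) := by
        calc _ ≤ _ := mul_le_mul b1 b2 (by positivity) (by positivity)
          _ = _ := by rw [← Real.exp_add, hσ]; congr 1; ring
      have e1 : bp n y l * κ / σ * (Real.exp (σ * (t - y)) * (σ * 1)) = bp n y l * κ * Real.exp (σ * (t - y)) := by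
        field_simp
      have e2 : ((n : ℝ) - l) * (n.choose l : ℝ) * t ^ l * (1 - t) ^ (n - l - 1) =
          bp n y l * κ * ((t / y) ^ l * ((1 - t) / (1 - y)) ^ (n - l - 1)) := by
        unfold bp
        obtain ⟨d, rfl⟩ := Nat.exists_eq_add_of_lt hl
        rw [hκ, show l + d + 1 - l - 1 = d by omega, show l + d + 1 - l = d + 1 by omega, div_pow, div_pow]
        field_simp
        ring
      rw [e1, e2]
      have : 0 ≤ bp n y l * κ := by positivity
      have := mul_le_mul_of_nonneg_left b3 this
      linarith
  have h3 := hanti (left_mem_Icc.2 hlt.le) (right_mem_Icc.2 hlt.le) hlt.le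
  simp only [sub_self, mul_zero, Real.exp_zero, mul_one] at h3
  have h4 := bT_succ n y l
  have h5 : bp n y l ≤ bp n y l * (κ / σ * (Real.exp (σ * (y' - y)) - 1)) := by
    have : bp n y l * (κ / σ * (Real.exp (σ * (y' - y)) - 1)) =
      bp n y l * κ / σ * Real.exp (σ * (y' - y)) - bp n y l * κ / σ := by ring
    linarith
  have h6 : 1 ≤ κ / σ * (Real.exp (σ * (y' - y)) - 1) := by
    by_contra hcon; push Not at hcon; nlinarith
  have h7 : 1 + σ / κ ≤ Real.exp (σ * (y' - y)) := by
    have : σ / κ * 1 ≤ σ / κ * (κ / σ * (Real.exp (σ * (y' - y)) - 1)) := by gcongr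
    have e : σ / κ * (κ / σ * (Real.exp (σ * (y' - y)) - 1)) = Real.exp (σ * (y' - y)) - 1 := by
      field_simp
    linarith
  have h8 : Real.log (1 + σ / κ) ≤ σ * (y' - y) := by
    rw [Real.log_le_iff_le_exp (by positivity)]; exact h7
  have h9 := Real.le_log_one_add_of_nonneg (x := σ / κ) (by positivity)
  have h10 : 2 * (σ / κ) / (σ / κ + 2) = σ * (2 / (σ + 2 * κ)) := by field_simp
  have h11 : σ * (2 / (σ + 2 * κ)) ≤ σ * (y' - y) := by linarith
  have h12 := le_of_mul_le_mul_left h11 hσp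
  have e : σ + 2 * κ = l / y + (n - l + 1) / (1 - y) := by rw [hσ, hκ]; ring
  rwa [e] at h12

end BerkJonesPartB

section BerkJonesPartC
open MeasureTheory Filter Set ProbabilityTheory
set_option linter.all false

/-- Number of sample points below `c`. -/
noncomputable def cnt {ι : Type*} [Fintype ι] (c : ℝ) (w : ι → ℝ) : ℕ := (Finset.univ.filter fun k => w k < c).card

lemma cnt_meas {ι : Type*} [Fintype ι] (c : ℝ) : Measurable (fun w : ι → ℝ => cnt c w) := by
  unfold cnt
  simp_rw [Finset.card_filter]
  apply Finset.measurable_sum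
  intro k _
  exact Measurable.ite (measurableSet_lt (measurable_pi_apply k) measurable_const)
    measurable_const measurable_const

lemma cnt_mono {ι : Type*} [Fintype ι] {c c' : ℝ} (h : c ≤ c') (w : ι → ℝ) : cnt c w ≤ cnt c' w := by
  apply Finset.card_le_card
  intro k hk
  simp at hk ⊢; linarith

noncomputable abbrev uU : Measure ℝ := MeasureTheory.volume.restrict (Set.Icc (0:ℝ) 1)

instance : IsProbabilityMeasure uU := ⟨by simp⟩

instance (n : ℕ) : IsProbabilityMeasure (nullMeasure n) := by
  unfold nullMeasure; infer_instance

lemma uU_Ico {a b : ℝ} (ha : 0 ≤ a) (hab : a ≤ b) (hb : b ≤ 1) : uU (Ico a b) = ENNReal.ofReal (b - a) := by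
  rw [Measure.restrict_apply measurableSet_Ico, inter_eq_left.2, Real.volume_Ico]
  intro x hx; simp at hx ⊢; constructor <;> linarith

lemma uU_Iio {b : ℝ} (hb0 : 0 ≤ b) (hb : b ≤ 1) : uU (Iio b) = ENNReal.ofReal b := by
  rw [Measure.restrict_apply measurableSet_Iio]
  have : Iio b ∩ Icc (0:ℝ) 1 = Ico 0 b := by
    ext x; simp; constructor
    · rintro ⟨h1, h2, h3⟩; exact ⟨h2, h1⟩
    · rintro ⟨h1, h2⟩; exact ⟨h2, h1, by linarith⟩
  rw [this]; simp

lemma uU_univ : uU univ = 1 := measure_univ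

/-- cell -/
def cellE {n : ℕ} (S T : Finset (Fin n)) (c c' : ℝ) (k : Fin n) : Set ℝ :=
  if k ∈ T then Iio c' else if k ∈ S then Ico c' c else univ

lemma cell_meas {n : ℕ} {S T : Finset (Fin n)} {c c' : ℝ} (hT : T ⊆ S) (h0 : 0 ≤ c') (h1 : c' ≤ c) (h2 : c ≤ 1) :
    (nullMeasure n).real (Set.pi univ (cellE S T c c')) = c' ^ T.card * (c - c') ^ (S.card - T.card) := by
  have h3 : c' ≤ 1 := h1.trans h2
  unfold nullMeasure
  rw [measureReal_def, Measure.pi_pi, ENNReal.toReal_prod]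
  have : ∀ k, (uU (cellE S T c c' k)).toReal = (if k ∈ T then c' else 1) * (if k ∈ S \ T then c - c' else 1) := by
    intro k
    unfold cellE
    by_cases hk : k ∈ T
    · simp only [hk, if_true, Finset.mem_sdiff, not_true, and_false, if_false, mul_one]
      rw [uU_Iio h0 h3, ENNReal.toReal_ofReal h0]
    · by_cases hk2 : k ∈ S
      · simp only [hk, if_false, Finset.mem_sdiff, hk2, not_false_eq_true, and_true, if_true, one_mul]
        rw [uU_Ico h0 h1 h2, ENNReal.toReal_ofReal (by linarith)]
      · simp only [hk, if_false, Finset.mem_sdiff, hk2, false_and, mul_one, uU_univ]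
        simp
  rw [Finset.prod_congr rfl (fun k _ => this k), Finset.prod_mul_distrib, Finset.prod_ite_mem, Finset.prod_ite_mem]
  simp only [Finset.univ_inter, Finset.prod_const]
  rw [← Finset.card_sdiff_of_subset hT]

lemma lawA {n : ℕ} (S : Finset (Fin n)) {c c' : ℝ} (j : ℕ) (h0 : 0 ≤ c') (h1 : c' ≤ c) (hc : 0 < c) (h2 : c ≤ 1) :
    (nullMeasure n).real {u | (∀ k ∈ S, u k < c) ∧ j ≤ (S.filter fun k => u k < c').card}
      = c ^ S.card * bT S.card (c' / c) j := by
  have hset : {u : Fin n → ℝ | (∀ k ∈ S, u k < c) ∧ j ≤ (S.filter fun k => u k < c').card}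
      = ⋃ T ∈ S.powerset.filter (fun T => j ≤ T.card), Set.pi univ (cellE S T c c') := by
    ext u
    simp only [mem_setOf_eq, mem_iUnion, Finset.mem_filter, Finset.mem_powerset, Set.mem_pi, mem_univ, true_imp_iff, exists_prop]
    constructor
    · rintro ⟨hA, hB⟩
      refine ⟨S.filter fun k => u k < c', ⟨Finset.filter_subset _ _, hB⟩, ?_⟩
      intro k
      unfold cellE
      by_cases hk : k ∈ S <;> by_cases hk2 : u k < c' <;> simp [hk, hk2]
      exact ⟨not_lt.1 hk2, hA k hk⟩
    · rintro ⟨T, ⟨hT, hj⟩, hE⟩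
      have hmem : ∀ k ∈ S, (u k < c' ↔ k ∈ T) ∧ u k < c := by
        intro k hk
        have := hE k
        unfold cellE at this
        by_cases hk2 : k ∈ T
        · simp [hk2] at this; exact ⟨by simp [hk2, this], by linarith⟩
        · simp [hk2, hk] at this; exact ⟨by simp [hk2, this], this.2⟩
      refine ⟨fun k hk => (hmem k hk).2, ?_⟩
      have : S.filter (fun k => u k < c') = T := by
        ext k; simp only [Finset.mem_filter]
        constructor
        · rintro ⟨a, b⟩; exact (hmem k a).1.1 b
        · intro hk; exact ⟨hT hk, (hmem k (hT hk)).1.2 hk⟩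
      rw [this]; exact hj
  rw [hset, measureReal_biUnion_finset]
  · rw [Finset.sum_congr rfl (fun T hT => cell_meas (by simp at hT; exact hT.1) h0 h1 h2)]
    rw [Finset.sum_filter, Finset.sum_powerset]
    unfold bT
    rw [Finset.mul_sum]
    have : ∀ t ∈ Finset.range (S.card + 1), (∑ T ∈ Finset.powersetCard t S, if j ≤ T.card then c' ^ T.card * (c - c') ^ (S.card - T.card) else 0)
      = if j ≤ t then c ^ S.card * bp S.card (c' / c) t else 0 := by
      intro t ht
      have htS : t ≤ S.card := by simp at ht; omega
      rw [Finset.sum_congr rfl (g := fun _ => if j ≤ t then c' ^ t * (c - c') ^ (S.card - t) else 0)]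
      · rw [Finset.sum_const, Finset.card_powersetCard]
        split_ifs
        · unfold bp
          rw [nsmul_eq_mul]
          have e1 : (1 - c' / c) = (c - c') / c := by field_simp
          have e2 : c ^ S.card = c ^ t * c ^ (S.card - t) := by rw [← pow_add]; congr 1; omega
          rw [e1, div_pow, div_pow, e2]; field_simp
        · simp
      · intro T hT
        rw [Finset.mem_powersetCard] at hT
        rw [hT.2]
    rw [Finset.sum_congr rfl this, ← Finset.sum_filter]
    apply Finset.sum_congr _ (fun _ _ => rfl)
    ext t; simp; omega
  · intro T hT T' hT' hne
    simp at hT hT'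
    rw [Function.onFun, Set.disjoint_left]
    intro u hu hu'
    apply hne
    have key : ∀ T : Finset (Fin n), T ⊆ S → u ∈ Set.pi univ (cellE S T c c') → T = S.filter (fun k => u k < c') := by
      intro T hT hu
      ext k
      simp only [Finset.mem_filter]
      have := hu k (mem_univ k)
      unfold cellE at this
      by_cases hk2 : k ∈ T
      · simp [hk2] at this; simp [hk2, this, hT hk2]
      · by_cases hk : k ∈ S
        · simp [hk2, hk] at this; simp [hk2, this]
        · simp [hk2, hk]
    rw [key T hT.1 hu, ← key T' hT'.1 hu']
  · intro T _
    apply MeasurableSet.univ_pi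
    intro k
    unfold cellE
    split_ifs <;> measurability

end BerkJonesPartC

section BerkJonesPartD
open MeasureTheory Filter Set ProbabilityTheory
set_option linter.all false

lemma cnt_restrict {n : ℕ} (S : Finset (Fin n)) (c : ℝ) (u : Fin n → ℝ) :
    cnt c (fun k : S => u k) = (S.filter fun k => u k < c).card := by
  unfold cnt
  rw [Finset.card_filter, Finset.card_filter]
  exact Finset.sum_coe_sort S (fun k => if u k < c then 1 else 0)

lemma indep_split {n : ℕ} (S T : Finset (Fin n)) (hST : Disjoint S T) {A : Set (S → ℝ)} {C : Set (T → ℝ)}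
    (hA : MeasurableSet A) (hC : MeasurableSet C) :
    (nullMeasure n).real ({u | (fun k : S => u k) ∈ A} ∩ {u | (fun k : T => u k) ∈ C})
     = (nullMeasure n).real {u | (fun k : S => u k) ∈ A} * (nullMeasure n).real {u | (fun k : T => u k) ∈ C} := by
  have h := iIndepFun_pi (ι := Fin n) (μ := fun _ => uU) (X := fun _ => (id : ℝ → ℝ)) (fun _ => aemeasurable_id)
  have h2 := h.indepFun_finset S T hST (fun i => by fun_prop)
  have h3 := h2.measure_inter_preimage_eq_mul A C hA hC
  have h4 := congrArg ENNReal.toReal h3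
  rw [ENNReal.toReal_mul] at h4
  exact h4

/-- the pattern event -/
def evS {n : ℕ} (c : ℕ → ℝ) (L : Finset ℕ) (t t' : ℝ) (j : ℕ) (S : Finset (Fin n)) : Set (Fin n → ℝ) :=
  {u | (Finset.univ.filter fun k => u k < t) = S ∧ (∀ l ∈ L, cnt (c l) u < l) ∧ j ≤ cnt t' u}

lemma evS_eq {n : ℕ} (c : ℕ → ℝ) (L : Finset ℕ) {t t' : ℝ} (htt : t' ≤ t) (hL : ∀ l ∈ L, t ≤ c l) (j : ℕ) (S : Finset (Fin n)) :
    evS c L t t' j S = {u | (fun k : S => u k) ∈ {w : S → ℝ | (∀ k, w k < t) ∧ j ≤ cnt t' w}} ∩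
      {u | (fun k : (Sᶜ : Finset (Fin n)) => u k) ∈ {w : (Sᶜ : Finset (Fin n)) → ℝ | (∀ k, t ≤ w k) ∧ ∀ l ∈ L, S.card + cnt (c l) w < l}} := by
  ext u
  have hsum : ∀ x : ℝ, cnt x u = (S.filter fun k => u k < x).card + (Sᶜ.filter fun k => u k < x).card := by
    intro x
    unfold cnt
    rw [Finset.card_filter, Finset.card_filter, Finset.card_filter, Finset.sum_add_sum_compl]
  simp only [evS, mem_setOf_eq, mem_inter_iff, cnt_restrict]
  have base : (Finset.univ.filter (fun k => u k < t)) = S ↔ (∀ k : S, u k < t) ∧ (∀ k : (Sᶜ : Finset (Fin n)), t ≤ u k) := by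
    constructor
    · rintro rfl
      constructor
      · rintro ⟨k, hk⟩; simpa using hk
      · rintro ⟨k, hk⟩; simpa using hk
    · rintro ⟨h1, h2⟩
      ext k
      simp only [Finset.mem_filter, Finset.mem_univ, true_and]
      constructor
      · intro h
        by_contra hk
        have := h2 ⟨k, by simpa using hk⟩
        simp at this; linarith
      · intro hk; exact h1 ⟨k, hk⟩
  rw [base]
  have key : ((∀ k : S, u k < t) ∧ (∀ k : (Sᶜ : Finset (Fin n)), t ≤ u k)) →
      ((∀ l ∈ L, cnt (c l) u = S.card + (Sᶜ.filter fun k => u k < c l).card) ∧ cnt t' u = (S.filter fun k => u k < t').card) := by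
    rintro ⟨h1, h2⟩
    constructor
    · intro l hl
      rw [hsum]
      congr 2
      apply Finset.filter_true_of_mem
      intro k hk
      exact lt_of_lt_of_le (h1 ⟨k, hk⟩) (hL l hl)
    · rw [hsum, Finset.filter_false_of_mem (s := Sᶜ)]
      · simp
      · intro k hk
        have := h2 ⟨k, hk⟩
        simp only at this
        linarith
  constructor
  · rintro ⟨hb, h3, h4⟩
    obtain ⟨k1, k2⟩ := key hb
    refine ⟨⟨hb.1, by omega⟩, hb.2, fun l hl => ?_⟩
    rw [← k1 l hl]; exact h3 l hl
  · rintro ⟨⟨h1, h2⟩, h3, h4⟩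
    obtain ⟨k1, k2⟩ := key ⟨h1, h3⟩
    refine ⟨⟨h1, h3⟩, fun l hl => ?_, by omega⟩
    rw [k1 l hl]; exact h4 l hl

lemma evS_law {n : ℕ} (c : ℕ → ℝ) (L : Finset ℕ) {t t' : ℝ} (h0 : 0 ≤ t') (htt : t' ≤ t) (ht : 0 < t) (ht1 : t ≤ 1)
    (hL : ∀ l ∈ L, t ≤ c l) (j : ℕ) (S : Finset (Fin n)) :
    (nullMeasure n).real (evS c L t t' j S) = (nullMeasure n).real (evS c L t t' 0 S) * bT S.card (t' / t) j := by
  have mA : ∀ j, MeasurableSet {w : S → ℝ | (∀ k, w k < t) ∧ j ≤ cnt t' w} := by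
    intro j
    apply MeasurableSet.inter
    · show MeasurableSet {w : S → ℝ | ∀ k, w k < t}
      simp only [Set.setOf_forall]
      exact MeasurableSet.iInter (fun k => measurableSet_lt (measurable_pi_apply k) measurable_const)
    · exact measurableSet_le measurable_const (cnt_meas _)
  have mC : MeasurableSet {w : (Sᶜ : Finset (Fin n)) → ℝ | (∀ k, t ≤ w k) ∧ ∀ l ∈ L, S.card + cnt (c l) w < l} := by
    apply MeasurableSet.inter
    · show MeasurableSet {w : (Sᶜ : Finset (Fin n)) → ℝ | ∀ k, t ≤ w k}
      simp only [Set.setOf_forall]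
      exact MeasurableSet.iInter (fun k => measurableSet_le measurable_const (measurable_pi_apply k))
    · show MeasurableSet {w : (Sᶜ : Finset (Fin n)) → ℝ | ∀ l ∈ L, S.card + cnt (c l) w < l}
      simp only [Set.setOf_forall]
      exact MeasurableSet.iInter (fun l => MeasurableSet.iInter fun _ => measurableSet_lt (measurable_const.add (cnt_meas _)) measurable_const)
  have lA : ∀ j, (nullMeasure n).real {u | (fun k : S => u k) ∈ {w : S → ℝ | (∀ k, w k < t) ∧ j ≤ cnt t' w}} = t ^ S.card * bT S.card (t' / t) j := by
    intro j
    rw [← lawA S j h0 htt ht ht1]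
    congr 1
    ext u
    simp only [mem_setOf_eq, cnt_restrict]
    simp
  rw [evS_eq c L htt hL, evS_eq c L htt hL, indep_split S Sᶜ disjoint_compl_right (mA j) mC,
    indep_split S Sᶜ disjoint_compl_right (mA 0) mC, lA, lA, bT_zero]
  ring

lemma evS_measurable {n : ℕ} (c : ℕ → ℝ) (L : Finset ℕ) (t t' : ℝ) (j : ℕ) (S : Finset (Fin n)) :
    MeasurableSet (evS c L t t' j S) := by
  unfold evS
  apply MeasurableSet.inter
  · have : {u : Fin n → ℝ | Finset.univ.filter (fun k => u k < t) = S} = ⋂ k, {u | u k < t ↔ k ∈ S} := by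
      ext u; simp [Finset.ext_iff]
    show MeasurableSet {u : Fin n → ℝ | Finset.univ.filter (fun k => u k < t) = S}
    rw [this]
    apply MeasurableSet.iInter
    intro k
    by_cases hk : k ∈ S
    · simp only [hk, iff_true]; exact measurableSet_lt (measurable_pi_apply k) measurable_const
    · simp only [hk, iff_false, not_lt]; exact measurableSet_le measurable_const (measurable_pi_apply k)
  · apply MeasurableSet.inter
    · show MeasurableSet {u : Fin n → ℝ | ∀ l ∈ L, cnt (c l) u < l}
      simp only [Set.setOf_forall]
      exact MeasurableSet.iInter (fun l => MeasurableSet.iInter fun _ => measurableSet_lt (cnt_meas _) measurable_const)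
    · exact measurableSet_le measurable_const (cnt_meas _)

/-- Markov property. -/
lemma markov {n : ℕ} (c : ℕ → ℝ) (L : Finset ℕ) {t t' : ℝ} (h0 : 0 ≤ t') (htt : t' ≤ t) (ht : 0 < t) (ht1 : t ≤ 1)
    (hL : ∀ l ∈ L, t ≤ c l) (k j : ℕ) :
    (nullMeasure n).real {u | cnt t u = k ∧ (∀ l ∈ L, cnt (c l) u < l) ∧ j ≤ cnt t' u}
     = (nullMeasure n).real {u | cnt t u = k ∧ (∀ l ∈ L, cnt (c l) u < l)} * bT k (t' / t) j := by
  have hdec : ∀ j, (nullMeasure n).real {u | cnt t u = k ∧ (∀ l ∈ L, cnt (c l) u < l) ∧ j ≤ cnt t' u}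
      = ∑ S ∈ Finset.powersetCard k Finset.univ, (nullMeasure n).real (evS c L t t' j S) := by
    intro j
    rw [← measureReal_biUnion_finset]
    · congr 1
      ext u
      simp only [mem_setOf_eq, mem_iUnion, evS, Finset.mem_powersetCard, exists_prop]
      constructor
      · rintro ⟨h1, h2⟩
        exact ⟨_, ⟨Finset.subset_univ _, h1⟩, rfl, h2⟩
      · rintro ⟨S, ⟨_, h1⟩, h2, h3⟩
        exact ⟨by rw [← h1, ← h2]; rfl, h3⟩
    · intro S _ S' _ hne
      rw [Function.onFun, Set.disjoint_left]
      rintro u ⟨h, _⟩ ⟨h', _⟩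
      exact hne (h.symm.trans h')
    · intro S _; exact evS_measurable ..
  have h00 : {u : Fin n → ℝ | cnt t u = k ∧ (∀ l ∈ L, cnt (c l) u < l)} = {u | cnt t u = k ∧ (∀ l ∈ L, cnt (c l) u < l) ∧ 0 ≤ cnt t' u} := by
    ext u; simp
  rw [h00, hdec, hdec, Finset.sum_mul]
  apply Finset.sum_congr rfl
  intro S hS
  rw [evS_law c L h0 htt ht ht1 hL, (Finset.mem_powersetCard.1 hS).2]

lemma cnt_le {n : ℕ} (c : ℝ) (u : Fin n → ℝ) : cnt c u ≤ n := by
  have := Finset.card_filter_le (Finset.univ : Finset (Fin n)) (fun k => u k < c)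
  simpa [cnt] using this

lemma cnt_tail {n : ℕ} {c : ℝ} (h0 : 0 ≤ c) (h1 : c ≤ 1) (j : ℕ) :
    (nullMeasure n).real {u | j ≤ cnt c u} = bT n c j := by
  have := lawA (n := n) Finset.univ (c := 1) (c' := c) j h0 h1 one_pos le_rfl
  simp only [Finset.card_univ, Fintype.card_fin, one_pow, one_mul, div_one] at this
  rw [← this]
  apply measureReal_congr
  have h : ∀ᵐ u ∂(nullMeasure n), ∀ k ∈ (Finset.univ : Finset (Fin n)), u k < 1 := by
    rw [ae_iff, ← measureReal_eq_zero_iff]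
    have h2 := lawA (n := n) Finset.univ (c := 1) (c' := 1) 0 zero_le_one le_rfl one_pos le_rfl
    simp only [Finset.card_univ, Fintype.card_fin, one_pow, one_mul, div_one, bT_zero, zero_le, and_true] at h2
    have h3 := probReal_compl_eq_one_sub (μ := nullMeasure n) (s := {u | ∀ k ∈ (Finset.univ : Finset (Fin n)), u k < 1}) ?_
    · rw [h2, sub_self] at h3; exact h3
    · simp only [Set.setOf_forall]
      exact MeasurableSet.iInter (fun l => MeasurableSet.iInter fun _ => measurableSet_lt (measurable_pi_apply l) measurable_const)
  filter_upwards [h] with u hu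
  apply propext
  constructor
  · intro h; exact ⟨hu, h⟩
  · intro h; exact h.2

lemma cnt_pmf {n : ℕ} {c : ℝ} (h0 : 0 ≤ c) (h1 : c ≤ 1) (k : ℕ) :
    (nullMeasure n).real {u | cnt c u = k} = bp n c k := by
  have e : {u : Fin n → ℝ | cnt c u = k} = {u | k ≤ cnt c u} \ {u | k + 1 ≤ cnt c u} := by
    ext u; simp; omega
  rw [e, measureReal_diff, cnt_tail h0 h1, cnt_tail h0 h1, bT_succ]
  · ring
  · intro u hu; simp at hu ⊢; omega
  · exact measurableSet_le measurable_const (cnt_meas _)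

end BerkJonesPartD

section BerkJonesPartE
open MeasureTheory Filter Set ProbabilityTheory
set_option linter.all false

/-- `c` is the family of `p`-quantiles. -/
structure QC (n : ℕ) (p : ℝ) (c : ℕ → ℝ) : Prop where
  pos : ∀ j, 1 ≤ j → j ≤ n → 0 < c j
  lt1 : ∀ j, 1 ≤ j → j ≤ n → c j < 1
  eq : ∀ j, 1 ≤ j → j ≤ n → bT n (c j) j = p

lemma exists_QC (n : ℕ) {p : ℝ} (hp0 : 0 < p) (hp1 : p < 1) : ∃ c, QC n p c := by
  have : ∀ j, ∃ x, (1 ≤ j → j ≤ n → 0 < x ∧ x < 1 ∧ bT n x j = p) := by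
    intro j
    by_cases h : 1 ≤ j ∧ j ≤ n
    · obtain ⟨x, h1, h2, h3⟩ := exists_quantile n (j-1) (by omega) hp0 hp1
      refine ⟨x, fun _ _ => ⟨h1, h2, ?_⟩⟩
      rw [← h3]; congr 1; omega
    · exact ⟨0, fun h1 h2 => absurd ⟨h1, h2⟩ h⟩
  choose c hc using this
  exact ⟨c, fun j h1 h2 => (hc j h1 h2).1, fun j h1 h2 => (hc j h1 h2).2.1, fun j h1 h2 => (hc j h1 h2).2.2⟩

lemma bp_pos {m k : ℕ} {q : ℝ} (h0 : 0 < q) (h1 : q < 1) (hk : k ≤ m) : 0 < bp m q k := by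
  unfold bp
  have : 0 < 1 - q := by linarith
  have : (0:ℝ) < m.choose k := by exact_mod_cast Nat.choose_pos hk
  positivity

namespace QC
variable {n : ℕ} {p : ℝ} {c : ℕ → ℝ}

lemma smono (h : QC n p c) {j j' : ℕ} (hj : 1 ≤ j) (hjj : j < j') (hj' : j' ≤ n) : c j < c j' := by
  by_contra hcon
  push Not at hcon
  have h1 := bT_mono_q n j' (h.pos j' (by omega) hj').le hcon (h.lt1 j hj (by omega)).le
  have h2 := bT_anti (m := n) (h.pos j hj (by omega)).le (h.lt1 j hj (by omega)).le (show j + 1 ≤ j' by omega)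
  have h3 := bT_succ n (c j) j
  have h4 := bp_pos (h.pos j hj (by omega)) (h.lt1 j hj (by omega)) (show j ≤ n by omega)
  rw [h.eq j hj (by omega)] at h3
  rw [h.eq j' (by omega) hj'] at h1
  linarith

lemma mono (h : QC n p c) {j j' : ℕ} (hj : 1 ≤ j) (hjj : j ≤ j') (hj' : j' ≤ n) : c j ≤ c j' := by
  rcases hjj.eq_or_lt with rfl | hlt
  · exact le_rfl
  · exact (h.smono hj hlt hj').le

lemma reduction (h : QC n p c) (hp : 0 < p) (u : Fin n → ℝ) (hM : p ≤ MnPlus u) {j : ℕ} (hj : 1 ≤ j) (hjn : j ≤ n) :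
    cnt (c j) u < j := by
  by_contra hcon
  push Not at hcon
  set i : Fin n := ⟨j - 1, by omega⟩ with hi
  have hlt : orderStat u i < c j := by
    by_contra hge
    push Not at hge
    have hmono := Tuple.monotone_sort u
    have : (Finset.univ.filter fun k => u k < c j) ⊆ (Finset.Iio i).map (Tuple.sort u).toEmbedding := by
      intro k hk
      simp only [Finset.mem_filter, Finset.mem_univ, true_and] at hk
      rw [Finset.mem_map_equiv, Finset.mem_Iio]
      by_contra hle
      push Not at hle
      have h2 := hmono hle
      simp only [Function.comp, Equiv.apply_symm_apply] at h2
      unfold orderStat at hge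
      linarith
    have h3 := Finset.card_le_card this
    rw [Finset.card_map, Fin.card_Iio] at h3
    have : cnt (c j) u ≤ j - 1 := h3
    omega
  have h1 : pOrd u i < p := by
    unfold pOrd
    rcases le_or_gt (orderStat u i) 0 with h0 | h0
    · unfold regIncBeta
      rw [Set.Ioc_eq_empty (by linarith)]
      simpa using hp
    · rw [regIncBeta_eq n i i.2 h0.le (hlt.le.trans (h.lt1 j hj hjn).le), ← h.eq j hj hjn]
      have e : (i : ℕ) + 1 = j := by simp [hi]; omega
      have := bT_strictMono n i i.2 ⟨h0.le, hlt.le.trans (h.lt1 j hj hjn).le⟩ ⟨(h.pos j hj hjn).le, (h.lt1 j hj hjn).le⟩ hlt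
      simp only [e] at this ⊢
      exact this
  have h2 : MnPlus u ≤ pOrd u i := ciInf_le (Set.finite_range _).bddBelow i
  linarith

end QC

/-- last-crossing probabilities -/
noncomputable def fP (n : ℕ) (c : ℕ → ℝ) (b i : ℕ) : ℝ :=
  (nullMeasure n).real {u | cnt (c i) u = i ∧ ∀ l ∈ Finset.Ioc i b, cnt (c l) u < l}

lemma fP_nonneg (n : ℕ) (c : ℕ → ℝ) (b i : ℕ) : 0 ≤ fP n c b i := measureReal_nonneg

lemma mH {n : ℕ} (c : ℕ → ℝ) (L : Finset ℕ) : MeasurableSet {u : Fin n → ℝ | ∀ l ∈ L, cnt (c l) u < l} := by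
  simp only [Set.setOf_forall]
  exact MeasurableSet.iInter (fun l => MeasurableSet.iInter fun _ => measurableSet_lt (cnt_meas _) measurable_const)

lemma mEq {n : ℕ} (t : ℝ) (k : ℕ) : MeasurableSet {u : Fin n → ℝ | cnt t u = k} :=
  measurableSet_eq_fun (cnt_meas _) measurable_const

lemma mGe {n : ℕ} (t : ℝ) (k : ℕ) : MeasurableSet {u : Fin n → ℝ | k ≤ cnt t u} :=
  measurableSet_le measurable_const (cnt_meas _)

lemma fP_disj {n : ℕ} (c : ℕ → ℝ) (b : ℕ) {i i' : ℕ} (hi : i < b) (hi' : i' < b) (hne : i ≠ i') :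
    Disjoint {u : Fin n → ℝ | cnt (c i) u = i ∧ ∀ l ∈ Finset.Ioc i b, cnt (c l) u < l}
     {u : Fin n → ℝ | cnt (c i') u = i' ∧ ∀ l ∈ Finset.Ioc i' b, cnt (c l) u < l} := by
  rw [Set.disjoint_left]
  rintro u ⟨h1, h2⟩ ⟨h3, h4⟩
  rcases lt_or_gt_of_ne hne with h | h
  · have := h2 i' (by simp; omega); omega
  · have := h4 i (by simp; omega); omega

lemma none_bound {n : ℕ} (c : ℕ → ℝ) (a b : ℕ) :
    (nullMeasure n).real {u | ∀ l ∈ Finset.Icc a b, cnt (c l) u < l} + ∑ i ∈ Finset.Ico a b, fP n c b i ≤ 1 := by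
  unfold fP
  rw [← measureReal_biUnion_finset, ← measureReal_union (h₁ := measure_ne_top _ _) (h₂ := measure_ne_top _ _)]
  · exact measureReal_le_one
  · rw [Set.disjoint_left]
    intro u hu hu'
    simp only [mem_iUnion] at hu'
    obtain ⟨i, hi, h1, h2⟩ := hu'
    simp at hi
    have := hu i (by simp; omega)
    omega
  · apply Finset.measurableSet_biUnion
    intro i _
    exact (mEq _ _).inter (mH _ _)
  · intro i hi i' hi' hne
    simp at hi hi'
    exact fP_disj c b (by omega) (by omega) hne
  · intro i _
    exact (mEq _ _).inter (mH _ _)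

namespace QC
variable {n : ℕ} {p : ℝ} {c : ℕ → ℝ}

lemma renewal (h : QC n p c) {j b : ℕ} (hj : 1 ≤ j) (hjb : j < b) (hb : b ≤ n) :
    p = ∑ i ∈ Finset.Ico j b, fP n c b i * bT i (c j / c i) j
      + (nullMeasure n).real {u | b ≤ cnt (c b) u ∧ j ≤ cnt (c j) u} := by
  have hterm : ∀ i ∈ Finset.Ico j b, fP n c b i * bT i (c j / c i) j
      = (nullMeasure n).real {u | cnt (c i) u = i ∧ (∀ l ∈ Finset.Ioc i b, cnt (c l) u < l) ∧ j ≤ cnt (c j) u} := by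
    intro i hi
    simp at hi
    unfold fP
    rw [markov c (Finset.Ioc i b) (h.pos j hj (by omega)).le (h.mono hj hi.1 (by omega)) (h.pos i (by omega) (by omega))
      (h.lt1 i (by omega) (by omega)).le (fun l hl => by simp at hl; exact h.mono (by omega) (by omega) (by omega))]
  rw [Finset.sum_congr rfl hterm, ← measureReal_biUnion_finset, ← measureReal_union (h₁ := measure_ne_top _ _) (h₂ := measure_ne_top _ _), ← h.eq j hj (by omega),
    ← cnt_tail (h.pos j hj (by omega)).le (h.lt1 j hj (by omega)).le]
  · congr 1
    ext u
    simp only [mem_setOf_eq, mem_union, mem_iUnion, exists_prop]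
    constructor
    · intro hu
      have hne : ((Finset.Icc j b).filter fun l => l ≤ cnt (c l) u).Nonempty :=
        ⟨j, by simp; exact ⟨hjb.le, hu⟩⟩
      obtain ⟨i, hi, hmax⟩ := Finset.exists_max_image _ id hne
      simp only [Finset.mem_filter, Finset.mem_Icc, id] at hi hmax
      have hH : ∀ l ∈ Finset.Ioc i b, cnt (c l) u < l := by
        intro l hl
        simp at hl
        by_contra hcon
        push Not at hcon
        have := hmax l ⟨⟨by omega, hl.2⟩, hcon⟩
        omega
      rcases hi.1.2.eq_or_lt with e | hlt
      · right; subst e; exact ⟨hi.2, hu⟩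
      · left
        refine ⟨i, by simp; omega, ?_, hH, hu⟩
        have h1 := hH (i+1) (by simp; omega)
        have h2 := cnt_mono (h.mono (show 1 ≤ i by omega) (Nat.le_succ i) (by omega)) u
        simp only [Nat.succ_eq_add_one] at h2
        omega
    · rintro (⟨i, hi, h1, h2, h3⟩ | h1)
      · exact h3
      · exact h1.2
  · rw [Set.disjoint_left]
    intro u hu hu'
    simp only [mem_iUnion] at hu
    obtain ⟨i, hi, h1, h2, _⟩ := hu
    simp at hi
    have := h2 b (by simp; omega)
    have := hu'.1
    omega
  · exact (mGe _ _).inter (mGe _ _)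
  · intro i hi i' hi' hne
    simp at hi hi'
    refine (fP_disj (n := n) c b (i := i) (i' := i') (by omega) (by omega) hne).mono ?_ ?_
    · intro u hu; exact ⟨hu.1, hu.2.1⟩
    · intro u hu; exact ⟨hu.1, hu.2.1⟩
  · intro i _
    exact (mEq _ _).inter ((mH _ _).inter (mGe _ _))

lemma pair_law (h : QC n p c) {i j k : ℕ} (hj : 1 ≤ j) (hji : j ≤ i) (hi : i ≤ n) :
    (nullMeasure n).real {u | cnt (c i) u = k ∧ j ≤ cnt (c j) u} = bp n (c i) k * bT k (c j / c i) j := by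
  have := markov (n := n) c ∅ (h.pos j hj (by omega)).le (h.mono hj hji (by omega)) (h.pos i (by omega) (by omega))
      (h.lt1 i (by omega) (by omega)).le (by simp) k j
  simp only [Finset.notMem_empty, false_imp_iff, implies_true, true_and, and_true] at this
  rw [this, cnt_pmf (h.pos i (by omega) hi).le (h.lt1 i (by omega) hi).le]

lemma ratio_mem (h : QC n p c) {i j : ℕ} (hj : 1 ≤ j) (hji : j ≤ i) (hi : i ≤ n) : 0 < c j / c i ∧ c j / c i ≤ 1 :=
  ⟨div_pos (h.pos j hj (by omega)) (h.pos i (by omega) hi), (div_le_one (h.pos i (by omega) hi)).2 (h.mono hj hji hi)⟩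

lemma thin_lower (h : QC n p c) {i j : ℕ} (m : ℕ) (hj : 1 ≤ j) (hji : j ≤ i) (hi : i ≤ n) :
    bT n (c i) m * bT m (c j / c i) j ≤ p := by
  obtain ⟨q0, q1⟩ := h.ratio_mem hj hji hi
  have hi0 := (h.pos i (by omega) hi).le
  have hi1 := (h.lt1 i (by omega) hi).le
  calc bT n (c i) m * bT m (c j / c i) j ≤ ∑ k ∈ Finset.Icc m n, bp n (c i) k * bT k (c j / c i) j := by
        rw [bT, Finset.sum_mul]
        apply Finset.sum_le_sum
        intro k hk
        simp at hk
        exact mul_le_mul_of_nonneg_left (bT_mono_left q0.le q1 j hk.1) (bp_nonneg hi0 hi1 k)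
    _ = ∑ k ∈ Finset.Icc m n, (nullMeasure n).real {u | cnt (c i) u = k ∧ j ≤ cnt (c j) u} := by
        apply Finset.sum_congr rfl
        intro k _
        rw [h.pair_law hj hji hi]
    _ = (nullMeasure n).real (⋃ k ∈ Finset.Icc m n, {u | cnt (c i) u = k ∧ j ≤ cnt (c j) u}) := by
        rw [measureReal_biUnion_finset]
        · intro k _ k' _ hne
          rw [Function.onFun, Set.disjoint_left]
          rintro u ⟨h1, _⟩ ⟨h2, _⟩
          exact hne (h1.symm.trans h2)
        · intro k _
          exact (mEq _ _).inter (mGe _ _)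
    _ ≤ (nullMeasure n).real {u | j ≤ cnt (c j) u} := by
        refine measureReal_mono ?_ (measure_ne_top _ _)
        intro u hu
        simp only [mem_iUnion] at hu
        obtain ⟨k, _, _, h2⟩ := hu
        exact h2
    _ = p := by rw [cnt_tail (h.pos j hj (by omega)).le (h.lt1 j hj (by omega)).le, h.eq j hj (by omega)]

lemma last_term (h : QC n p c) {b j : ℕ} (m : ℕ) (hj : 1 ≤ j) (hjb : j ≤ b) (hb : b ≤ n) :
    (nullMeasure n).real {u | b ≤ cnt (c b) u ∧ j ≤ cnt (c j) u} ≤ bT n (c b) m + p * bT m (c j / c b) j := by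
  obtain ⟨q0, q1⟩ := h.ratio_mem hj hjb hb
  have hi0 := (h.pos b (by omega) hb).le
  have hi1 := (h.lt1 b (by omega) hb).le
  have hsub : {u : Fin n → ℝ | b ≤ cnt (c b) u ∧ j ≤ cnt (c j) u} ⊆ {u | m ≤ cnt (c b) u} ∪
      ⋃ k ∈ (Finset.Icc b n).filter (fun k => k < m), {u | cnt (c b) u = k ∧ j ≤ cnt (c j) u} := by
    rintro u ⟨h1, h2⟩
    by_cases hm : m ≤ cnt (c b) u
    · left; exact hm
    · right
      simp only [mem_iUnion]
      exact ⟨cnt (c b) u, by simp; exact ⟨⟨h1, cnt_le _ _⟩, by omega⟩, rfl, h2⟩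
  refine (measureReal_mono hsub).trans ((measureReal_union_le _ _).trans ?_)
  rw [cnt_tail hi0 hi1]
  gcongr
  refine (measureReal_biUnion_finset_le _ _).trans ?_
  calc _ = ∑ k ∈ (Finset.Icc b n).filter (fun k => k < m), bp n (c b) k * bT k (c j / c b) j :=
        Finset.sum_congr rfl (fun k _ => h.pair_law hj hjb hb)
    _ ≤ ∑ k ∈ (Finset.Icc b n).filter (fun k => k < m), bp n (c b) k * bT m (c j / c b) j := by
        apply Finset.sum_le_sum
        intro k hk
        simp at hk
        exact mul_le_mul_of_nonneg_left (bT_mono_left q0.le q1 j hk.2.le) (bp_nonneg hi0 hi1 k)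
    _ ≤ ∑ k ∈ (Finset.Icc b n), bp n (c b) k * bT m (c j / c b) j := by
        apply Finset.sum_le_sum_of_subset_of_nonneg (Finset.filter_subset _ _)
        intro k _ _
        exact mul_nonneg (bp_nonneg hi0 hi1 k) (bT_nonneg q0.le q1 j)
    _ = _ := by rw [← Finset.sum_mul, ← h.eq b (by omega) hb]; rfl

end QC

end BerkJonesPartE

section BerkJonesPartF
open MeasureTheory Filter Set ProbabilityTheory
set_option linter.all false

lemma kl_bound {n k : ℕ} {c' q K w : ℝ} (h0 : 0 < c') (hcq : c' ≤ q) (hq : q < 1) (hw : 0 < w)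
    (hKq : n * q ≤ K) (hk : k ≤ n) (hkK : (k:ℝ) ≤ K)
    (hwc : ∀ c ∈ Icc c' q, w ≤ n * (c * (1 - c))) :
    Real.exp (-((K - n * c') ^ 2 / (2 * w))) * bp n q k ≤ bp n c' k := by
  set φ : ℝ → ℝ := fun c => K * Real.log c + (n - K) * Real.log (1 - c) + (K - n * c) ^ 2 / (2 * w) with hφ
  have hd : ∀ c ∈ Icc c' q, HasDerivAt φ (K / c - (n - K) / (1 - c) - n * (K - n * c) / w) c := by
    intro c hc
    have hc0 : c ≠ 0 := by have := hc.1; intro h; linarith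
    have hc1 : 1 - c ≠ 0 := by have := hc.2; intro h; linarith
    have h1 := (Real.hasDerivAt_log hc0).const_mul K
    have h2 := (((hasDerivAt_id c).const_sub 1).log hc1).const_mul (n - K)
    have h3 := ((((hasDerivAt_id c).const_mul (n:ℝ)).const_sub K).fun_pow 2).div_const (2 * w)
    refine ((h1.fun_add h2).fun_add h3).congr_deriv ?_
    simp
    field_simp
    ring
  have hanti : AntitoneOn φ (Icc c' q) := by
    apply antitoneOn_of_deriv_nonpos (convex_Icc _ _)
    · intro c hc; exact (hd c hc).continuousAt.continuousWithinAt
    · intro c hc; exact (hd c (interior_subset hc)).differentiableAt.differentiableWithinAt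
    · intro c hc
      have hc' := interior_subset hc
      rw [(hd c hc').deriv]
      have hc0 : 0 < c := by have := hc'.1; linarith
      have hc1 : 0 < 1 - c := by have := hc'.2; linarith
      have e : K / c - (n - K) / (1 - c) - n * (K - n * c) / w = (K - n * c) * ((w - n * (c * (1 - c))) / (c * (1 - c) * w)) := by
        field_simp; ring
      rw [e]
      have hn : n * c ≤ n * q := by have := hc'.2; gcongr
      apply mul_nonpos_of_nonneg_of_nonpos (by linarith)
      apply div_nonpos_of_nonpos_of_nonneg _ (by positivity)
      have := hwc c hc'; linarith
  have h1 := hanti (left_mem_Icc.2 hcq) (right_mem_Icc.2 hcq) hcq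
  simp only [hφ] at h1
  have hq0 : 0 < q := by linarith
  have hc1 : 0 < 1 - c' := by linarith
  have hq1 : 0 < 1 - q := by linarith
  have h2 : K * Real.log q + (n - K) * Real.log (1 - q) - (K - n * c') ^ 2 / (2 * w) ≤ K * Real.log c' + (n - K) * Real.log (1 - c') := by
    have : 0 ≤ (K - n * q) ^ 2 / (2 * w) := by positivity
    linarith
  have l1 : Real.log c' ≤ Real.log q := Real.log_le_log h0 hcq
  have l2 : Real.log (1 - q) ≤ Real.log (1 - c') := Real.log_le_log hq1 (by linarith)
  have h3 : k * Real.log q + (n - k) * Real.log (1 - q) - (K - n * c') ^ 2 / (2 * w) ≤ k * Real.log c' + (n - k) * Real.log (1 - c') := by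
    nlinarith [mul_nonneg (sub_nonneg.2 hkK) (sub_nonneg.2 l1), mul_nonneg (sub_nonneg.2 hkK) (sub_nonneg.2 l2)]
  have e : ∀ x : ℝ, 0 < x → x < 1 → x ^ k * (1 - x) ^ (n - k) = Real.exp (k * Real.log x + (n - k) * Real.log (1 - x)) := by
    intro x hx hx1
    rw [Real.exp_add, ← Nat.cast_sub hk, Real.exp_nat_mul, Real.exp_nat_mul, Real.exp_log hx, Real.exp_log (by linarith)]
  unfold bp
  rw [mul_assoc, mul_assoc, e q hq0 hq, e c' h0 (by linarith), mul_left_comm, ← Real.exp_add]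
  apply mul_le_mul_of_nonneg_left _ (by positivity)
  apply Real.exp_le_exp.2
  linarith

lemma tail_lower {n j : ℕ} {c' σ w : ℝ} (h0 : 0 < c') (hc : n * c' ≤ j) (hn : 0 < n) (hσ : 2 ≤ σ) (hj : (j:ℝ) + 4 * σ ≤ n)
    (hw : 0 < w) (hσ2 : σ ^ 2 = j * (n - j) / n)
    (hwc : ∀ c ∈ Icc c' ((j + 2 * σ) / n), w ≤ n * (c * (1 - c))) :
    Real.exp (-((j + 4 * σ - n * c') ^ 2 / (2 * w))) / 2 ≤ bT n c' j := by
  have hn' : (0:ℝ) < n := by exact_mod_cast hn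
  set q := (j + 2 * σ) / n with hq
  have hnq : n * q = j + 2 * σ := by rw [hq]; field_simp
  have hcq : c' ≤ q := by
    rw [hq, le_div_iff₀ hn']; linarith
  have hq1 : q < 1 := by rw [hq, div_lt_one hn']; linarith
  have hq0 : 0 < q := by linarith
  set K : ℝ := j + 4 * σ with hK
  have hcheb := cheb_bp (m := n) (q := q) (g := 2 * σ) hq0.le hq1.le (by linarith) (Finset.Icc j ⌊K⌋₊) (by
    intro k hk hkS
    rw [hnq]
    simp only [Finset.mem_Icc, not_and_or, not_le] at hkS
    rcases hkS with h | h
    · have : (k:ℝ) < j := by exact_mod_cast h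
      rw [abs_of_nonpos (by linarith)]; linarith
    · have := Nat.lt_of_floor_lt h
      rw [abs_of_nonneg (by linarith)]; linarith)
  have hvar : n * q * (1 - q) / (2 * σ) ^ 2 ≤ 1 / 2 := by
    rw [div_le_iff₀ (by positivity)]
    have : n * q * (1 - q) = j * (n - j) / n + 2 * σ * (n - 2 * j) / n - 4 * σ ^ 2 / n := by
      rw [hnq, hq]; field_simp; ring
    rw [this, ← hσ2]
    have h1 : 2 * σ * (n - 2 * j) / n ≤ 2 * σ := by
      rw [div_le_iff₀ hn']; have : (0:ℝ) ≤ j := by positivity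
      nlinarith
    have h2 : 0 ≤ 4 * σ ^ 2 / n := by positivity
    nlinarith
  have hKn : ⌊K⌋₊ ≤ n := by
    apply Nat.floor_le_of_le hj
  calc _ ≤ Real.exp (-((K - n * c') ^ 2 / (2 * w))) * ∑ k ∈ Finset.Icc j ⌊K⌋₊, bp n q k := by
        rw [div_eq_mul_inv]; gcongr; linarith
    _ = ∑ k ∈ Finset.Icc j ⌊K⌋₊, Real.exp (-((K - n * c') ^ 2 / (2 * w))) * bp n q k := by rw [Finset.mul_sum]
    _ ≤ ∑ k ∈ Finset.Icc j ⌊K⌋₊, bp n c' k := by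
        apply Finset.sum_le_sum
        intro k hk
        simp only [Finset.mem_Icc] at hk
        have hkK : (k:ℝ) ≤ K := (Nat.le_floor_iff (by positivity)).1 hk.2
        exact kl_bound h0 hcq hq1 hw (by rw [hnq]; linarith) (by omega) hkK hwc
    _ ≤ bT n c' j := by
        unfold bT
        apply Finset.sum_le_sum_of_subset_of_nonneg
        · intro k hk; simp only [Finset.mem_Icc] at hk ⊢; omega
        · intro k _ _; exact bp_nonneg h0.le (by linarith) k

/-- Standing numeric assumptions. -/
structure Std (ε u p : ℝ) : Prop where
  e0 : 0 < ε
  e1 : ε ≤ 1 / 8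
  u1 : 100 ≤ ε * u
  p1 : Real.exp (-((1 + ε / 2) * u ^ 2 / 2)) ≤ p
  p2 : p ≤ Real.exp (-(u ^ 2 / 2))

namespace Std
variable {ε u p : ℝ}
lemma hu (h : Std ε u p) : 800 ≤ u := by
  have := h.e0; have := h.e1; have := h.u1
  by_contra hc
  push Not at hc
  nlinarith
end Std

/-- Standing assumptions on an index. -/
structure Idx (n j : ℕ) (u σ : ℝ) : Prop where
  j1 : 1 ≤ j
  jn : j < n
  s1 : u ^ 3 ≤ σ
  s2 : σ ^ 2 = j * (n - j) / n

namespace Idx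
variable {n j : ℕ} {u σ : ℝ}
lemma npos (h : Idx n j u σ) : (0:ℝ) < n := by have := h.j1; have := h.jn; exact_mod_cast (by omega : 0 < n)
lemma jpos (h : Idx n j u σ) : (0:ℝ) < j := by have := h.j1; exact_mod_cast (by omega : 0 < j)
lemma jlt (h : Idx n j u σ) : (j:ℝ) < n := by have := h.jn; exact_mod_cast this
lemma sj (h : Idx n j u σ) : σ ^ 2 ≤ j := by
  rw [h.s2, div_le_iff₀ h.npos]; have := h.jpos; have := h.jlt; nlinarith
lemma sbig (h : Idx n j u σ) (hu : 800 ≤ u) : 640000 * u ≤ σ := by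
  have : 640000 * u ≤ u ^ 3 := by
    have : (640000:ℝ) ≤ u ^ 2 := by nlinarith
    nlinarith
  linarith [h.s1]
lemma es {ε p : ℝ} (h : Idx n j u σ) (hs : Std ε u p) : 100 * u ^ 2 ≤ ε * σ := by
  have h1 : ε * u ^ 3 ≤ ε * σ := mul_le_mul_of_nonneg_left h.s1 hs.e0.le
  have h2 : 100 * u ^ 2 ≤ (ε * u) * u ^ 2 := mul_le_mul_of_nonneg_right hs.u1 (by positivity)
  nlinarith
lemma snj (h : Idx n j u σ) : σ ^ 2 ≤ n - j := by
  rw [h.s2, div_le_iff₀ h.npos]; have := h.jpos; have := h.jlt; nlinarith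
end Idx

namespace QC
variable {n : ℕ} {p : ℝ} {c : ℕ → ℝ} {ε u σ : ℝ} {j : ℕ}

lemma Dupper (h : QC n p c) (hs : Std ε u p) (hi : Idx n j u σ) : j - n * c j ≤ (1 + ε) * u * σ := by
  have e0 := hs.e0
  have e1 := hs.e1
  have hu := hs.hu
  have eu := hs.u1
  have hn := hi.npos
  by_contra hcon
  push Not at hcon
  set κ := (1 + ε) * u with hκ
  have hκu : u ≤ κ := by rw [hκ]; nlinarith
  have hκu2 : κ ≤ 2 * u := by rw [hκ]; nlinarith
  have hσ : 640000 * u ≤ σ := hi.sbig hu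
  have hσ0 : 0 < σ := by linarith
  have hlκ : κ / σ ≤ ε / 16 := by
    rw [div_le_iff₀ hσ0]
    have := hi.es hs
    have : 800 * u ≤ u ^ 2 := by nlinarith
    linarith
  have hl0 : 0 ≤ κ / σ := div_nonneg (by linarith) hσ0.le
  set c' := (j - κ * σ) / n with hc'
  have hnc : n * c' = j - κ * σ := by rw [hc']; field_simp
  have hc'0 : 0 ≤ c' := by
    apply div_nonneg _ hn.le
    have := hi.sj
    nlinarith
  have hc'1 : c' ≤ 1 := by
    rw [hc', div_le_one hn]; nlinarith [hi.jlt]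
  have hlt : c j ≤ c' := by
    rw [hc', le_div_iff₀ hn]; linarith
  have h1 := bT_mono_q n j (h.pos j hi.j1 hi.jn.le).le hlt hc'1
  rw [h.eq j hi.j1 hi.jn.le] at h1
  have h2 := bernstein_tail (m := n) j hc'0 hc'1 hl0 (by linarith)
  have hvar : n * c' * (1 - c') ≤ σ ^ 2 + κ * σ := by
    have : n * c' * (1 - c') = j * (n - j) / n - κ * σ * (n - 2 * j) / n - (κ * σ) ^ 2 / n := by
      rw [hnc, hc']; field_simp; ring
    rw [this, ← hi.s2]
    have h1 : -(κ * σ) ≤ κ * σ * (n - 2 * j) / n := by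
      rw [le_div_iff₀ hn]
      have : 0 ≤ κ * σ := by positivity
      nlinarith [hi.jlt]
    have h2 : 0 ≤ (κ * σ) ^ 2 / n := by positivity
    linarith
  have h3 : n * c' * (1 - c') * (κ / σ) ^ 2 * (1 + κ / σ) / 2 ≤ κ ^ 2 * (1 + κ / σ) ^ 2 / 2 := by
    calc _ ≤ (σ ^ 2 + κ * σ) * (κ / σ) ^ 2 * (1 + κ / σ) / 2 := by gcongr
      _ = _ := by field_simp
  have h4 : κ / σ * (j - n * c') = κ ^ 2 := by rw [hnc]; field_simp; ring
  have h5 : p ≤ Real.exp (-(κ ^ 2) + κ ^ 2 * (1 + κ / σ) ^ 2 / 2) := by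
    refine h1.trans (h2.trans (Real.exp_le_exp.2 ?_))
    rw [h4]; linarith
  have h6 := Real.exp_le_exp.1 (hs.p1.trans h5)
  have h7 : (1 + κ / σ) ^ 2 ≤ 1 + ε / 4 := by nlinarith
  have h8 : κ ^ 2 * (1 + κ / σ) ^ 2 ≤ κ ^ 2 * (1 + ε / 4) := by gcongr
  have h9 : κ ^ 2 * (1 - ε / 4) ≤ (1 + ε / 2) * u ^ 2 := by linarith
  rw [hκ] at h9
  have hup : 0 < u ^ 2 := by positivity
  have : (1 + ε) ^ 2 * (1 - ε / 4) ≤ 1 + ε / 2 := by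
    have : u ^ 2 * ((1 + ε) ^ 2 * (1 - ε / 4)) ≤ u ^ 2 * (1 + ε / 2) := by nlinarith
    exact le_of_mul_le_mul_left this hup
  nlinarith [mul_pos e0 e0, mul_pos e0 (mul_pos e0 e0)]

lemma Dlower_num {ε u κ : ℝ} (e0 : 0 < ε) (e1 : ε ≤ 1 / 8) (hu : 800 ≤ u) (eu : 100 ≤ ε * u) (hκ0 : 0 ≤ κ)
    (hκ : κ = (1 - ε) * u) (h8 : (u ^ 2 / 2 - 1) * (2 * (1 - ε / 16)) ≤ (κ + 4) ^ 2) : False := by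
  have h9 : κ + 4 ≤ (1 - 24 * ε / 25) * u := by rw [hκ]; nlinarith
  have h10 : (κ + 4) ^ 2 ≤ ((1 - 24 * ε / 25) * u) ^ 2 := by gcongr
  have h11 : (1:ℝ) ≤ ε * u ^ 2 / 100 := by nlinarith
  have h12 : (1 - 24 * ε / 25) ^ 2 ≤ (1 - ε / 50) * (1 - ε / 16) - ε/4 := by nlinarith
  have hup : 0 < u ^ 2 := by positivity
  have h13 : (u ^ 2 / 2 - ε * u ^ 2 / 100) * (2 * (1 - ε / 16)) ≤ (u ^ 2 / 2 - 1) * (2 * (1 - ε / 16)) := by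
    apply mul_le_mul_of_nonneg_right _ (by linarith); linarith
  have h14 : u ^ 2 * ((1 - ε / 50) * (1 - ε / 16)) ≤ u ^ 2 * (1 - 24 * ε / 25) ^ 2 := by nlinarith
  have h15 := le_of_mul_le_mul_left h14 hup
  linarith

lemma Dlower (h : QC n p c) (hs : Std ε u p) (hi : Idx n j u σ) : (1 - ε) * u * σ ≤ j - n * c j := by
  have e0 := hs.e0
  have e1 := hs.e1
  have hu := hs.hu
  have eu := hs.u1
  have hn := hi.npos
  have hnn : 0 < n := by exact_mod_cast hn
  by_contra hcon
  push Not at hcon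
  set κ := (1 - ε) * u with hκ
  have hκu2 : κ ≤ u := by rw [hκ]; nlinarith
  have hκ0 : 0 ≤ κ := by rw [hκ]; apply mul_nonneg <;> linarith
  have hσ : 640000 * u ≤ σ := hi.sbig hu
  have hσ0 : 0 < σ := by linarith
  set c' := (j - κ * σ) / n with hc'
  have hnc : n * c' = j - κ * σ := by rw [hc']; field_simp
  have hc'0 : 0 < c' := by
    apply div_pos _ hn
    have := hi.sj
    nlinarith
  have hlt : c' ≤ c j := by
    rw [hc', div_le_iff₀ hn]; linarith
  have h1 := bT_mono_q n j hc'0.le hlt (h.lt1 j hi.j1 hi.jn.le).le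
  rw [h.eq j hi.j1 hi.jn.le] at h1
  have hus : u / σ ≤ ε / 32 := by
    rw [div_le_iff₀ hσ0]
    have := hi.es hs
    have : 800 * u ≤ u ^ 2 := by nlinarith
    linarith
  have hus0 : 0 ≤ u / σ := div_nonneg (by linarith) hσ0.le
  set w := σ ^ 2 * (1 - 2 * (u / σ)) with hw
  have hw0 : 0 < w := by
    apply mul_pos (by positivity); linarith
  have hw' : w = σ ^ 2 - 2 * u * σ := by rw [hw]; field_simp
  have h2 := tail_lower (n := n) (j := j) (σ := σ) (w := w) hc'0 (by rw [hnc]; nlinarith) hnn (by linarith) (by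
      have := hi.snj; nlinarith) hw0 hi.s2 (by
    intro x hx
    obtain ⟨t, ht⟩ : ∃ t, t = n * x - j := ⟨_, rfl⟩
    have ht1 : -(u * σ) ≤ t := by
      have : n * c' ≤ n * x := by have := hx.1; gcongr
      rw [hnc] at this
      nlinarith
    have ht2 : t ≤ u * σ := by
      have : n * x ≤ j + 2 * σ := by
        have := hx.2; rw [le_div_iff₀ hn] at this; linarith
      nlinarith
    have hx' : x = (j + t) / n := by rw [ht]; field_simp; ring
    have : n * (x * (1 - x)) = j * (n - j) / n + t * (n - 2 * j) / n - t ^ 2 / n := by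
      rw [hx']; field_simp; ring
    rw [this, ← hi.s2, hw']
    have h1 : -(u * σ) ≤ t * (n - 2 * j) / n := by
      rw [le_div_iff₀ hn]
      have a1 := hi.jlt
      have a2 := hi.jpos
      rcases le_total (0:ℝ) (n - 2 * j) with h | h <;> nlinarith
    have h2 : t ^ 2 / n ≤ u * σ := by
      rw [div_le_iff₀ hn]
      have a : t ^ 2 ≤ (u * σ) ^ 2 := sq_le_sq' ht1 ht2
      have b : σ ^ 2 ≤ n := by linarith [hi.sj, hi.jlt]
      have hus : 0 ≤ u * σ := by apply mul_nonneg <;> linarith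
      have d : u * σ ≤ σ ^ 2 := by rw [pow_two]; apply mul_le_mul_of_nonneg_right _ hσ0.le; linarith
      calc t ^ 2 ≤ (u * σ) * (u * σ) := by linarith
        _ ≤ (u * σ) * n := mul_le_mul_of_nonneg_left (by linarith) hus
    linarith)
  have h3 := h2.trans h1
  have h4 := h3.trans hs.p2
  rw [hnc] at h4
  have e : ((j:ℝ) + 4 * σ - (j - κ * σ)) ^ 2 / (2 * w) = (κ + 4) ^ 2 / (2 * (1 - 2 * (u / σ))) := by
    rw [hw]; 
    have : 1 - 2 * (u / σ) ≠ 0 := by intro h; linarith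
    rw [div_eq_div_iff (by positivity) (by positivity)]; ring
  rw [e] at h4
  have hl2 : (1:ℝ) / 2 ≥ Real.exp (-1) := by
    rw [Real.exp_neg, one_div]
    apply inv_anti₀ (by norm_num)
    have := Real.add_one_le_exp (1:ℝ); linarith
  have h5 : Real.exp (-((κ + 4) ^ 2 / (2 * (1 - 2 * (u / σ)))) - 1) ≤ Real.exp (-(u ^ 2 / 2)) := by
    refine le_trans ?_ h4
    rw [sub_eq_add_neg, Real.exp_add, div_eq_mul_inv]
    exact mul_le_mul_of_nonneg_left (by rw [← one_div]; exact hl2) (Real.exp_pos _).le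
  have h6 := Real.exp_le_exp.1 h5
  have h7 : (κ + 4) ^ 2 / (2 * (1 - 2 * (u / σ))) ≤ (κ + 4) ^ 2 / (2 * (1 - ε / 16)) := by
    apply div_le_div_of_nonneg_left (by positivity) (by linarith) (by linarith)
  have h8 : u ^ 2 / 2 - 1 ≤ (κ + 4) ^ 2 / (2 * (1 - ε / 16)) := by linarith
  rw [le_div_iff₀ (by linarith)] at h8
  exact Dlower_num e0 e1 hu eu hκ0 hκ h8

end QC

end BerkJonesPartF

section BerkJonesPartG
open MeasureTheory Filter Set ProbabilityTheory
set_option linter.all false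
open scoped NNReal

/-- Poisson weights. -/
noncomputable def pw (b : ℝ) (l : ℕ) : ℝ := Real.exp (-b) * b ^ l / l.factorial

lemma pw_nonneg {b : ℝ} (hb : 0 ≤ b) (l : ℕ) : 0 ≤ pw b l := by unfold pw; positivity

lemma pw_exp (b s : ℝ) : HasSum (fun l => pw b l * Real.exp (s * l)) (Real.exp (b * (Real.exp s - 1))) := by
  have h := (NormedSpace.expSeries_div_hasSum_exp (b * Real.exp s)).mul_left (Real.exp (-b))
  rw [← Real.exp_eq_exp_ℝ, ← Real.exp_add] at h
  convert! h using 1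
  · ext l
    unfold pw
    rw [mul_pow, ← Real.exp_nat_mul, mul_comm s]; ring
  · congr 1; ring

lemma pw_0 (b : ℝ) : HasSum (fun l => pw b l) 1 := by
  have := pw_exp b 0
  simpa using this

lemma pw_succ (b : ℝ) (l : ℕ) : pw b (l + 1) * (l + 1 : ℕ) = b * pw b l := by
  unfold pw
  rw [Nat.factorial_succ]; push_cast
  have : (0:ℝ) < l.factorial := by positivity
  field_simp
  ring

lemma pw_1 (b : ℝ) : HasSum (fun l => pw b l * (l:ℝ)) b := by
  rw [← hasSum_nat_add_iff' 1]
  simp only [pw_succ, Finset.range_one, Finset.sum_singleton, Nat.cast_zero, mul_zero, sub_zero]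
  simpa using (pw_0 b).mul_left b

lemma pw_2 (b : ℝ) : HasSum (fun l => pw b l * (l:ℝ) ^ 2) (b + b ^ 2) := by
  rw [← hasSum_nat_add_iff' 1]
  have : ∀ l, pw b (l + 1) * ((l + 1 : ℕ) : ℝ) ^ 2 = b * (pw b l * l) + b * pw b l := by
    intro l
    rw [pow_two, ← mul_assoc, pw_succ]; push_cast; ring
  simp only [this, Finset.range_one, Finset.sum_singleton, Nat.cast_zero]
  convert! ((pw_1 b).mul_left b).add ((pw_0 b).mul_left b) using 1
  ring

/-- Lyapunov function -/
noncomputable def lyG (lam z : ℝ) : ℝ := if z ≤ 0 then Real.exp (lam * z) else 1 + lam * z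

lemma lyG_nonneg {lam z : ℝ} (h : 0 ≤ lam) : 0 ≤ lyG lam z := by
  unfold lyG; split_ifs with hz
  · positivity
  · push Not at hz; positivity

lemma lyG_le_exp {lam z : ℝ} : lyG lam z ≤ Real.exp (lam * z) := by
  unfold lyG; split_ifs with hz
  · exact le_rfl
  · have := Real.add_one_le_exp (lam * z); linarith

lemma lyG_le_quad {lam z : ℝ} (h : 0 ≤ lam) : lyG lam z ≤ 1 + lam * z + lam ^ 2 / 2 * (max 0 (-z)) ^ 2 := by
  unfold lyG; split_ifs with hz
  · rw [max_eq_right (by linarith)]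
    have := exp_neg_le_quad (x := -(lam * z)) (by nlinarith)
    rw [neg_neg] at this
    nlinarith
  · push Not at hz
    rw [max_eq_left (by linarith)]; simp

lemma lyG_le_max {lam z M : ℝ} (h : 0 ≤ lam) (hM : 0 ≤ M) (hz : z ≤ M) : lyG lam z ≤ 1 + lam * M := by
  unfold lyG; split_ifs with h0
  · have : Real.exp (lam * z) ≤ 1 := Real.exp_le_one_iff.2 (by nlinarith)
    nlinarith [mul_nonneg h hM]
  · have := mul_le_mul_of_nonneg_left hz h; linarith

lemma max_sq_le_exp (x : ℝ) : (max 0 x) ^ 2 ≤ 2 * Real.exp x := by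
  rcases le_total x 0 with h | h
  · rw [max_eq_left h]; have := Real.exp_pos x; simp; positivity
  · rw [max_eq_right h]; have := Real.quadratic_le_exp_of_nonneg h; nlinarith

lemma exp_bnd1 : Real.exp (5/4) ≤ 4 := by
  have h := Real.exp_one_lt_d9
  have : Real.exp (5/4) ^ 4 ≤ 4 ^ 4 := by
    rw [← Real.exp_nat_mul]
    norm_num
    have e : Real.exp 5 = Real.exp 1 ^ 5 := by rw [← Real.exp_nat_mul]; norm_num
    rw [e]
    calc Real.exp 1 ^ 5 ≤ 2.7182818286 ^ 5 := by gcongr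
      _ ≤ 256 := by norm_num
  exact le_of_pow_le_pow_left₀ (by norm_num) (by norm_num) this

/-- one-step drift -/
lemma drift_step {θ ε A z : ℝ} (h0 : 0 < θ) (h1 : θ ≤ 1/4) (e0 : 0 ≤ ε) (hA : 0 ≤ A) (hAe : 8 * Real.exp (-A) ≤ ε) :
    ∑' l, pw (1 + θ) l * lyG (2 * θ / (1 + θ)) (z + 1 - l) ≤
      lyG (2 * θ / (1 + θ)) z - if A ≤ z then 2 * θ ^ 2 / (1 + θ) * (1 - ε) else 0 := by
  set b := 1 + θ with hb
  set lam := 2 * θ / b with hlam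
  have hb0 : 0 < b := by linarith
  have hl0 : 0 ≤ lam := by positivity
  have hlb : lam * b = 2 * θ := by rw [hlam]; field_simp
  have hnn : ∀ l, 0 ≤ pw b l := pw_nonneg hb0.le
  have hsum : Summable fun l : ℕ => pw b l * lyG lam (z + 1 - l) := by
    refine Summable.of_nonneg_of_le (fun l => mul_nonneg (hnn l) (lyG_nonneg hl0)) (fun l => mul_le_mul_of_nonneg_left (lyG_le_max (M := |z + 1|) hl0 (abs_nonneg _) ?_) (hnn l)) ((pw_0 b).summable.mul_right _)
    have := le_abs_self (z + 1); have : (0:ℝ) ≤ l := by positivity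
    linarith
  rcases lt_or_ge z 0 with hz | hz
  · rw [if_neg (by linarith), sub_zero]
    have hg : lyG lam z = Real.exp (lam * z) := by unfold lyG; rw [if_pos hz.le]
    have h2 := (pw_exp b (-lam)).mul_left (Real.exp (lam * (z + 1)))
    have h3 := hasSum_le (fun l => ?_) hsum.hasSum h2
    · refine h3.trans ?_
      rw [hg, ← Real.exp_add]
      apply Real.exp_le_exp.2
      have := exp_neg_le_quad hl0
      have : b * (Real.exp (-lam) - 1) ≤ b * (-lam + lam ^ 2 / 2) := by gcongr; linarith
      have e : b * (-lam + lam ^ 2 / 2) = -(lam) := by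
        have : b * (-lam + lam ^ 2 / 2) = lam * (-(b) + lam * b / 2) := by ring
        rw [this, hlb, hb]; ring
      nlinarith
    · calc pw b l * lyG lam (z + 1 - l) ≤ pw b l * Real.exp (lam * (z + 1 - l)) := mul_le_mul_of_nonneg_left lyG_le_exp (hnn l)
        _ = _ := by rw [mul_left_comm, ← Real.exp_add]; congr 2; ring
  · have hg : lyG lam z = 1 + lam * z := by
      unfold lyG; split_ifs with h
      · have : z = 0 := by linarith
        simp [this]
      · rfl
    have key : ∀ V, Summable (fun l : ℕ => pw b l * (max 0 ((l:ℝ) - 1 - z)) ^ 2) → ∑' l : ℕ, pw b l * (max 0 ((l:ℝ) - 1 - z)) ^ 2 ≤ V →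
       ∑' l : ℕ, pw b l * lyG lam (z + 1 - l) ≤ lyG lam z - lam * θ + lam ^ 2 / 2 * V := by
      intro V hV1 hV2
      have h2 := (((pw_0 b).mul_left (1 + lam * (z + 1))).add ((pw_1 b).mul_left (-lam))).add (hV1.hasSum.mul_left (lam ^ 2 / 2))
      have h3 := hasSum_le (fun l => ?_) hsum.hasSum h2
      · refine h3.trans ?_
        rw [hg]
        have : lam ^ 2 / 2 * ∑' l : ℕ, pw b l * (max 0 ((l:ℝ) - 1 - z)) ^ 2 ≤ lam ^ 2 / 2 * V := by gcongr
        have e : 1 * (1 + lam * (z + 1)) + -lam * b = 1 + lam * z - lam * θ := by rw [hb]; ring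
        linarith
      · have := mul_le_mul_of_nonneg_left (lyG_le_quad (lam := lam) (z := z + 1 - l) hl0) (hnn l)
        have e : -(z + 1 - (l:ℝ)) = l - 1 - z := by ring
        rw [e] at this
        refine this.trans (le_of_eq ?_)
        ring
    -- the basic variance bound
    have hb2 : HasSum (fun l : ℕ => pw b l * (max 0 ((l:ℝ) - 1)) ^ 2) (b + θ ^ 2 - Real.exp (-b)) := by
      have h2 := (((pw_2 b).add ((pw_1 b).mul_left (-2))).add (pw_0 b)).sub (hasSum_ite_eq (0:ℕ) (Real.exp (-b)))
      convert! h2 using 1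
      · ext l
        rcases Nat.eq_zero_or_pos l with rfl | hl
        · simp [pw]
        · have : (1:ℝ) ≤ l := by exact_mod_cast hl
          rw [if_neg (by omega), max_eq_right (by linarith)]; ring
      · rw [hb]; ring
    have hb3 : b + θ ^ 2 - Real.exp (-b) ≤ b := by
      have h4 : (1:ℝ)/16 ≤ Real.exp (-b) := by
        rw [Real.exp_neg, ← one_div]
        apply one_div_le_one_div_of_le (Real.exp_pos _)
        have : Real.exp b ≤ Real.exp (5/4) := Real.exp_le_exp.2 (by linarith)
        linarith [exp_bnd1]
      nlinarith
    have hle : ∀ l : ℕ, pw b l * (max 0 ((l:ℝ) - 1 - z)) ^ 2 ≤ pw b l * (max 0 ((l:ℝ) - 1)) ^ 2 := by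
      intro l
      apply mul_le_mul_of_nonneg_left _ (hnn l)
      apply pow_le_pow_left₀ (le_max_left _ _)
      exact max_le_max le_rfl (by linarith)
    have hs : Summable (fun l : ℕ => pw b l * (max 0 ((l:ℝ) - 1 - z)) ^ 2) :=
      Summable.of_nonneg_of_le (fun l => mul_nonneg (hnn l) (sq_nonneg _)) hle hb2.summable
    split_ifs with hAz
    · have h5 : ∑' l : ℕ, pw b l * (max 0 ((l:ℝ) - 1 - z)) ^ 2 ≤ ε := by
        have h6 := (pw_exp b 1).mul_left (2 * Real.exp (-1 - z))
        refine (hasSum_le (fun l => ?_) hs.hasSum h6).trans ?_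
        · have := mul_le_mul_of_nonneg_left (max_sq_le_exp ((l:ℝ) - 1 - z)) (hnn l)
          refine this.trans (le_of_eq ?_)
          have : (l:ℝ) - 1 - z = (-1 - z) + 1 * l := by ring
          rw [this, Real.exp_add]; ring
        · refine le_trans ?_ hAe
          have h7 : Real.exp (b * (Real.exp 1 - 1)) ≤ Real.exp (1 + 5/4) := by
            apply Real.exp_le_exp.2
            have := Real.exp_one_lt_d9
            have h9 : 0 ≤ Real.exp 1 - 1 := by have := Real.add_one_le_exp (1:ℝ); linarith
            nlinarith
          have h8 : Real.exp (-1 - z) ≤ Real.exp (-1) * Real.exp (-A) := by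
            rw [← Real.exp_add]; apply Real.exp_le_exp.2; linarith
          calc 2 * Real.exp (-1 - z) * Real.exp (b * (Real.exp 1 - 1)) ≤ 2 * (Real.exp (-1) * Real.exp (-A)) * Real.exp (1 + 5/4) := by gcongr
            _ = 2 * Real.exp (-A) * Real.exp (5/4) := by
              have : Real.exp (-1) * Real.exp (1 + 5/4) = Real.exp (5/4) := by rw [← Real.exp_add]; congr 1; ring
              rw [← this]; ring
            _ ≤ 2 * Real.exp (-A) * 4 := by gcongr; exact exp_bnd1
            _ = _ := by ring
      have h6 := key (ε * b) hs (h5.trans (by nlinarith))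
      refine h6.trans (le_of_eq ?_)
      have : lam ^ 2 / 2 * (ε * b) = lam * θ * ε := by
        have : lam ^ 2 / 2 * (ε * b) = lam * ε / 2 * (lam * b) := by ring
        rw [this, hlb]; ring
      rw [this, hlam]; ring
    · have h5 : ∑' l : ℕ, pw b l * (max 0 ((l:ℝ) - 1 - z)) ^ 2 ≤ b :=
        ((hasSum_le hle hs.hasSum hb2)).trans hb3
      have h6 := key b hs h5
      refine h6.trans (le_of_eq ?_)
      have : lam ^ 2 / 2 * b = lam * θ := by
        have : lam ^ 2 / 2 * b = lam / 2 * (lam * b) := by ring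
        rw [this, hlb]; ring
      rw [this]; ring

/-- Poisson lower tail -/
noncomputable def pL (b : ℝ) (m : ℕ) : ℝ := ∑ k ∈ Finset.range (m + 1), pw b k

lemma po_int (r : ℝ≥0) (f : ℕ → ℝ) : ∫ l, f l ∂(poissonMeasure r) = ∑' l, pw r l * f l := by
  rw [integral_poissonMeasure]; rfl

lemma po_tail (r : ℝ≥0) (m : ℕ) : ∫ k, (if k ≤ m then (1:ℝ) else 0) ∂(poissonMeasure r) = pL r m := by
  rw [po_int, tsum_eq_sum (s := Finset.range (m + 1))]
  · apply Finset.sum_congr rfl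
    intro k hk
    simp at hk
    rw [if_pos (by omega), mul_one]
  · intro k hk
    simp at hk
    rw [if_neg (by omega), mul_zero]

lemma po_chain (r s : ℝ≥0) (f : ℕ → ℝ) (B : ℝ) (hf : ∀ k, |f k| ≤ B) :
    ∫ k, f k ∂(poissonMeasure (r + s)) = ∫ k, (∑' l, pw s l * f (k + l)) ∂(poissonMeasure r) := by
  rw [← poissonMeasure_conv_poissonMeasure, Measure.conv, integral_map .of_discrete .of_discrete,
    integral_prod]
  · apply integral_congr_ae
    filter_upwards with k
    exact po_int s (fun l => f (k + l))
  · apply Integrable.of_bound .of_discrete B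
    filter_upwards with x
    exact hf _

lemma poisson_sum {θ ε : ℝ} {A : ℕ} (h0 : 0 < θ) (h1 : θ ≤ 1/4) (e0 : 0 ≤ ε) (hAe : 8 * Real.exp (-(A:ℝ)) ≤ ε) (M : ℕ) :
    2 * θ ^ 2 / (1 + θ) * (1 - ε) * ∑ m ∈ Finset.range M, pL (m * (1 + θ)) m ≤ 1 + 2 * θ / (1 + θ) * A := by
  set lam := 2 * θ / (1 + θ) with hlam
  have hl0 : 0 ≤ lam := by positivity
  set b : ℝ≥0 := ⟨1 + θ, by linarith⟩ with hb
  have hbv : (b : ℝ) = 1 + θ := rfl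
  set κ := 2 * θ ^ 2 / (1 + θ) * (1 - ε) with hκ
  set I : ℕ → ℝ := fun m => ∫ k, lyG lam (m + A - k) ∂(poissonMeasure (m * b)) with hI
  have hbd : ∀ m k : ℕ, |lyG lam ((m:ℝ) + A - k)| ≤ 1 + lam * (m + A) := by
    intro m k
    rw [abs_of_nonneg (lyG_nonneg hl0)]
    apply lyG_le_max hl0 (by positivity)
    have : (0:ℝ) ≤ k := by positivity
    linarith
  have hIntg : ∀ m m' : ℕ, Integrable (fun k : ℕ => lyG lam ((m:ℝ) + A - k)) (poissonMeasure (m' * b)) := by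
    intro m m'
    apply Integrable.of_bound .of_discrete (1 + lam * (m + A))
    filter_upwards with k
    exact hbd m k
  have hint2 : ∀ m m' : ℕ, Integrable (fun k : ℕ => if k ≤ m then (1:ℝ) else 0) (poissonMeasure (m' * b)) := by
    intro m m'
    apply Integrable.of_bound .of_discrete 1
    filter_upwards with k
    split_ifs <;> simp
  have hstep : ∀ m, I (m + 1) ≤ I m - κ * pL (m * (1 + θ)) m := by
    intro m
    have e1 : ((m + 1 : ℕ) : ℝ≥0) * b = m * b + b := by push_cast; ring
    have h2 : I (m + 1) = ∫ k, (∑' l : ℕ, pw b l * lyG lam (((m+1:ℕ):ℝ) + A - ((k + l : ℕ):ℝ))) ∂(poissonMeasure (m * b)) := by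
      simp only [hI]
      rw [e1]
      exact po_chain (m * b) b (fun k => lyG lam (((m+1:ℕ):ℝ) + A - (k:ℝ))) _ (hbd (m+1))
    have h3 : ∀ k : ℕ, (∑' l : ℕ, pw b l * lyG lam (((m+1:ℕ):ℝ) + A - ((k + l : ℕ):ℝ))) ≤ lyG lam (m + A - k) - κ * (if k ≤ m then 1 else 0) := by
      intro k
      have := drift_step (z := m + A - k) h0 h1 e0 (Nat.cast_nonneg A) hAe
      have e2 : ∀ l : ℕ, ((m+1:ℕ):ℝ) + A - ((k + l : ℕ):ℝ) = m + A - k + 1 - l := by intro l; push_cast; ring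
      simp only [e2]
      refine this.trans ?_
      have e3 : ((A:ℝ) ≤ m + A - k) ↔ k ≤ m := by
        constructor
        · intro h; exact_mod_cast (by linarith : (k:ℝ) ≤ m)
        · intro h; have : (k:ℝ) ≤ m := by exact_mod_cast h
          linarith
      simp only [e3]
      rw [← hlam]
      split_ifs <;> simp [hκ]
    have hint3 : Integrable (fun k : ℕ => ∑' l : ℕ, pw b l * lyG lam (((m+1:ℕ):ℝ) + A - ((k + l : ℕ):ℝ))) (poissonMeasure (m * b)) := by
      apply Integrable.of_bound .of_discrete (1 + lam * (m + 1 + A))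
      filter_upwards with k
      have hnn0 : 0 ≤ ∑' l : ℕ, pw b l * lyG lam (((m+1:ℕ):ℝ) + A - ((k + l : ℕ):ℝ)) :=
        tsum_nonneg fun l => mul_nonneg (pw_nonneg b.2 l) (lyG_nonneg hl0)
      rw [Real.norm_of_nonneg hnn0]
      have hbb : ∀ l : ℕ, pw b l * lyG lam (((m+1:ℕ):ℝ) + A - ((k + l : ℕ):ℝ)) ≤ (1 + lam * (m + 1 + A)) * pw b l := by
        intro l
        rw [mul_comm]
        apply mul_le_mul_of_nonneg_right _ (pw_nonneg b.2 l)
        have := le_trans (le_abs_self _) (hbd (m+1) (k+l))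
        push_cast at this ⊢
        exact this
      have h5 := ((pw_0 b).mul_left (1 + lam * (m + 1 + A)))
      have h6 : Summable fun l : ℕ => pw b l * lyG lam (((m+1:ℕ):ℝ) + A - ((k + l : ℕ):ℝ)) :=
        Summable.of_nonneg_of_le (fun l => mul_nonneg (pw_nonneg b.2 l) (lyG_nonneg hl0)) hbb h5.summable
      have h7 := hasSum_le hbb h6.hasSum h5
      simpa using h7
    rw [h2]
    refine (integral_mono hint3 ((hIntg m m).sub ((hint2 m m).const_mul κ)) h3).trans (le_of_eq ?_)
    have := integral_sub (hIntg m m) ((hint2 m m).const_mul κ)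
    simp only [Pi.sub_apply] at this ⊢
    rw [this, integral_const_mul, po_tail]
    congr 2
  have hsum : ∀ M, κ * ∑ m ∈ Finset.range M, pL (m * (1 + θ)) m ≤ I 0 - I M := by
    intro M
    induction M with
    | zero => simp
    | succ M ih =>
      rw [Finset.sum_range_succ, mul_add]
      have := hstep M
      linarith
  have hIM : 0 ≤ I M := integral_nonneg (fun k => lyG_nonneg hl0)
  have hI0 : I 0 ≤ 1 + lam * A := by
    have h5 := hbd 0
    have : I 0 ≤ ∫ k, (1 + lam * A) ∂(poissonMeasure ((0:ℕ) * b)) := by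
      apply integral_mono (hIntg 0 0) (integrable_const _)
      intro k
      have := le_trans (le_abs_self _) (h5 k)
      simpa using this
    simpa using this
  have := hsum M
  linarith

end BerkJonesPartG

section BerkJonesPartH
open MeasureTheory Filter Set ProbabilityTheory
set_option linter.all false

lemma drift_num1 {P Q R S θ η A B t : ℝ} (h0 : 0 < η) (h1 : η ≤ 1/40) (hA : 0 ≤ A) (hB : 0 ≤ B) (hAB : A + B = t)
    (hP : (1 - η) * A ≤ P) (hQ : Q ≤ (1 + 5 * η) * A) (hR : (1 - 4 * η) * B ≤ R) (hS : S ≤ η * B)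
    (hR0 : 0 ≤ R) (hQ1 : Q ≤ η) (hS1 : S ≤ η) (hθ : θ = (1 - 9 * η) * t / 2) :
    (1 + θ) * (2 + Q - R + S) ≤ 2 * (1 + P) := by
  have ht : 0 ≤ t := by linarith
  have hθ0 : 0 ≤ θ := by rw [hθ]; nlinarith
  have h2 : (1 - 7 * η) * t ≤ 2 * P - Q + R - S := by rw [← hAB]; nlinarith
  have h3 : θ * (Q - R + S) ≤ θ * (2 * η) := mul_le_mul_of_nonneg_left (by linarith) hθ0
  have h4 : θ * (2 + 2 * η) ≤ (1 - 7 * η) * t := by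
    rw [hθ]
    nlinarith [mul_nonneg ht h0.le, mul_nonneg (mul_nonneg ht h0.le) h0.le]
  nlinarith

lemma dn_e1 {N Lr y D : ℝ} (hN : 0 < N) (hy : 0 < y) (hNy : N * y = Lr - D) : Lr / y = N * (1 + D / (N * y)) := by
  field_simp; linarith

lemma dn_e2 {N Lr y D : ℝ} (hN : 0 < N) (hy : 0 < 1 - y) (hNy : N * y = Lr - D) :
    (N - Lr + 1) / (1 - y) = N * (1 - D / (N * (1 - y)) + 1 / (N * (1 - y))) := by
  field_simp; linarith

lemma dn_e3 {N I Y D : ℝ} (hN : 0 < N) (hy : 0 < Y) (hI : 0 < I) (hNy : N * Y = I - D) :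
    Y / I = 1 / (N * (1 + D / (N * Y))) := by
  have : N * (1 + D / (N * Y)) = I / Y := by field_simp; linarith
  rw [this]; field_simp

lemma dn_fin {N P T θ : ℝ} (hN : 0 < N) (hP : 0 ≤ P) (hT : 0 < T) (h : (1 + θ) * T ≤ 2 * (1 + P)) :
    (1 + θ) * (1 / (N * (1 + P))) ≤ 2 / (N * T) := by
  rw [mul_one_div, div_le_div_iff₀ (by positivity) (by positivity)]
  have := mul_le_mul_of_nonneg_left h hN.le
  linarith

lemma dn_t {N I u σ : ℝ} (hN : 0 < N) (hI : 0 < I) (hNI : 0 < N - I) (hσ : 0 < σ) (hs : σ ^ 2 = I * (N - I) / N) :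
    u * σ / I + u * σ / (N - I) = u / σ := by
  have : u / σ = u * σ / σ ^ 2 := by field_simp
  rw [this, hs]; field_simp; ring

set_option maxHeartbeats 800000 in
lemma drift_num {N I Lr y Y D Di u σ τ η : ℝ} (h0 : 0 < η) (h1 : η ≤ 1/40) (hI : 0 < I) (hIN : I < N)
    (hy0 : 0 < y) (hy1 : y < 1) (hY0 : 0 < Y) (hNy : N * y = Lr - D) (hNY : N * Y = I - Di)
    (hu : 0 < u) (hσ : 0 < σ)
    (hDi : (1 - η) * (u * σ) ≤ Di) (hD1 : (1 - η) * (u * τ) ≤ D) (hD2 : D ≤ (1 + η) * (u * τ))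
    (hD3 : D ≤ η / 100 * Lr) (hD4 : D ≤ η / 100 * (N - Lr)) (hL1 : Lr ≤ I) (hL2 : (1 - η) * I ≤ Lr)
    (hL3 : N - Lr ≤ (1 + η) * (N - I)) (ht1 : (1 - η) * σ ≤ τ) (ht2 : τ ≤ (1 + η) * σ)
    (hs : σ ^ 2 = I * (N - I) / N) (hbig : 1 ≤ η * (u * σ)) (hbig2 : 1 ≤ η * (N - Lr)) :
    (1 + (1 - 9 * η) * (u / σ) / 2) * (Y / I) ≤ 2 / (Lr / y + (N - Lr + 1) / (1 - y)) := by
  have hN : 0 < N := by linarith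
  have hNI : 0 < N - I := by linarith
  have hNL : 0 < N - Lr := by linarith
  have hκ : 0 < u * σ := by positivity
  have hLp : 0 < Lr := by nlinarith
  have hD0 : 0 ≤ D := le_trans (by have : 0 ≤ u * τ := mul_nonneg hu.le (by nlinarith)
                                   nlinarith) hD1
  have hDi0 : 0 ≤ Di := le_trans (by nlinarith) hDi
  have hny : 0 < N * y := by positivity
  have hny1 : 0 < N * (1 - y) := mul_pos hN (by linarith)
  have hnY : 0 < N * Y := by positivity
  have hN1 : N * (1 - y) = N - Lr + D := by linarith
  have hD2' : D ≤ (1 + η) * ((1 + η) * (u * σ)) := by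
    refine hD2.trans (mul_le_mul_of_nonneg_left ?_ (by linarith))
    nlinarith
  have hD1' : (1 - η) * ((1 - η) * (u * σ)) ≤ D := by
    refine le_trans (mul_le_mul_of_nonneg_left ?_ (by linarith)) hD1
    nlinarith
  have key := drift_num1 (P := Di / (N * Y)) (Q := D / (N * y)) (R := D / (N * (1 - y))) (S := 1 / (N * (1 - y)))
    (θ := (1 - 9 * η) * (u / σ) / 2) (A := u * σ / I) (B := u * σ / (N - I)) (t := u / σ) h0 h1 (by positivity)
    (by positivity) ?_ ?_ ?_ ?_ ?_ (by positivity) ?_ ?_ rfl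
  · rw [dn_e1 hN hy0 hNy, dn_e2 hN (by linarith) hNy, dn_e3 hN hY0 hI hNY, ← mul_add]
    have hpos : 0 < 2 + D / (N * y) - D / (N * (1 - y)) + 1 / (N * (1 - y)) := by
      have : D / (N * (1 - y)) ≤ 1 := by rw [div_le_one hny1]; linarith
      have : 0 ≤ D / (N * y) := by positivity
      have : 0 ≤ 1 / (N * (1 - y)) := by positivity
      linarith
    have hP0 : 0 ≤ Di / (N * Y) := by positivity
    have e : 1 + D / (N * y) + (1 - D / (N * (1 - y)) + 1 / (N * (1 - y))) = 2 + D / (N * y) - D / (N * (1 - y)) + 1 / (N * (1 - y)) := by ring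
    rw [e]
    exact dn_fin hN hP0 hpos key
  · exact dn_t hN hI hNI hσ hs
  · rw [le_div_iff₀ hnY]
    have : (1 - η) * (u * σ / I) * (N * Y) ≤ (1 - η) * (u * σ / I) * I :=
      mul_le_mul_of_nonneg_left (by linarith) (mul_nonneg (by linarith) (by positivity))
    have e : (1 - η) * (u * σ / I) * I = (1 - η) * (u * σ) := by field_simp
    linarith
  · rw [div_le_iff₀ hny]
    have h2 : (1 - η / 100) * ((1 - η) * I) ≤ N * y := by
      have : (1 - η / 100) * ((1 - η) * I) ≤ (1 - η / 100) * Lr := mul_le_mul_of_nonneg_left hL2 (by linarith)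
      linarith
    have h3 : (1 + 5 * η) * (u * σ / I) * ((1 - η / 100) * ((1 - η) * I)) ≤ (1 + 5 * η) * (u * σ / I) * (N * y) :=
      mul_le_mul_of_nonneg_left h2 (by positivity)
    have e : (1 + 5 * η) * (u * σ / I) * ((1 - η / 100) * ((1 - η) * I)) = (1 + 5 * η) * (1 - η / 100) * (1 - η) * (u * σ) := by
      field_simp
    have h4 : (1 + η) * (1 + η) ≤ (1 + 5 * η) * (1 - η / 100) * (1 - η) := by nlinarith [sq_nonneg η, mul_nonneg h0.le (sq_nonneg η)]
    have h5 := mul_le_mul_of_nonneg_right h4 hκ.le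
    linarith
  · rw [le_div_iff₀ hny1]
    have h2 : N * (1 - y) ≤ (1 + η / 100) * ((1 + η) * (N - I)) := by
      have : (1 + η / 100) * (N - Lr) ≤ (1 + η / 100) * ((1 + η) * (N - I)) := mul_le_mul_of_nonneg_left hL3 (by linarith)
      linarith
    have h3 : (1 - 4 * η) * (u * σ / (N - I)) * (N * (1 - y)) ≤ (1 - 4 * η) * (u * σ / (N - I)) * ((1 + η / 100) * ((1 + η) * (N - I))) :=
      mul_le_mul_of_nonneg_left h2 (mul_nonneg (by linarith) (by positivity))
    have e : (1 - 4 * η) * (u * σ / (N - I)) * ((1 + η / 100) * ((1 + η) * (N - I))) = (1 - 4 * η) * (1 + η / 100) * (1 + η) * (u * σ) := by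
      field_simp
    have h4 : (1 - 4 * η) * (1 + η / 100) * (1 + η) ≤ (1 - η) * (1 - η) := by nlinarith [sq_nonneg η, mul_nonneg h0.le (sq_nonneg η)]
    have h5 := mul_le_mul_of_nonneg_right h4 hκ.le
    linarith
  · rw [div_le_iff₀ hny1]
    have : η * (u * σ / (N - I)) * (N - I) ≤ η * (u * σ / (N - I)) * (N * (1 - y)) :=
      mul_le_mul_of_nonneg_left (by linarith) (by positivity)
    have e : η * (u * σ / (N - I)) * (N - I) = η * (u * σ) := by field_simp
    linarith
  · rw [div_le_iff₀ hny, hNy]; nlinarith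
  · rw [div_le_iff₀ hny1, hN1]; nlinarith

namespace QC
variable {n : ℕ} {p : ℝ} {c : ℕ → ℝ} {ε u σ : ℝ} {j : ℕ}

lemma usig (hs : Std ε u p) (hi : Idx n j u σ) : 80000 * u ≤ ε * σ := by
  have := hi.es hs; have := hs.hu; nlinarith

lemma sigpos (hs : Std ε u p) (hi : Idx n j u σ) : 0 < σ := by
  have := hi.sbig hs.hu; have := hs.hu; linarith

lemma uss (hs : Std ε u p) (hi : Idx n j u σ) : 80000 * (u * σ) ≤ ε * σ ^ 2 := by
  have := usig hs hi; have := sigpos hs hi; nlinarith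

lemma Dsmall (h : QC n p c) (hs : Std ε u p) (hi : Idx n j u σ) : j - n * c j ≤ ε / 1000 * σ ^ 2 := by
  have h1 := h.Dupper hs hi
  have h2 := uss hs hi
  have := sigpos hs hi; have := hs.hu; have := hs.e0; have := hs.e1
  have h3 : (1 + ε) * u * σ ≤ 2 * (u * σ) := by
    have : 0 ≤ u * σ := by positivity
    nlinarith
  have : 0 ≤ ε * σ ^ 2 := by positivity
  linarith

lemma Dnn (h : QC n p c) (hs : Std ε u p) (hi : Idx n j u σ) : n * c j ≤ j := by
  have h1 := h.Dlower hs hi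
  have := sigpos hs hi; have := hs.hu; have := hs.e0; have := hs.e1
  have : 0 ≤ (1 - ε) * u * σ := mul_nonneg (mul_nonneg (by linarith) (by linarith)) (by linarith)
  linarith

lemma tau_bounds {l i : ℕ} {σ τ η : ℝ} (h0 : 0 < η) (h1 : η ≤ 1/40) (hs : Std ε u p) (hi : Idx n i u σ) (hl : Idx n l u τ) (hli : l ≤ i)
    (hm : (i:ℝ) - l ≤ η * σ ^ 2) : (1 - η) * (i:ℝ) ≤ l ∧ (n:ℝ) - l ≤ (1 + η) * (n - i) ∧ (1 - η) * σ ≤ τ ∧ τ ≤ (1 + η) * σ := by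
  have hli' : (l:ℝ) ≤ i := by exact_mod_cast hli
  have a1 := hi.sj
  have a2 := hi.snj
  have a3 := hi.npos
  have a4 := hi.jlt
  have a5 := hi.jpos
  have a6 := hl.jlt
  have b1 : (1 - η) * (i:ℝ) ≤ l := by nlinarith
  have b2 : (n:ℝ) - l ≤ (1 + η) * (n - i) := by nlinarith
  have s1 := sigpos hs hi
  have s2 := sigpos hs hl
  refine ⟨b1, b2, ?_, ?_⟩
  · apply (pow_le_pow_iff_left₀ (mul_nonneg (by linarith) s1.le) s2.le two_ne_zero).1
    have : (1 - η) * σ ^ 2 ≤ τ ^ 2 := by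
      rw [hi.s2, hl.s2, mul_div_assoc', div_le_div_iff_of_pos_right a3]
      have : (1 - η) * i * (n - i) ≤ l * (n - i) := mul_le_mul_of_nonneg_right b1 (by linarith)
      have : (l:ℝ) * (n - i) ≤ l * (n - l) := mul_le_mul_of_nonneg_left (by linarith) (by linarith [hl.jpos])
      linarith
    have : 0 ≤ η * (1 - η) * σ ^ 2 := mul_nonneg (mul_nonneg h0.le (by linarith)) (by positivity)
    nlinarith
  · apply (pow_le_pow_iff_left₀ s2.le (by positivity) two_ne_zero).1
    have : τ ^ 2 ≤ (1 + η) * σ ^ 2 := by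
      rw [hi.s2, hl.s2, mul_div_assoc', div_le_div_iff_of_pos_right a3]
      have : (l:ℝ) * (n - l) ≤ i * (n - l) := mul_le_mul_of_nonneg_right hli' (by linarith)
      have : (i:ℝ) * (n - l) ≤ i * ((1 + η) * (n - i)) := mul_le_mul_of_nonneg_left b2 a5.le
      linarith
    have : 0 ≤ η * (1 + η) * σ ^ 2 := by positivity
    nlinarith

lemma drift_inc (h : QC n p c) (hs : Std ε u p) {l i : ℕ} {σ τ η : ℝ} (hε : ε ≤ η) (h1 : η ≤ 1/40) (hi : Idx n i u σ)
    (hl : Idx n l u τ) (hli : l < i) (hm : (i:ℝ) - l ≤ η * σ ^ 2) :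
    (1 + (1 - 9 * η) * (u / σ) / 2) * (c i / i) ≤ c (l + 1) - c l := by
  have e0 := hs.e0
  have hu := hs.hu
  have h0 : 0 < η := by linarith
  have s1 := sigpos hs hi
  have s2 := sigpos hs hl
  have hin := hi.jn
  obtain ⟨b1, b2, b3, b4⟩ := tau_bounds h0 h1 hs hi hl hli.le hm
  have q := quantile_step (n := n) (l := l) (y := c l) (y' := c (l+1)) (p := p) hl.j1 hl.jn (h.pos l hl.j1 hl.jn.le)
    (h.lt1 l hl.j1 hl.jn.le) (h.pos _ (by omega) (by omega)) (h.lt1 _ (by omega) (by omega)) (h.eq l hl.j1 hl.jn.le)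
    (h.eq _ (by omega) (by omega)) (h.Dnn hs hl)
  refine le_trans ?_ q
  have hD := h.Dsmall hs hl
  have hus := usig hs hi
  have hus2 := usig hs hl
  have huτ : 0 ≤ u * τ := by positivity
  have huσ : 0 ≤ u * σ := by positivity
  have hτ2 : 0 ≤ τ ^ 2 := by positivity
  apply drift_num (D := l - n * c l) (Di := i - n * c i) (τ := τ) h0 h1 hi.jpos hi.jlt (h.pos l hl.j1 hl.jn.le) (h.lt1 l hl.j1 hl.jn.le)
    (h.pos i hi.j1 hi.jn.le) (by ring) (by ring) (by linarith) s1 _ _ _ _ _ (by exact_mod_cast hli.le) b1 b2 b3 b4 hi.s2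
  · have : ε * u * σ = ε * (u * σ) := by ring
    have hηu : 1 ≤ η * u := by nlinarith [hs.u1]
    have hσ1 : 1 ≤ σ := by nlinarith [hs.e1]
    nlinarith
  · have h3 := hl.snj
    have hηu : 1 ≤ η * u := by nlinarith [hs.u1]
    have hσ1 : u ≤ τ := by nlinarith [hs.e1]
    nlinarith
  · have := h.Dlower hs hi
    have : (1 - η) * (u * σ) ≤ (1 - ε) * (u * σ) := mul_le_mul_of_nonneg_right (by linarith) huσ
    linarith
  · have := h.Dlower hs hl
    have : (1 - η) * (u * τ) ≤ (1 - ε) * (u * τ) := mul_le_mul_of_nonneg_right (by linarith) huτ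
    linarith
  · have := h.Dupper hs hl
    have : (1 + ε) * (u * τ) ≤ (1 + η) * (u * τ) := mul_le_mul_of_nonneg_right (by linarith) huτ
    linarith
  · refine hD.trans ?_
    have := hl.sj
    have := hl.jpos
    nlinarith
  · refine hD.trans ?_
    have := hl.snj
    have := hl.jlt
    nlinarith

lemma drift (h : QC n p c) (hs : Std ε u p) {j i : ℕ} {η : ℝ} {σ : ℕ → ℝ} (hε : ε ≤ η) (h1 : η ≤ 1/40)
    (hI : ∀ l, j ≤ l → l ≤ i → Idx n l u (σ l)) (hji : j ≤ i) (hm : (i:ℝ) - j ≤ η * σ i ^ 2) :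
    ((i:ℝ) - j) * (1 + (1 - 9 * η) * (u / σ i) / 2) ≤ i * (1 - c j / c i) := by
  have hi := hI i hji le_rfl
  have hci := h.pos i hi.j1 hi.jn.le
  have key : ∀ m : ℕ, j + m ≤ i → (1 + (1 - 9 * η) * (u / σ i) / 2) * (c i / i) * m ≤ c (j + m) - c j := by
    intro m
    induction m with
    | zero => intro _; simp
    | succ m ih =>
      intro hm2
      have := ih (by omega)
      have hm3 : (i:ℝ) - ((j + m : ℕ) : ℝ) ≤ η * σ i ^ 2 := by
        have : (0:ℝ) ≤ m := by positivity
        push_cast; linarith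
      have := h.drift_inc hs hε h1 hi (hI (j + m) (by omega) (by omega)) (by omega) hm3
      rw [← add_assoc]
      push_cast
      linarith
  have := key (i - j) (by omega)
  rw [Nat.add_sub_cancel' hji, Nat.cast_sub hji] at this
  have e : (i:ℝ) * (1 - c j / c i) = (c i - c j) * (i / c i) := by field_simp
  have hip := hi.jpos
  rw [e]
  have h2 := mul_le_mul_of_nonneg_right this (show 0 ≤ (i:ℝ) / c i by positivity)
  refine le_trans (le_of_eq ?_) h2
  field_simp

end QC

end BerkJonesPartH

section BerkJonesPartI
open MeasureTheory Filter Set ProbabilityTheory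
set_option linter.all false

lemma bT_refl {i j : ℕ} (q : ℝ) (hji : j ≤ i) : bT i q j = ∑ k ∈ Finset.range (i - j + 1), bp i (1 - q) k := by
  unfold bT
  apply Finset.sum_nbij' (fun k => i - k) (fun k => i - k)
  · intro k hk; simp at hk ⊢; omega
  · intro k hk; simp at hk ⊢; omega
  · intro k hk; simp at hk ⊢; omega
  · intro k hk; simp at hk ⊢; omega
  · intro k hk
    simp at hk
    unfold bp
    rw [Nat.choose_symm hk.2, Nat.sub_sub_self hk.2]
    ring

lemma near_pois {i j : ℕ} {q θ : ℝ} (hj : 1 ≤ j) (hji : j ≤ i) (h0 : 0 ≤ q) (h1 : q ≤ 1) (hθ : 0 ≤ θ)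
    (hd : ((i:ℝ) - j) * (1 + θ) ≤ i * (1 - q)) :
    bT i q j ≤ (i:ℝ) / j * pL (((i - j : ℕ) : ℝ) * (1 + θ)) (i - j) := by
  have hip : (0:ℝ) < i := by exact_mod_cast (by omega : 0 < i)
  have hjp : (0:ℝ) < j := by exact_mod_cast (by omega : 0 < j)
  have hji' : (j:ℝ) ≤ i := by exact_mod_cast hji
  set b := ((i:ℝ) - j) * (1 + θ) with hb
  have hb0 : 0 ≤ b := mul_nonneg (by linarith) (by linarith)
  have hbi : b ≤ i := by nlinarith
  have e1 : ((i - j : ℕ) : ℝ) * (1 + θ) = b := by rw [Nat.cast_sub hji]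
  rw [e1]
  have h2 : q ≤ 1 - b / i := by
    rw [le_sub_iff_add_le, ← le_sub_iff_add_le', div_le_iff₀ hip]; linarith
  refine (bT_mono_q i j h0 h2 (by have : 0 ≤ b / i := by positivity
                                  linarith)).trans ?_
  rw [bT_refl _ hji, pL, Finset.mul_sum]
  apply Finset.sum_le_sum
  intro k hk
  simp at hk
  have hki : k < i := by omega
  have := bp_le_poisson (q := b / i) hki (by positivity) ((div_le_one hip).2 hbi)
  rw [sub_sub_cancel]
  refine this.trans ?_
  have e2 : (i:ℝ) * (b / i) = b := by field_simp
  rw [e2]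
  apply mul_le_mul_of_nonneg_right _ (pw_nonneg hb0 k)
  have : (k:ℝ) + j ≤ i := by exact_mod_cast (by omega : k + j ≤ i)
  gcongr
  linarith

namespace QC
variable {n : ℕ} {p : ℝ} {c : ℕ → ℝ} {ε u : ℝ} {i j : ℕ} {σ τ η : ℝ}

/-- gap of the thinned binomial -/
lemma gap_eq (h : QC n p c) (hi : Idx n i u σ) :
    (j:ℝ) - i * (c j / c i) = ((j - n * c j) - j / i * (i - n * c i)) * (i / (n * c i)) := by
  have := h.pos i hi.j1 hi.jn.le
  have := hi.jpos
  have := hi.npos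
  field_simp; ring

/-- `ρ σ_j = (j/i) σ_i`. -/
lemma rho_sq (hi : Idx n i u σ) (hj : Idx n j u τ) : ((j:ℝ) / i * σ) ^ 2 = (j * (n - i) / (i * (n - j))) * τ ^ 2 := by
  have := hi.jpos
  have := hi.npos
  have : (0:ℝ) < n - j := by linarith [hj.jlt]
  rw [mul_pow, hi.s2, hj.s2]; field_simp

lemma gap_lower (h : QC n p c) (hs : Std ε u p) (hi : Idx n i u σ) (hj : Idx n j u τ) {ρ g : ℝ} (hρ0 : 0 ≤ ρ)
    (hρ : (j * (n - i) / (i * (n - j)) : ℝ) ≤ ρ ^ 2) (hg : g ≤ (1 - ε) - (1 + ε) * ρ) (hg0 : 0 ≤ g) :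
    g * (u * τ) ≤ (j:ℝ) - i * (c j / c i) := by
  have e0 := hs.e0; have hu := hs.hu
  have s1 := sigpos hs hi
  have s2 := sigpos hs hj
  have ip := hi.jpos
  have hx : (j:ℝ) / i * σ ≤ ρ * τ := by
    apply (pow_le_pow_iff_left₀ (by positivity) (by positivity) two_ne_zero).1
    rw [rho_sq hi hj, mul_pow]
    exact mul_le_mul_of_nonneg_right hρ (by positivity)
  have hD1 := h.Dlower hs hj
  have hD2 := h.Dupper hs hi
  have hut : 0 < u * τ := by positivity
  have h3 : g * (u * τ) ≤ (j - n * c j) - j / i * (i - n * c i) := by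
    have h4 : (j:ℝ) / i * (i - n * c i) ≤ (j:ℝ) / i * ((1 + ε) * u * σ) := mul_le_mul_of_nonneg_left hD2 (by positivity)
    have h5 : (1 + ε) * u * ((j:ℝ) / i * σ) ≤ (1 + ε) * u * (ρ * τ) := mul_le_mul_of_nonneg_left hx (by positivity)
    have h6 := mul_le_mul_of_nonneg_right hg hut.le
    nlinarith
  rw [h.gap_eq hi]
  have hc := h.pos i hi.j1 hi.jn.le
  have h7 : 1 ≤ (i:ℝ) / (n * c i) := by
    rw [one_le_div (mul_pos hi.npos hc)]; exact h.Dnn hs hi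
  have h8 : 0 ≤ g * (u * τ) := by positivity
  nlinarith

lemma var_le (h : QC n p c) (hs : Std ε u p) (hj : Idx n j u τ) : n * c j * (1 - c j) ≤ 2 * τ ^ 2 ∧ (1 - c j) ≤ 2 * (n - j) / n := by
  have h1 := h.Dnn hs hj
  have h2 := h.Dsmall hs hj
  have h3 := hj.snj
  have e1 := hs.e1
  have np := hj.npos
  have h4 : 1 - c j ≤ 2 * (n - j) / n := by
    rw [le_div_iff₀ np]; nlinarith [hj.jlt]
  refine ⟨?_, h4⟩
  have h5 := h.lt1 j hj.j1 hj.jn.le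
  have h6 : n * c j * (1 - c j) ≤ j * (1 - c j) := mul_le_mul_of_nonneg_right h1 (by linarith)
  have h7 : j * (1 - c j) ≤ j * (2 * (n - j) / n) := mul_le_mul_of_nonneg_left h4 hj.jpos.le
  have : (j:ℝ) * (2 * (n - j) / n) = 2 * τ ^ 2 := by rw [hj.s2]; ring
  linarith

lemma mid_num {η u τ l gap V : ℝ} (h0 : 0 < η) (h1 : η ≤ 1/40) (hu : 0 < u) (hτ : u ≤ τ) (hg : η / 8 * (u * τ) ≤ gap) (hV : V ≤ 2 * τ ^ 2)
    (hl : l = u * η / (32 * τ)) : -(l * gap) + V * l ^ 2 * (1 + l) / 2 ≤ -(η ^ 2 * u ^ 2 / 512) := by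
  have hτ0 : 0 < τ := by linarith
  have hl0 : 0 ≤ l := by rw [hl]; positivity
  have hl1 : l ≤ 1 := by rw [hl, div_le_one (by positivity)]; nlinarith
  have h2 : l * (η / 8 * (u * τ)) ≤ l * gap := mul_le_mul_of_nonneg_left hg hl0
  have e2 : l * (η / 8 * (u * τ)) = η ^ 2 * u ^ 2 / 256 := by rw [hl]; field_simp; norm_num
  have h3 : V * (l ^ 2 * (1 + l) / 2) ≤ 2 * τ ^ 2 * (l ^ 2 * (1 + l) / 2) := mul_le_mul_of_nonneg_right hV (by positivity)
  have e3 : τ ^ 2 * l ^ 2 = u ^ 2 * η ^ 2 / 1024 := by rw [hl]; field_simp; norm_num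
  have h4 : τ ^ 2 * l ^ 2 * (1 + l) ≤ τ ^ 2 * l ^ 2 * 2 := mul_le_mul_of_nonneg_left (by linarith) (by positivity)
  nlinarith

lemma rho_mid_num {N I J η V : ℝ} (h0 : 0 < η) (h1 : η ≤ 1/40) (hJ : 0 < J) (hIN : I < N) (hJI : J ≤ I) (hV : V = I * (N - I) / N) (hm : η * V ≤ I - J) :
    J * (N - I) / (I * (N - J)) ≤ (1 - η / 4) ^ 2 := by
  have hI : 0 < I := by linarith
  have hN : 0 < N := by linarith
  have hNI : 0 < N - I := by linarith
  rw [div_le_iff₀ (mul_pos hI (by linarith))]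
  have h2 : η * (I * (N - I)) ≤ (I - J) * N := by
    rw [hV, mul_div_assoc', div_le_iff₀ hN] at hm; linarith
  have h3 : 1 - η / 2 ≤ (1 - η / 4) ^ 2 := by nlinarith
  have h4 : (1 - η / 2) * (I * (N - J)) ≤ (1 - η / 4) ^ 2 * (I * (N - J)) :=
    mul_le_mul_of_nonneg_right h3 (mul_nonneg hI.le (by linarith))
  refine le_trans ?_ h4
  -- need (η/2) I (N-J) ≤ N (I-J)
  have h5 : I * (I - J) ≤ N * (I - J) := mul_le_mul_of_nonneg_right hIN.le (by linarith)
  have h6 : η * (I * (I - J)) ≤ 1 / 2 * (N * (I - J)) := by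
    have : 0 ≤ I * (I - J) := mul_nonneg hI.le (by linarith)
    nlinarith
  nlinarith

lemma mid (h : QC n p c) (hs : Std ε u p) (hi : Idx n i u σ) (hj : Idx n j u τ) (hji : j ≤ i) (h0 : 0 < η) (h1 : η ≤ 1/40)
    (hε : ε ≤ η / 20) (hm : η * σ ^ 2 ≤ (i:ℝ) - j) : bT i (c j / c i) j ≤ Real.exp (-(η ^ 2 * u ^ 2 / 512)) := by
  have hu := hs.hu
  have e0 := hs.e0
  obtain ⟨hq0, hq1⟩ := h.ratio_mem hj.j1 hji hi.jn.le
  have hji' : (j:ℝ) ≤ i := by exact_mod_cast hji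
  have hρ := rho_mid_num h0 h1 hj.jpos hi.jlt hji' hi.s2 hm
  have hgap := h.gap_lower hs hi hj (g := η / 8) (by linarith) hρ (by nlinarith) (by linarith)
  have hsb := hj.sbig hu
  have s2 := sigpos hs hj
  have hl1 : u * η / (32 * τ) ≤ 1 := by rw [div_le_one (by positivity)]; nlinarith
  refine (bernstein_tail (l := u * η / (32 * τ)) j hq0.le hq1 (by positivity) hl1).trans ?_
  apply Real.exp_le_exp.2
  apply mid_num h0 h1 (by linarith) (by linarith) hgap _ rfl
  have hiq : i * (c j / c i) ≤ j := by
    have : 0 ≤ η / 8 * (u * τ) := by positivity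
    linarith
  have hci := h.lt1 i hi.j1 hi.jn.le
  have hci0 := h.pos i hi.j1 hi.jn.le
  have hcj0 := h.pos j hj.j1 hj.jn.le
  have h3 : 1 - c j / c i ≤ 1 - c j := by
    have : c j ≤ c j / c i := by rw [le_div_iff₀ hci0]; nlinarith
    linarith
  have h4 := (h.var_le hs hj).2
  calc i * (c j / c i) * (1 - c j / c i) ≤ j * (1 - c j / c i) := mul_le_mul_of_nonneg_right hiq (by linarith)
    _ ≤ j * (2 * (n - j) / n) := mul_le_mul_of_nonneg_left (by linarith) hj.jpos.le
    _ = 2 * τ ^ 2 := by rw [hj.s2]; ring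

end QC

end BerkJonesPartI

section BerkJonesPartJ
open MeasureTheory Filter Set ProbabilityTheory
set_option linter.all false

lemma e98 {ε u σ : ℝ} (e1 : ε ≤ 1/8) (h : 0 ≤ u * σ) : (1 + ε) * u * σ ≤ 9 / 8 * (u * σ) := by nlinarith
lemma rs_num {u ρ δ : ℝ} (hu : 800 ≤ u) (d1 : δ ≤ 1) (h0 : 0 ≤ ρ) (h : 2000 * u ^ 2 * ρ ≤ δ) : ρ ≤ 1 / 2000 := by
  have : 1 ≤ u ^ 2 := by nlinarith
  have := mul_le_mul_of_nonneg_right this h0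
  linarith
lemma hle_num {u τ : ℝ} (hu : 800 ≤ u) (h : 0 ≤ τ) : τ ≤ u * τ * (16 * u) := by
  have : 1 ≤ u * (16 * u) := by nlinarith
  have := mul_le_mul_of_nonneg_right this h
  linarith
lemma far_fin {δ u B0 p T E : ℝ} (d0 : 0 < δ) (d1 : δ ≤ 1) (hu : 0 < u) (hd : 16 ≤ δ * u ^ 2) (hB0 : 0 ≤ B0)
    (hp : (1 - 2 / u ^ 2) * B0 ≤ p) (hE : E ≤ 26 / 100 * δ) (hT : T ≤ Real.exp E * B0) : T ≤ (1 + δ) * p := by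
  have h1 : 2 / u ^ 2 ≤ δ / 8 := by rw [div_le_iff₀ (by positivity)]; linarith
  have h2 : Real.exp E ≤ 1 / (1 - 26 / 100 * δ) := by
    have h3 : Real.exp E ≤ Real.exp (26 / 100 * δ) := Real.exp_le_exp.2 hE
    have h4 := Real.add_one_le_exp (-(26 / 100 * δ))
    rw [Real.exp_neg] at h4
    refine h3.trans ?_
    rw [le_div_iff₀ (by linarith)]
    have h5 := Real.exp_pos (26 / 100 * δ)
    have : Real.exp (26 / 100 * δ) * (-(26 / 100 * δ) + 1) ≤ Real.exp (26 / 100 * δ) * (Real.exp (26 / 100 * δ))⁻¹ := mul_le_mul_of_nonneg_left h4 h5.le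
    rw [mul_inv_cancel₀ h5.ne'] at this
    linarith
  have h6 : (1 - δ / 8) * B0 ≤ p := le_trans (mul_le_mul_of_nonneg_right (by linarith) hB0) hp
  have h7 : 1 / (1 - 26 / 100 * δ) ≤ (1 + δ) * (1 - δ / 8) := by
    rw [div_le_iff₀ (by linarith)]
    have : 0 ≤ δ * (1 - δ) := mul_nonneg d0.le (by linarith)
    nlinarith [mul_nonneg d0.le this, mul_nonneg d0.le d0.le]
  calc T ≤ Real.exp E * B0 := hT
    _ ≤ ((1 + δ) * (1 - δ / 8)) * B0 := mul_le_mul_of_nonneg_right (h2.trans h7) hB0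
    _ = (1 + δ) * ((1 - δ / 8) * B0) := by ring
    _ ≤ (1 + δ) * p := mul_le_mul_of_nonneg_left h6 (by linarith)

lemma far_j1q {N I J q V : ℝ} (hJ : 0 < J) (hJI : J ≤ I) (hIN : I < N) (hq : q ≤ J / I) (hV : V = J * (N - J) / N)
    (hr : J * (N - I) / (I * (N - J)) ≤ 1 / 2) : V / 2 ≤ J * (1 - q) := by
  have hI : 0 < I := by linarith
  have hN : 0 < N := by linarith
  rw [div_le_iff₀ (mul_pos hI (by linarith))] at hr
  have h1 : J * (1 - J / I) ≤ J * (1 - q) := mul_le_mul_of_nonneg_left (by linarith) hJ.le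
  refine le_trans ?_ h1
  rw [hV, div_div, div_le_iff₀ (by positivity)]
  have e : J * (1 - J / I) * (N * 2) = J * (2 * N * (I - J) / I) := by field_simp
  rw [e]
  apply mul_le_mul_of_nonneg_left _ hJ.le
  rw [le_div_iff₀ hI]
  nlinarith

namespace QC
variable {n : ℕ} {p : ℝ} {c : ℕ → ℝ} {ε u : ℝ} {i j : ℕ} {σ τ η δ ρ : ℝ}

set_option maxHeartbeats 1000000 in
lemma far (h : QC n p c) (hs : Std ε u p) (hi : Idx n i u σ) (hj : Idx n j u τ) (hji : j ≤ i) (d0 : 0 < δ) (d1 : δ ≤ 1)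
    (hd : 16 ≤ δ * u ^ 2) (hρ0 : 0 ≤ ρ)
    (hρ : (j * (n - i) / (i * (n - j)) : ℝ) ≤ ρ ^ 2) (hρ1 : 2000 * u ^ 2 * ρ ≤ δ) (m : ℕ) (hm : (m:ℝ) ≤ i + 5 * (u * σ)) :
    bT m (c j / c i) j ≤ (1 + δ) * p := by
  have e0 := hs.e0; have e1 := hs.e1; have hu := hs.hu
  have s1 := sigpos hs hi
  have s2 := sigpos hs hj
  have sb1 := hi.sbig hu
  have sb2 := hj.sbig hu
  have ip := hi.jpos
  have jp := hj.jpos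
  have np := hi.npos
  have hji' : (j:ℝ) ≤ i := by exact_mod_cast hji
  obtain ⟨hq0, hq1⟩ := h.ratio_mem hj.j1 hji hi.jn.le
  set q := c j / c i with hq
  have hci := h.pos i hi.j1 hi.jn.le
  have hut : 0 < u * τ := by positivity
  have hus : 0 < u * σ := by positivity
  have hρs : ρ ≤ 1 / 2000 := rs_num hu d1 hρ0 hρ1
  have hρ2 : ρ ^ 2 ≤ 1 / 2 := by nlinarith
  have gap := h.gap_lower hs hi hj (g := 1/2) hρ0 hρ (by nlinarith) (by norm_num)
  rw [← hq] at gap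
  have hqi : q ≤ j / i := by rw [le_div_iff₀ ip]; linarith
  have hqlt : q < 1 := by
    have : i * q < i * 1 := by linarith
    exact lt_of_mul_lt_mul_left this ip.le
  have hx : (j:ℝ) / i * σ ≤ ρ * τ := by
    apply (pow_le_pow_iff_left₀ (by positivity) (by positivity) two_ne_zero).1
    rw [rho_sq hi hj, mul_pow]
    exact mul_le_mul_of_nonneg_right hρ (by positivity)
  have hqs : q * σ ≤ ρ * τ := le_trans (mul_le_mul_of_nonneg_right hqi s1.le) hx
  have hDi := h.Dsmall hs hi
  have hDi2 := h.Dupper hs hi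
  have hDj := h.Dupper hs hj
  have hnn := h.Dnn hs hi
  have hss := uss hs hi
  have hisj := hi.sj
  have hDi3 : (i:ℝ) - n * c i ≤ 9 / 8 * (u * σ) := hDi2.trans (e98 e1 hus.le)
  have hDj3 : (j:ℝ) - n * c j ≤ 9 / 8 * (u * τ) := hDj.trans (e98 e1 hut.le)
  have hε2 : ε * σ ^ 2 ≤ 1 / 8 * σ ^ 2 := mul_le_mul_of_nonneg_right e1 (by positivity)
  -- m0
  set m0 := ⌊n * c i - u * σ⌋₊ with hm0
  have hpos0 : 0 ≤ n * c i - u * σ := by linarith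
  have hm0a : (m0:ℝ) ≤ n * c i - u * σ := Nat.floor_le hpos0
  have hm0b : n * c i - u * σ < m0 + 1 := Nat.lt_floor_add_one _
  have hus1 : 1 ≤ u * σ := one_le_mul_of_one_le_of_one_le (by linarith) (by linarith)
  have hm0c : (i:ℝ) - 3.125 * (u * σ) ≤ m0 := by linarith
  have hcheb := cheb_lower (m := n) (j := m0) (q := c i) (g := u * σ) hci.le (h.lt1 i hi.j1 hi.jn.le).le hus (by linarith)
  have hvar := (h.var_le hs hi).1
  have hcheb2 : 1 - 2 / u ^ 2 ≤ bT n (c i) m0 := by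
    refine le_trans ?_ hcheb
    have : n * c i * (1 - c i) / (u * σ) ^ 2 ≤ 2 * σ ^ 2 / (u * σ) ^ 2 := div_le_div_of_nonneg_right hvar (by positivity)
    have e : 2 * σ ^ 2 / (u * σ) ^ 2 = 2 / u ^ 2 := by field_simp
    linarith
  have hB0 := bT_nonneg (m := m0) hq0.le hq1 j
  have hthin := h.thin_lower m0 hj.j1 hji hi.jn.le
  have hp : (1 - 2 / u ^ 2) * bT m0 q j ≤ p := le_trans (mul_le_mul_of_nonneg_right hcheb2 hB0) hthin
  -- h
  set H := ⌊τ / (16 * u)⌋₊ with hH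
  have hHa : (H:ℝ) ≤ τ / (16 * u) := Nat.floor_le (by positivity)
  have hHb : τ / (16 * u) < H + 1 := Nat.lt_floor_add_one _
  have hH2 : 2 ≤ τ / (16 * u) := by rw [le_div_iff₀ (by positivity)]; linarith
  have hHc : τ / (32 * u) ≤ H := by
    have : τ / (32 * u) = τ / (16 * u) / 2 := by field_simp; norm_num
    linarith
  have hH1 : 1 ≤ H := by
    have : (0:ℝ) < H := by linarith
    exact_mod_cast this
  have hHle : (H:ℝ) ≤ u * τ := by
    refine hHa.trans ?_
    rw [div_le_iff₀ (by positivity)]; exact hle_num hu s2.le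
  have hV := far_j1q jp hji' hi.jlt hqi hj.s2 (hρ.trans hρ2)
  have hXj : 4 * (u * τ) ≤ 8 * u / τ * (j * (1 - q)) := by
    have : 8 * u / τ * (τ ^ 2 / 2) ≤ 8 * u / τ * (j * (1 - q)) := mul_le_mul_of_nonneg_left hV (by positivity)
    have e : 8 * u / τ * (τ ^ 2 / 2) = 4 * (u * τ) := by field_simp; norm_num
    linarith
  have hgu : (j:ℝ) - i * q ≤ 1.3 * (u * τ) := by
    rw [hq, h.gap_eq hi]
    have hA : (i:ℝ) / (n * c i) ≤ 1.1 := by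
      rw [div_le_iff₀ (by positivity)]; linarith
    have hB : (j - n * c j) - j / i * (i - n * c i) ≤ 9 / 8 * (u * τ) := by
      have : 0 ≤ (j:ℝ) / i * (i - n * c i) := mul_nonneg (by positivity) (by linarith)
      linarith
    calc _ ≤ 9 / 8 * (u * τ) * (i / (n * c i)) := mul_le_mul_of_nonneg_right hB (by positivity)
      _ ≤ 9 / 8 * (u * τ) * 1.1 := mul_le_mul_of_nonneg_left hA (by positivity)
      _ ≤ _ := by linarith
  have hqm : q * (i - m0) ≤ u * τ := by
    have h1 : q * (i - m0) ≤ q * (3.125 * (u * σ)) := mul_le_mul_of_nonneg_left (by linarith) hq0.le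
    have h2 : q * (3.125 * (u * σ)) = 3.125 * u * (q * σ) := by ring
    have h3 : 3.125 * u * (q * σ) ≤ 3.125 * u * (ρ * τ) := mul_le_mul_of_nonneg_left hqs (by positivity)
    have h4 : ρ * (u * τ) ≤ 1 / 2000 * (u * τ) := mul_le_mul_of_nonneg_right hρs hut.le
    linarith
  have hm' : m0 ≤ max m m0 := le_max_right _ _
  have hfar := far_ratio (m0 := m0) (m := max m m0) (j := j) (h := H) (q := q) (X := 8 * u / τ) hq0.le hqlt hj.j1 hH1 (by positivity)
    (by rw [div_le_one s2]; linarith)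
    (by
      have : H * (8 * u / τ) ≤ τ / (16 * u) * (8 * u / τ) := mul_le_mul_of_nonneg_right hHa (by positivity)
      have e : τ / (16 * u) * (8 * u / τ) = 1 / 2 := by field_simp; norm_num
      linarith) hm' (by linarith)
  have hmm : ((max m m0 : ℕ) : ℝ) ≤ i + 5 * (u * σ) := by
    rw [Nat.cast_max]; exact max_le hm (by linarith)
  have hT : bT m q j ≤ bT (max m m0) q j := bT_mono_left hq0.le hq1 j (le_max_left _ _)
  refine far_fin d0 d1 (by linarith) hd hB0 hp ?_ (hT.trans hfar)
  have hHp : (0:ℝ) < H := by exact_mod_cast hH1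
  have hdif : ((max m m0 : ℕ) : ℝ) - m0 ≤ 8.125 * (u * σ) := by linarith
  have h1 : 2 * q / H * ((max m m0 : ℕ) - m0) ≤ 2 * q / H * (8.125 * (u * σ)) := mul_le_mul_of_nonneg_left hdif (by positivity)
  have h2 : 1 / (H:ℝ) ≤ 32 * u / τ := by
    rw [div_le_iff₀ hHp]
    have : 32 * u / τ * (τ / (32 * u)) ≤ 32 * u / τ * H := mul_le_mul_of_nonneg_left hHc (by positivity)
    have e : 32 * u / τ * (τ / (32 * u)) = 1 := by field_simp
    linarith
  have h3 : 2 * q / H * (8.125 * (u * σ)) = 16.25 * u * (q * σ) * (1 / H) := by ring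
  have h4 : 16.25 * u * (q * σ) * (1 / H) ≤ 16.25 * u * (ρ * τ) * (32 * u / τ) := by
    apply mul_le_mul _ h2 (by positivity) (by positivity)
    exact mul_le_mul_of_nonneg_left hqs (by positivity)
  have h5 : 16.25 * u * (ρ * τ) * (32 * u / τ) = 520 * u ^ 2 * ρ := by field_simp; norm_num; ring
  linarith

lemma last_small (h : QC n p c) (hs : Std ε u p) (hi : Idx n i u σ) (hj : Idx n j u τ) (hji : j ≤ i) (d0 : 0 < δ) (d1 : δ ≤ 1)
    (hd : 16 ≤ δ * u ^ 2) (hρ0 : 0 ≤ ρ)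
    (hρ : (j * (n - i) / (i * (n - j)) : ℝ) ≤ ρ ^ 2) (hρ1 : 2000 * u ^ 2 * ρ ≤ δ) :
    (nullMeasure n).real {w | i ≤ cnt (c i) w ∧ j ≤ cnt (c j) w} ≤ 2 * δ * p := by
  have e0 := hs.e0; have e1 := hs.e1; have hu := hs.hu
  have s1 := sigpos hs hi
  have sb1 := hi.sbig hu
  have hus : 0 < u * σ := by positivity
  have hus1 : 1 ≤ u * σ := one_le_mul_of_one_le_of_one_le (by linarith) (by linarith)
  have hp0 : 0 < p := lt_of_lt_of_le (Real.exp_pos _) hs.p1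
  set m := ⌈(i:ℝ) + 4 * (u * σ)⌉₊ with hm
  have hm1 : (i:ℝ) + 4 * (u * σ) ≤ m := Nat.le_ceil _
  have hm2 : (m:ℝ) < i + 4 * (u * σ) + 1 := Nat.ceil_lt_add_one (by positivity)
  have h1 := h.last_term m hj.j1 hji hi.jn.le
  have h2 := h.far hs hi hj hji d0 d1 hd hρ0 hρ hρ1 m (by linarith)
  have hl1 : u / σ ≤ 1 := by rw [div_le_one s1]; linarith
  have h3 := bernstein_tail (m := n) (q := c i) (l := u / σ) m (h.pos i hi.j1 hi.jn.le).le (h.lt1 i hi.j1 hi.jn.le).le (by positivity) hl1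
  have h4 : -(u / σ * (m - n * c i)) + n * c i * (1 - c i) * (u / σ) ^ 2 * (1 + u / σ) / 2 ≤ -(u ^ 2) + -((1 + ε / 2) * u ^ 2 / 2) := by
    have hnn := h.Dnn hs hi
    have hvar := (h.var_le hs hi).1
    have h5 : u / σ * (4 * (u * σ)) ≤ u / σ * (m - n * c i) := mul_le_mul_of_nonneg_left (by linarith) (by positivity)
    have e5 : u / σ * (4 * (u * σ)) = 4 * u ^ 2 := by field_simp
    have h6 : n * c i * (1 - c i) * ((u / σ) ^ 2 * (1 + u / σ) / 2) ≤ 2 * σ ^ 2 * ((u / σ) ^ 2 * (1 + u / σ) / 2) :=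
      mul_le_mul_of_nonneg_right hvar (by positivity)
    have e6 : 2 * σ ^ 2 * ((u / σ) ^ 2 * (1 + u / σ) / 2) = u ^ 2 * (1 + u / σ) := by field_simp
    have h7 : u ^ 2 * (1 + u / σ) ≤ u ^ 2 * 2 := mul_le_mul_of_nonneg_left (by linarith) (by positivity)
    have h8 : ε * u ^ 2 ≤ 1 / 8 * u ^ 2 := mul_le_mul_of_nonneg_right e1 (by positivity)
    nlinarith
  have h9 : bT n (c i) m ≤ Real.exp (-(u ^ 2)) * p := by
    refine h3.trans ((Real.exp_le_exp.2 h4).trans ?_)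
    rw [Real.exp_add]
    exact mul_le_mul_of_nonneg_left hs.p1 (Real.exp_pos _).le
  have hexp : ∀ t : ℝ, 0 < t → Real.exp (-t) ≤ 1 / t := by
    intro t ht
    rw [Real.exp_neg, ← one_div]
    apply one_div_le_one_div_of_le ht
    have := Real.add_one_le_exp t
    linarith
  have hup : 0 < u := by linarith
  have h10 : Real.exp (-(u ^ 2)) ≤ δ := by
    refine (hexp _ (by positivity)).trans ?_
    rw [div_le_iff₀ (by positivity)]; linarith
  have h11 : p ≤ δ / 8 := by
    refine hs.p2.trans ((hexp _ (by positivity)).trans ?_)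
    rw [div_le_iff₀ (by positivity)]; linarith
  have h12 : p * bT m (c j / c i) j ≤ p * δ := by
    apply mul_le_mul_of_nonneg_left _ hp0.le
    refine h2.trans ?_
    nlinarith
  have h13 : Real.exp (-(u ^ 2)) * p ≤ δ * p := mul_le_mul_of_nonneg_right h10 hp0.le
  linarith

end QC

end BerkJonesPartJ

section BerkJonesPartK
open MeasureTheory Filter Set ProbabilityTheory
set_option linter.all false

noncomputable def sg (n j : ℕ) : ℝ := Real.sqrt (j * (n - j) / n)
/-- logit scale -/
noncomputable def sl (n j : ℕ) : ℝ := (Real.log j - Real.log (n - j)) / 2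

/-- Standing assumptions. -/
structure Env (n a b : ℕ) (ε u p : ℝ) (c : ℕ → ℝ) : Prop where
  qc : QC n p c
  std : Std ε u p
  ab : a ≤ b
  idx : ∀ l, a ≤ l → l ≤ b → Idx n l u (sg n l)

lemma log_step {x : ℝ} (hx : 0 < x) : Real.log (x + 1) - Real.log x ≤ 1 / x := by
  rw [← Real.log_div (by linarith) hx.ne']
  have := Real.log_le_sub_one_of_pos (show 0 < (x + 1) / x by positivity)
  have e : (x + 1) / x - 1 = 1 / x := by field_simp; ring
  linarith

lemma sl_step {n j : ℕ} (h2 : 2 ≤ j) (hjn : j < n) : sl n j - sl n (j - 1) ≤ (1 / ((j:ℝ) - 1) + 1 / ((n:ℝ) - j)) / 2 := by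
  unfold sl
  have hj : (2:ℝ) ≤ j := by exact_mod_cast h2
  have hn : (j:ℝ) < n := by exact_mod_cast hjn
  rw [Nat.cast_sub (by omega : 1 ≤ j)]
  push_cast
  have h1 := log_step (x := (j:ℝ) - 1) (by linarith)
  have h3 := log_step (x := (n:ℝ) - j) (by linarith)
  rw [sub_add_cancel] at h1
  have e : (n:ℝ) - (j - 1) = n - j + 1 := by ring
  rw [e]
  linarith

lemma sl_mono {n j i : ℕ} (h1 : 1 ≤ j) (hji : j ≤ i) (hin : i < n) : sl n j ≤ sl n i := by
  unfold sl
  have hj : (1:ℝ) ≤ j := by exact_mod_cast h1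
  have hi : (j:ℝ) ≤ i := by exact_mod_cast hji
  have hn : (i:ℝ) < n := by exact_mod_cast hin
  have a1 := Real.log_le_log (by linarith) hi
  have a2 := Real.log_le_log (x := (n:ℝ) - i) (y := n - j) (by linarith) (by linarith)
  linarith

lemma sl_rho {n j i : ℕ} (h1 : 1 ≤ j) (hji : j ≤ i) (hin : i < n) :
    (j * (n - i) / (i * (n - j)) : ℝ) = Real.exp (-(sl n i - sl n j)) ^ 2 := by
  have hj : (1:ℝ) ≤ j := by exact_mod_cast h1
  have hi : (j:ℝ) ≤ i := by exact_mod_cast hji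
  have hn : (i:ℝ) < n := by exact_mod_cast hin
  rw [← Real.exp_nat_mul]
  have e : ((2:ℕ):ℝ) * -(sl n i - sl n j) = Real.log j + Real.log (n - i) - (Real.log i + Real.log (n - j)) := by
    unfold sl; push_cast; ring
  rw [e, Real.exp_sub, Real.exp_add, Real.exp_add, Real.exp_log (by linarith), Real.exp_log (by linarith), Real.exp_log (by linarith), Real.exp_log (by linarith)]

lemma nn_e6 {X Y Z u σ S : ℝ} (hX : X ≠ 0) (hY : Y ≠ 0) (hZ : Z ≠ 0) (hu : u ≠ 0) (hσ : σ ≠ 0) :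
    1 / (Y * (2 * σ ^ 2)) * (1 / X) * S = (2 * (Z ^ 2 * (u / σ) ^ 2 / 4) * X * S) / (Y * X ^ 2 * Z ^ 2 * u ^ 2) := by
  field_simp; ring

lemma near_num {η u σ θ A S : ℝ} (h0 : 0 < η) (h1 : η ≤ 1/100) (hu : 0 < u) (hσ : 0 < σ) (hθ : θ = (1 - 9 * η) * (u / σ) / 2)
    (hA : 0 ≤ A) (hθA : 2 * θ * A ≤ η) (hθη : θ ≤ η) (hS : 2 * θ ^ 2 / (1 + θ) * (1 - η) * S ≤ 1 + 2 * θ / (1 + θ) * A) :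
    1 / ((1 - 2 * η) * (2 * σ ^ 2)) * (1 / (1 - η)) * S ≤ (1 + 40 * η) / u ^ 2 := by
  have hus : 0 < u / σ := by positivity
  have hθ0 : 0 < θ := by rw [hθ]; exact div_pos (mul_pos (by linarith) hus) two_pos
  have h2 : 2 * θ / (1 + θ) * A ≤ η := by
    have : 2 * θ / (1 + θ) ≤ 2 * θ := div_le_self (by linarith) (by linarith)
    exact le_trans (mul_le_mul_of_nonneg_right this hA) hθA
  have h3 : 2 * θ ^ 2 * (1 - η) * S ≤ (1 + η) * (1 + η) := by
    have e : 2 * θ ^ 2 / (1 + θ) * (1 - η) * S = 2 * θ ^ 2 * (1 - η) * S / (1 + θ) := by ring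
    rw [e, div_le_iff₀ (by linarith)] at hS
    refine hS.trans (mul_le_mul (by linarith) (by linarith) (by linarith) (by linarith))
  have e4 : θ ^ 2 = (1 - 9 * η) ^ 2 * (u / σ) ^ 2 / 4 := by rw [hθ]; ring
  rw [e4] at h3
  have h5 : (1 + η) * (1 + η) ≤ (1 + 40 * η) * ((1 - 2 * η) * (1 - η) ^ 2 * (1 - 9 * η) ^ 2) := by
    have b1 : 1 - 22 * η ≤ (1 - 2 * η) * (1 - η) ^ 2 * (1 - 9 * η) ^ 2 := by
      have c1 : 1 - 2 * η ≤ (1 - η) ^ 2 := by nlinarith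
      have c2 : 1 - 18 * η ≤ (1 - 9 * η) ^ 2 := by nlinarith
      have c3 : 1 - 4 * η ≤ (1 - 2 * η) * (1 - η) ^ 2 := by nlinarith
      have c4 : (1 - 4 * η) * (1 - 18 * η) ≤ (1 - 2 * η) * (1 - η) ^ 2 * (1 - 9 * η) ^ 2 :=
        mul_le_mul c3 c2 (by linarith) (by linarith)
      nlinarith
    have : (1 + 40 * η) * (1 - 22 * η) ≤ (1 + 40 * η) * ((1 - 2 * η) * (1 - η) ^ 2 * (1 - 9 * η) ^ 2) := mul_le_mul_of_nonneg_left b1 (by linarith)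
    nlinarith
  have p1 : 0 < 1 - η := by linarith
  have p2 : 0 < 1 - 2 * η := by linarith
  have p3 : 0 < 1 - 9 * η := by linarith
  have e6 : 1 / ((1 - 2 * η) * (2 * σ ^ 2)) * (1 / (1 - η)) * S =
      (2 * ((1 - 9 * η) ^ 2 * (u / σ) ^ 2 / 4) * (1 - η) * S) / ((1 - 2 * η) * (1 - η) ^ 2 * (1 - 9 * η) ^ 2 * u ^ 2) := by
    exact nn_e6 p1.ne' p2.ne' p3.ne' hu.ne' hσ.ne'
  rw [e6, div_le_div_iff₀ (by positivity) (by positivity)]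
  have h7 := h3.trans h5
  have h8 := mul_le_mul_of_nonneg_right h7 (show 0 ≤ u ^ 2 by positivity)
  linarith

namespace Env
variable {n a b : ℕ} {ε u p : ℝ} {c : ℕ → ℝ} {i : ℕ} {η : ℝ}

lemma W_near (E : Env n a b ε u p c) (h0 : 0 < η) (h1 : η ≤ 1/100) (hε : 20 * ε ≤ η) (hai : a ≤ i) (hib : i ≤ b) {j : ℕ} (haj : a < j) (hji : j ≤ i)
    (hm : (i:ℝ) - j ≤ η * sg n i ^ 2) : sl n j - sl n (j - 1) ≤ 1 / ((1 - 2 * η) * (2 * sg n i ^ 2)) := by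
  have hi := E.idx i hai hib
  have hj := E.idx j haj.le (hji.trans hib)
  have ha1 := (E.idx a le_rfl E.ab).j1
  refine (sl_step (by omega) hj.jn).trans ?_
  have hji' : (j:ℝ) ≤ i := by exact_mod_cast hji
  have s1 := hi.sj
  have ip := hi.jpos
  have il := hi.jlt
  have hbig : 1 ≤ η * sg n i ^ 2 := by
    have := E.std.hu; have := hi.sbig E.std.hu; have := E.std.u1; have := E.std.e0
    have h5 : 1 ≤ η * u := by nlinarith
    have h6 : u ≤ sg n i ^ 2 := by nlinarith
    exact h5.trans (mul_le_mul_of_nonneg_left h6 h0.le)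
  have hj1 : (1 - 2 * η) * i ≤ (j:ℝ) - 1 := by nlinarith
  have p2 : 0 < 1 - 2 * η := by linarith
  have q1 : 1 / ((j:ℝ) - 1) ≤ 1 / ((1 - 2 * η) * i) := one_div_le_one_div_of_le (by positivity) hj1
  have q2 : 1 / ((n:ℝ) - j) ≤ 1 / ((1 - 2 * η) * (n - i)) := by
    apply one_div_le_one_div_of_le (mul_pos p2 (by linarith))
    nlinarith
  have e : 1 / ((1 - 2 * η) * (2 * sg n i ^ 2)) = (1 / ((1 - 2 * η) * i) + 1 / ((1 - 2 * η) * (n - i))) / 2 := by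
    have : (n:ℝ) - i ≠ 0 := by linarith
    have := hi.npos
    rw [hi.s2]; field_simp; ring
  rw [e]; linarith

lemma near_part (E : Env n a b ε u p c) (h0 : 0 < η) (h1 : η ≤ 1/100) (hε : 20 * ε ≤ η) {A : ℕ} (hA : 8 * Real.exp (-(A:ℝ)) ≤ η) (hAu : (A:ℝ) ≤ u)
    (hai : a ≤ i) (hib : i ≤ b) :
    ∑ j ∈ (Finset.Ioc a i).filter (fun j : ℕ => (i:ℝ) - j ≤ η * sg n i ^ 2), (sl n j - sl n (j - 1)) * bT i (c j / c i) j ≤ (1 + 40 * η) / u ^ 2 := by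
  have hi := E.idx i hai hib
  have s1 := QC.sigpos E.std hi
  have hu := E.std.hu
  have ha1 := (E.idx a le_rfl E.ab).j1
  have e0 := E.std.e0
  set θ := (1 - 9 * η) * (u / sg n i) / 2 with hθ
  have hus := QC.usig E.std hi
  have hes := hi.es E.std
  have husp : 0 < u / sg n i := by positivity
  have hθ0 : 0 < θ := div_pos (mul_pos (by linarith) husp) two_pos
  have hθu : 2 * θ ≤ u / sg n i := by rw [hθ]; nlinarith
  have hue : u / sg n i ≤ η / u := by
    rw [div_le_div_iff₀ s1 (by linarith)]; nlinarith
  have hηu : η / u ≤ η := div_le_self h0.le (by linarith)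
  have hθA : 2 * θ * A ≤ η := by
    have : 2 * θ * A ≤ η / u * u := mul_le_mul (hθu.trans hue) hAu (by positivity) (by positivity)
    rwa [div_mul_cancel₀ _ (by linarith)] at this
  have hP := poisson_sum hθ0 (by linarith) h0.le hA i
  have := near_num h0 h1 (by linarith) s1 hθ (Nat.cast_nonneg A) hθA (by linarith) hP
  refine le_trans ?_ this
  set S := (Finset.Ioc a i).filter (fun j : ℕ => (i:ℝ) - j ≤ η * sg n i ^ 2) with hS
  have p1 : 0 < 1 - η := by linarith
  have p2 : 0 < 1 - 2 * η := by linarith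
  have hterm : ∀ j ∈ S, (sl n j - sl n (j - 1)) * bT i (c j / c i) j ≤
      1 / ((1 - 2 * η) * (2 * sg n i ^ 2)) * (1 / (1 - η)) * pL (((i - j : ℕ):ℝ) * (1 + θ)) (i - j) := by
    intro j hj
    simp only [hS, Finset.mem_filter, Finset.mem_Ioc] at hj
    obtain ⟨⟨haj, hji⟩, hm⟩ := hj
    have hjI := E.idx j haj.le (hji.trans hib)
    have hd := E.qc.drift E.std (η := η) (σ := sg n) (by linarith) (by linarith) (fun l hl1 hl2 => E.idx l (by omega) (by omega)) hji hm
    obtain ⟨hq0, hq1⟩ := E.qc.ratio_mem hjI.j1 hji hi.jn.le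
    have hn := near_pois hjI.j1 hji hq0.le hq1 hθ0.le hd
    have hw := E.W_near h0 h1 hε hai hib haj hji hm
    have hpL : 0 ≤ pL (((i - j : ℕ):ℝ) * (1 + θ)) (i - j) := by
      apply Finset.sum_nonneg; intro k _; exact pw_nonneg (by positivity) k
    have hij : (i:ℝ) / j ≤ 1 / (1 - η) := by
      rw [div_le_div_iff₀ hjI.jpos p1]
      have := hi.sj
      nlinarith
    rw [mul_assoc]
    refine mul_le_mul hw (hn.trans (mul_le_mul_of_nonneg_right hij hpL)) (bT_nonneg hq0.le hq1 j) (by positivity)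
  refine (Finset.sum_le_sum hterm).trans ?_
  rw [← Finset.mul_sum]
  apply mul_le_mul_of_nonneg_left _ (by positivity)
  have hinj : Set.InjOn (fun j => i - j) (S : Set ℕ) := by
    intro x hx y hy hxy
    simp only [hS, Finset.coe_filter, Finset.mem_Ioc, Set.mem_setOf_eq] at hx hy
    simp only at hxy
    omega
  rw [← Finset.sum_image (f := fun m : ℕ => pL ((m:ℝ) * (1 + θ)) m) hinj]
  apply Finset.sum_le_sum_of_subset_of_nonneg
  · intro m hm
    simp only [hS, Finset.mem_image, Finset.mem_filter, Finset.mem_Ioc, Finset.mem_range] at hm ⊢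
    obtain ⟨j, hj, rfl⟩ := hm
    omega
  · intro m _ _
    apply Finset.sum_nonneg; intro k _; exact pw_nonneg (by positivity) k

lemma tele (f : ℕ → ℝ) {a i : ℕ} (h : a ≤ i) : ∑ j ∈ Finset.Ioc a i, (f j - f (j - 1)) = f i - f a := by
  induction i, h using Nat.le_induction with
  | base => simp
  | succ m hm ih =>
    rw [Finset.sum_Ioc_succ_top (by omega), ih]; simp

lemma window (E : Env n a b ε u p c) (hai : a ≤ i) (hib : i ≤ b) {L : ℝ} (hL : 0 ≤ L) :
    ∑ j ∈ (Finset.Ioc a i).filter (fun j => sl n i - L < sl n j), (sl n j - sl n (j - 1)) ≤ L + 1 := by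
  have ha1 := (E.idx a le_rfl E.ab).j1
  have hin := (E.idx i hai hib).jn
  set φ : ℕ → ℝ := fun j => max (sl n j) (sl n i - L - 1) with hφ
  have hmono : ∀ j ∈ Finset.Ioc a i, 0 ≤ φ j - φ (j - 1) := by
    intro j hj
    simp only [Finset.mem_Ioc] at hj
    have := sl_mono (n := n) (j := j - 1) (i := j) (by omega) (by omega) (by omega)
    have := max_le_max_right (sl n i - L - 1) this
    simp only [hφ]; linarith
  have h1 : ∑ j ∈ (Finset.Ioc a i).filter (fun j => sl n i - L < sl n j), (sl n j - sl n (j - 1)) ≤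
      ∑ j ∈ (Finset.Ioc a i).filter (fun j => sl n i - L < sl n j), (φ j - φ (j - 1)) := by
    apply Finset.sum_le_sum
    intro j hj
    simp only [Finset.mem_filter, Finset.mem_Ioc] at hj
    have h2 := sl_step (n := n) (j := j) (by omega) (by omega)
    have h3 : (1 / ((j:ℝ) - 1) + 1 / ((n:ℝ) - j)) / 2 ≤ 1 := by
      have a1 : (1:ℝ) ≤ j - 1 := by
        have : (2:ℝ) ≤ j := by exact_mod_cast (by omega : 2 ≤ j)
        linarith
      have a2 : (1:ℝ) ≤ n - j := by
        have : (j:ℝ) + 1 ≤ n := by exact_mod_cast (by omega : j + 1 ≤ n)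
        linarith
      have b1 : 1 / ((j:ℝ) - 1) ≤ 1 := by rw [div_le_one (by linarith)]; exact a1
      have b2 : 1 / ((n:ℝ) - j) ≤ 1 := by rw [div_le_one (by linarith)]; exact a2
      linarith
    simp only [hφ]
    rw [max_eq_left (by linarith), max_eq_left (by linarith)]
  refine h1.trans ((Finset.sum_le_sum_of_subset_of_nonneg (Finset.filter_subset _ _) (fun j hj _ => hmono j hj)).trans ?_)
  rw [tele φ hai]
  simp only [hφ]
  rw [max_eq_left (by linarith)]
  have := le_max_right (sl n a) (sl n i - L - 1)
  linarith

lemma near_sum (E : Env n a b ε u p c) (h0 : 0 < η) (h1 : η ≤ 1/100) (hε : 20 * ε ≤ η) {A : ℕ} (hA : 8 * Real.exp (-(A:ℝ)) ≤ η) (hAu : (A:ℝ) ≤ u)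
    {L : ℝ} (hL : 0 ≤ L) (hLs : (L + 1) * Real.exp (-(η ^ 2 * u ^ 2 / 512)) ≤ η / u ^ 2)
    (hai : a ≤ i) (hib : i ≤ b) (W : ℕ → ℝ) (hW0 : ∀ j ∈ Finset.Ioc a i, 0 ≤ W j) (hW : ∀ j ∈ Finset.Ioc a i, W j ≤ sl n j - sl n (j - 1)) :
    ∑ j ∈ (Finset.Ioc a i).filter (fun j => sl n i - L < sl n j), W j * bT i (c j / c i) j ≤ (1 + 41 * η) / u ^ 2 := by
  have hi := E.idx i hai hib
  have hr : ∀ j ∈ Finset.Ioc a i, 0 ≤ bT i (c j / c i) j := by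
    intro j hj
    simp only [Finset.mem_Ioc] at hj
    obtain ⟨hq0, hq1⟩ := E.qc.ratio_mem (j := j) (by omega) hj.2 hi.jn.le
    exact bT_nonneg hq0.le hq1 j
  have hN := E.near_part h0 h1 hε hA hAu hai hib
  have hM := mul_le_mul_of_nonneg_right (E.window hai hib hL) (Real.exp_pos (-(η ^ 2 * u ^ 2 / 512))).le
  rw [Finset.sum_mul] at hM
  have hsum : ∑ j ∈ (Finset.Ioc a i).filter (fun j => sl n i - L < sl n j), W j * bT i (c j / c i) j ≤
      ∑ j ∈ (Finset.Ioc a i).filter (fun j : ℕ => (i:ℝ) - j ≤ η * sg n i ^ 2), (sl n j - sl n (j - 1)) * bT i (c j / c i) j +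
      ∑ j ∈ (Finset.Ioc a i).filter (fun j => sl n i - L < sl n j), (sl n j - sl n (j - 1)) * Real.exp (-(η ^ 2 * u ^ 2 / 512)) := by
    simp only [Finset.sum_filter]
    rw [← Finset.sum_add_distrib]
    apply Finset.sum_le_sum
    intro j hj
    have hw0 := hW0 j hj
    have hw := hW j hj
    have hrj := hr j hj
    have hex := Real.exp_pos (-(η ^ 2 * u ^ 2 / 512))
    have hwn : 0 ≤ sl n j - sl n (j - 1) := hw0.trans hw
    have t1 := mul_le_mul_of_nonneg_right hw hrj
    have t2 := mul_nonneg hwn hex.le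
    have t3 := mul_nonneg hwn hrj
    simp only [Finset.mem_Ioc] at hj
    by_cases c1 : sl n i - L < sl n j
    · by_cases c2 : (i:ℝ) - j ≤ η * sg n i ^ 2
      · rw [if_pos c1, if_pos c2, if_pos c1]; linarith
      · rw [if_pos c1, if_neg c2, if_pos c1]
        have hmid := E.qc.mid E.std hi (E.idx j hj.1.le (hj.2.trans hib)) hj.2 h0 (by linarith) (by linarith) (by push Not at c2; exact c2.le)
        have := mul_le_mul_of_nonneg_left hmid hwn
        linarith
    · rw [if_neg c1, if_neg c1]
      split_ifs <;> linarith
  have e : (1 + 41 * η) / u ^ 2 = (1 + 40 * η) / u ^ 2 + η / u ^ 2 := by ring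
  linarith

end Env

end BerkJonesPartK

section BerkJonesPartL
open MeasureTheory Filter Set ProbabilityTheory
set_option linter.all false

/-- crossing mass above level `t` -/
noncomputable def Qm (n a b : ℕ) (c : ℕ → ℝ) (t : ℝ) : ℝ :=
  ∑ i ∈ Finset.Ico a b, if t < sl n i then fP n c b i else 0

lemma Qm_nonneg (n a b : ℕ) (c : ℕ → ℝ) (t : ℝ) : 0 ≤ Qm n a b c t := by
  apply Finset.sum_nonneg; intro i _; split_ifs
  · exact fP_nonneg _ _ _ _
  · exact le_rfl

lemma Qm_le (n a b : ℕ) (c : ℕ → ℝ) (t : ℝ) : Qm n a b c t ≤ ∑ i ∈ Finset.Ico a b, fP n c b i := by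
  apply Finset.sum_le_sum; intro i _; split_ifs
  · exact le_rfl
  · exact fP_nonneg _ _ _ _

lemma Qm_le_one (n a b : ℕ) (c : ℕ → ℝ) (t : ℝ) : Qm n a b c t ≤ 1 := by
  have h1 := Qm_le n a b c t
  have h2 := none_bound (n := n) c a b
  have h3 : 0 ≤ (nullMeasure n).real {u | ∀ l ∈ Finset.Icc a b, cnt (c l) u < l} := measureReal_nonneg
  linarith

lemma clip_lip {α β s t : ℝ} (h : s ≤ t) : max α (min t β) - max α (min s β) ≤ t - s := by
  rcases le_total t β with h1 | h1 <;> rcases le_total s β with h2 | h2 <;>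
  rcases le_total α (min t β) with h3 | h3 <;> rcases le_total α (min s β) with h4 | h4 <;>
  simp only [h1, h2, min_eq_left, min_eq_right] at h3 h4 ⊢ <;>
  simp only [h3, h4, max_eq_left, max_eq_right] <;> linarith

lemma clip_mono {α β s t : ℝ} (h : s ≤ t) : max α (min s β) ≤ max α (min t β) :=
  max_le_max le_rfl (min_le_min h le_rfl)

namespace Env
variable {n a b : ℕ} {ε u p : ℝ} {c : ℕ → ℝ} {i : ℕ} {η δ L : ℝ}

lemma rho_far (E : Env n a b ε u p c) (hLδ : 2000 * u ^ 2 * Real.exp (-L) ≤ δ) {i j : ℕ} (h : L ≤ sl n i - sl n j) :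
    2000 * u ^ 2 * Real.exp (-(sl n i - sl n j)) ≤ δ := by
  refine le_trans (mul_le_mul_of_nonneg_left (Real.exp_le_exp.2 (by linarith)) (by positivity)) hLδ

lemma renewal_near (E : Env n a b ε u p c) (d0 : 0 < δ) (d1 : δ ≤ 1) (hd : 16 ≤ δ * u ^ 2)
    (hLδ : 2000 * u ^ 2 * Real.exp (-L) ≤ δ) {α : ℝ} {j : ℕ} (haj : a ≤ j) (hjb : j < b) (hα : α < sl n j) (hL : L ≤ sl n b - sl n j) :
    p * (1 - 3 * δ - Qm n a b c α) ≤ ∑ i ∈ Finset.Ico a b, if j ≤ i ∧ sl n i - L < sl n j then fP n c b i * bT i (c j / c i) j else 0 := by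
  have hb := E.idx b E.ab le_rfl
  have hj := E.idx j haj hjb.le
  have hp0 : 0 < p := lt_of_lt_of_le (Real.exp_pos _) E.std.p1
  have hren := E.qc.renewal hj.j1 hjb hb.jn.le
  have hlast := E.qc.last_small E.std hb hj hjb.le d0 d1 hd (Real.exp_pos _).le (sl_rho hj.j1 hjb.le hb.jn).le (E.rho_far hLδ hL)
  have hsub : ∑ i ∈ Finset.Ico j b, fP n c b i * bT i (c j / c i) j = ∑ i ∈ Finset.Ico a b, if j ≤ i then fP n c b i * bT i (c j / c i) j else 0 := by
    rw [← Finset.sum_filter]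
    congr 1
    ext i; simp; omega
  have hle : ∑ i ∈ Finset.Ico a b, (if j ≤ i then fP n c b i * bT i (c j / c i) j else 0) ≤
      ∑ i ∈ Finset.Ico a b, (if j ≤ i ∧ sl n i - L < sl n j then fP n c b i * bT i (c j / c i) j else 0) +
      (1 + δ) * p * Qm n a b c α := by
    rw [Qm, Finset.mul_sum, ← Finset.sum_add_distrib]
    apply Finset.sum_le_sum
    intro i hi
    simp only [Finset.mem_Ico] at hi
    have hf := fP_nonneg n c b i
    have hpf : 0 ≤ (1 + δ) * p := by positivity
    by_cases h1 : j ≤ i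
    · have hiI := E.idx i hi.1 hi.2.le
      have hsα : α < sl n i := lt_of_lt_of_le hα (sl_mono hj.j1 h1 hiI.jn)
      rw [if_pos h1, if_pos hsα]
      by_cases h2 : sl n i - L < sl n j
      · rw [if_pos ⟨h1, h2⟩]
        have := mul_nonneg hpf hf
        linarith
      · rw [if_neg (fun h => h2 h.2)]
        push Not at h2
        have us : 0 ≤ u * sg n i := mul_nonneg (by linarith [E.std.hu]) (QC.sigpos E.std hiI).le
        have := E.qc.far E.std hiI hj h1 d0 d1 hd (Real.exp_pos _).le (sl_rho hj.j1 h1 hiI.jn).le (E.rho_far hLδ (by linarith)) i (by linarith)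
        have := mul_le_mul_of_nonneg_left this hf
        linarith
    · rw [if_neg h1, if_neg (fun h => h1 h.1)]
      split_ifs
      · have := mul_nonneg hpf hf
        linarith
      · simp
  have hQ := Qm_le_one n a b c α
  have hQ0 := Qm_nonneg n a b c α
  have : δ * Qm n a b c α * p ≤ δ * 1 * p := by gcongr
  rw [hsub] at hren
  nlinarith

lemma block (E : Env n a b ε u p c) (h0 : 0 < η) (h1 : η ≤ 1/100) (hε : 20 * ε ≤ η) {A : ℕ} (hA : 8 * Real.exp (-(A:ℝ)) ≤ η) (hAu : (A:ℝ) ≤ u)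
    (hL : 0 ≤ L) (hLs : (L + 1) * Real.exp (-(η ^ 2 * u ^ 2 / 512)) ≤ η / u ^ 2)
    (d0 : 0 < δ) (d1 : δ ≤ 1) (hd : 16 ≤ δ * u ^ 2) (hLδ : 2000 * u ^ 2 * Real.exp (-L) ≤ δ)
    {α β γ : ℝ} (hαβ : α ≤ β) (hβγ : β + L + 1 ≤ γ) (hγ : γ ≤ sl n b) (hα : sl n a ≤ α) :
    p * (β - α) * (1 - 3 * δ - Qm n a b c α) ≤ (1 + 41 * η) / u ^ 2 * (Qm n a b c α - Qm n a b c γ) := by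
  have ha1 := (E.idx a le_rfl E.ab).j1
  have hbn := (E.idx b E.ab le_rfl).jn
  set φ : ℕ → ℝ := fun j => max α (min (sl n j) β) with hφ
  set W : ℕ → ℝ := fun j => φ j - φ (j - 1) with hW
  have hstep : ∀ j ∈ Finset.Ioc a b, sl n (j - 1) ≤ sl n j ∧ sl n j ≤ sl n (j - 1) + 1 := by
    intro j hj
    simp only [Finset.mem_Ioc] at hj
    refine ⟨sl_mono (by omega) (by omega) (by omega), ?_⟩
    have h2 := sl_step (n := n) (j := j) (by omega) (by omega)
    have h3 : (1 / ((j:ℝ) - 1) + 1 / ((n:ℝ) - j)) / 2 ≤ 1 := by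
      have a1 : (1:ℝ) ≤ j - 1 := by
        have : (2:ℝ) ≤ j := by exact_mod_cast (by omega : 2 ≤ j)
        linarith
      have a2 : (1:ℝ) ≤ n - j := by
        have : (j:ℝ) + 1 ≤ n := by exact_mod_cast (by omega : j + 1 ≤ n)
        linarith
      have b1 : 1 / ((j:ℝ) - 1) ≤ 1 := by rw [div_le_one (by linarith)]; exact a1
      have b2 : 1 / ((n:ℝ) - j) ≤ 1 := by rw [div_le_one (by linarith)]; exact a2
      linarith
    linarith
  have hW0 : ∀ j ∈ Finset.Ioc a b, 0 ≤ W j := by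
    intro j hj
    have := clip_mono (α := α) (β := β) (hstep j hj).1
    simp only [hW, hφ]; linarith
  have hW1 : ∀ j ∈ Finset.Ioc a b, W j ≤ sl n j - sl n (j - 1) := fun j hj => clip_lip (hstep j hj).1
  have hWs : ∑ j ∈ Finset.Ioc a b, W j = β - α := by
    simp only [hW]
    rw [tele φ E.ab]
    simp only [hφ]
    rw [min_eq_right (by linarith), max_eq_right hαβ, min_eq_left (by linarith), max_eq_left hα]
  have hWsupp : ∀ j ∈ Finset.Ioc a b, W j ≠ 0 → α < sl n j ∧ sl n j < γ - L := by
    intro j hj hne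
    obtain ⟨q1, q2⟩ := hstep j hj
    constructor
    · by_contra hc
      push Not at hc
      apply hne
      simp only [hW, hφ]
      rw [max_eq_left (le_trans (min_le_left _ _) hc), max_eq_left (le_trans (min_le_left _ _) (q1.trans hc))]; ring
    · by_contra hc
      push Not at hc
      apply hne
      simp only [hW, hφ]
      rw [min_eq_right (by linarith), min_eq_right (by linarith)]; ring
  set G : ℕ → ℕ → ℝ := fun j i => if j ≤ i ∧ sl n i - L < sl n j then W j * bT i (c j / c i) j else 0 with hG
  have hl : p * (β - α) * (1 - 3 * δ - Qm n a b c α) ≤ ∑ j ∈ Finset.Ioc a b, ∑ i ∈ Finset.Ico a b,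
      (if α < sl n i ∧ ¬ (γ < sl n i) then fP n c b i else 0) * G j i := by
    rw [← hWs, mul_assoc, Finset.sum_mul, Finset.mul_sum]
    apply Finset.sum_le_sum
    intro j hj
    by_cases hne : W j = 0
    · simp [hG, hne]
    obtain ⟨q1, q2⟩ := hWsupp j hj hne
    have hj' := hj
    simp only [Finset.mem_Ioc] at hj'
    have hjb : j < b := by
      rcases Nat.lt_or_ge j b with h | h
      · exact h
      · exfalso
        have : j = b := by omega
        subst this; linarith
    have hr := E.renewal_near d0 d1 hd hLδ hj'.1.le hjb q1 (by linarith)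
    have hr2 := mul_le_mul_of_nonneg_left hr (hW0 j hj)
    calc p * (W j * (1 - 3 * δ - Qm n a b c α)) = W j * (p * (1 - 3 * δ - Qm n a b c α)) := by ring
      _ ≤ _ := hr2
      _ ≤ _ := by
        rw [Finset.mul_sum]
        apply le_of_eq
        apply Finset.sum_congr rfl
        intro i hi
        simp only [Finset.mem_Ico] at hi
        simp only [hG]
        by_cases hc : j ≤ i ∧ sl n i - L < sl n j
        · rw [if_pos hc, if_pos hc, if_pos]
          · ring
          · exact ⟨lt_of_lt_of_le q1 (sl_mono (by omega) hc.1 (by omega)), by linarith [hc.2]⟩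
        · rw [if_neg hc, if_neg hc]; simp
  refine hl.trans ?_
  rw [Finset.sum_comm]
  have hQd : Qm n a b c α - Qm n a b c γ = ∑ i ∈ Finset.Ico a b, (if α < sl n i ∧ ¬ (γ < sl n i) then fP n c b i else 0) := by
    simp only [Qm]
    rw [← Finset.sum_sub_distrib]
    apply Finset.sum_congr rfl
    intro i _
    by_cases c1 : α < sl n i <;> by_cases c2 : γ < sl n i
    · simp [c1, c2]
    · simp [c1, c2]
    · linarith
    · simp [c1, c2]
  rw [hQd, Finset.mul_sum]
  apply Finset.sum_le_sum
  intro i hi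
  simp only [Finset.mem_Ico] at hi
  rw [← Finset.mul_sum, mul_comm]
  have hf : 0 ≤ (if α < sl n i ∧ ¬ (γ < sl n i) then fP n c b i else 0) := by
    split_ifs
    · exact fP_nonneg _ _ _ _
    · exact le_rfl
  apply mul_le_mul_of_nonneg_right _ hf
  have hns := E.near_sum h0 h1 hε hA hAu hL hLs hi.1 hi.2.le W (fun j hj => hW0 j (by simp at hj ⊢; omega)) (fun j hj => hW1 j (by simp at hj ⊢; omega))
  refine le_trans (le_of_eq ?_) hns
  simp only [hG]
  rw [← Finset.sum_filter]
  apply Finset.sum_congr _ (fun _ _ => rfl)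
  ext j
  simp only [Finset.mem_filter, Finset.mem_Ioc]
  constructor
  · rintro ⟨⟨x1, x2⟩, x3, x4⟩; exact ⟨⟨x1, x3⟩, x4⟩
  · rintro ⟨⟨x1, x2⟩, x3⟩; exact ⟨⟨x1, by omega⟩, x2, x3⟩

lemma main_bound (E : Env n a b ε u p c) (h0 : 0 < η) (h1 : η ≤ 1/100) (hε : 20 * ε ≤ η) {A : ℕ} (hA : 8 * Real.exp (-(A:ℝ)) ≤ η) (hAu : (A:ℝ) ≤ u)
    (hL : 0 ≤ L) (hLs : (L + 1) * Real.exp (-(η ^ 2 * u ^ 2 / 512)) ≤ η / u ^ 2)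
    (d0 : 0 < δ) (d1 : δ ≤ 1) (hd : 16 ≤ δ * u ^ 2) (hLδ : 2000 * u ^ 2 * Real.exp (-L) ≤ δ)
    {B h : ℝ} {M : ℕ} (hB : sl n a + M * B ≤ sl n b) (hBL : L + 1 ≤ B) (hh0 : 0 ≤ h)
    (hh : h * ((1 + 41 * η) / u ^ 2) ≤ p * (B - L - 1)) :
    (nullMeasure n).real {w | p ≤ MnPlus w} ≤ 1 / (1 + h) ^ M + 3 * δ := by
  have hp0 : 0 < p := lt_of_lt_of_le (Real.exp_pos _) E.std.p1
  have hu := E.std.hu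
  set Q : ℕ → ℝ := fun k => Qm n a b c (sl n b - k * B) with hQ
  set K := (1 + 41 * η) / u ^ 2 with hK
  have hK0 : 0 < K := by positivity
  have hB0 : 0 ≤ B := by linarith
  have hstep : ∀ k : ℕ, k < M → 0 ≤ 1 - 3 * δ - Q (k + 1) → (1 + h) * (1 - 3 * δ - Q (k + 1)) ≤ 1 - 3 * δ - Q k := by
    intro k hk ht
    have hk' : ((k + 1 : ℕ) : ℝ) ≤ M := by exact_mod_cast hk
    have hkB : ((k + 1 : ℕ) : ℝ) * B ≤ M * B := mul_le_mul_of_nonneg_right hk' hB0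
    have hb := E.block h0 h1 hε hA hAu hL hLs d0 d1 hd hLδ (α := sl n b - ((k + 1 : ℕ):ℝ) * B) (β := sl n b - k * B - L - 1) (γ := sl n b - k * B)
      (by push_cast; linarith) (by linarith) (by have : 0 ≤ (k:ℝ) * B := by positivity
                                                 linarith) (by linarith)
    have e : sl n b - k * B - L - 1 - (sl n b - ((k + 1 : ℕ):ℝ) * B) = B - L - 1 := by push_cast; ring
    rw [e] at hb
    have h2 : K * (h * (1 - 3 * δ - Q (k + 1))) ≤ K * (Q (k + 1) - Q k) := by
      refine le_trans ?_ hb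
      have := mul_le_mul_of_nonneg_right hh ht
      simp only [hQ] at this ⊢
      linarith
    have h3 := le_of_mul_le_mul_left h2 hK0
    linarith
  have hiter : ∀ k : ℕ, k ≤ M → (1 - 3 * δ - Q k) * (1 + h) ^ k ≤ 1 := by
    intro k
    induction k with
    | zero =>
      intro _
      have := Qm_nonneg n a b c (sl n b - ((0:ℕ):ℝ) * B)
      simp only [hQ, pow_zero]
      linarith
    | succ k ih =>
      intro hk
      have hpow : 0 < (1 + h) ^ k := by positivity
      rcases le_or_gt 0 (1 - 3 * δ - Q (k + 1)) with ht | ht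
      · have h2 := hstep k (by omega) ht
        have h3 := mul_le_mul_of_nonneg_right h2 hpow.le
        have := ih (by omega)
        rw [pow_succ]
        linarith
      · have : 0 < (1 + h) ^ (k + 1) := by positivity
        nlinarith
  have hM := hiter M le_rfl
  have hpow : 0 < (1 + h) ^ M := by positivity
  have ht : 1 - 3 * δ - Q M ≤ 1 / (1 + h) ^ M := by rw [le_div_iff₀ hpow]; exact hM
  have hnone := none_bound (n := n) c a b
  have hQle := Qm_le n a b c (sl n b - M * B)
  have hred : (nullMeasure n).real {w | p ≤ MnPlus w} ≤ (nullMeasure n).real {w | ∀ l ∈ Finset.Icc a b, cnt (c l) w < l} := by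
    apply measureReal_mono ?_ (measure_ne_top _ _)
    intro w hw l hl
    simp only [Finset.mem_Icc] at hl
    have hl' := E.idx l hl.1 hl.2
    exact E.qc.reduction hp0 w hw hl'.j1 hl'.jn.le
  simp only [hQ] at ht
  linarith

end Env

end BerkJonesPartL

section BerkJonesPartM
open MeasureTheory Filter Set ProbabilityTheory
set_option linter.all false

lemma ev_pow_exp (k : ℕ) {c r : ℝ} (hc : 0 < c) (hr : 0 < r) :
    ∀ᶠ w : ℝ in atTop, w ^ k * Real.exp (-(c * w)) ≤ r := by
  have h := Real.tendsto_pow_mul_exp_neg_atTop_nhds_zero k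
  have h2 : Tendsto (fun w : ℝ => c * w) atTop atTop := tendsto_id.const_mul_atTop hc
  have h3 := h.comp h2
  have h4 : (0:ℝ) < c ^ k * r := by positivity
  filter_upwards [h3.eventually (eventually_le_nhds h4)] with w hw
  simp only [Function.comp] at hw
  rw [mul_pow, mul_assoc] at hw
  exact le_of_mul_le_mul_left hw (by positivity)

lemma choose_y {x e : ℝ} (hx : 0 < x) (he : 0 < e) :
    ∃ y, 0 < y ∧ y < x ∧ Real.exp (-y) ≤ Real.exp (-x) + e := by
  have hl : 0 < Real.log (1 + e) := Real.log_pos (by linarith)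
  refine ⟨x - min (x/2) (Real.log (1+e)), ?_, ?_, ?_⟩
  · have := min_le_left (x/2) (Real.log (1+e)); linarith
  · have : 0 < min (x/2) (Real.log (1+e)) := lt_min (by linarith) hl
    linarith
  · have h1 : Real.exp (min (x/2) (Real.log (1+e))) ≤ 1 + e := by
      rw [← Real.le_log_iff_exp_le (by linarith)]; exact min_le_right _ _
    have h2 : Real.exp (-x) ≤ 1 := Real.exp_le_one_iff.mpr (by linarith)
    have h3 : 0 < Real.exp (-x) := Real.exp_pos _
    rw [neg_sub, sub_eq_add_neg, Real.exp_add]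
    nlinarith

lemma choose_M {y e : ℝ} (he : 0 < e) :
    ∃ M : ℕ, 0 < M ∧ 1 / (1 + y / M) ^ M ≤ Real.exp (-y) + e := by
  have h := (Real.tendsto_one_add_div_pow_exp y).inv₀ (Real.exp_pos y).ne'
  have h2 : (Real.exp y)⁻¹ < Real.exp (-y) + e := by rw [Real.exp_neg]; linarith
  obtain ⟨M, hM, hM0⟩ := ((h.eventually (eventually_le_nhds h2)).and (eventually_gt_atTop 0)).exists
  exact ⟨M, hM0, by rw [one_div]; exact hM⟩

set_option maxHeartbeats 1000000 in
/-- The bound at fixed sample size, given all the smallness conditions. -/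
lemma fixed_n {x y η δ : ℝ} {M A n : ℕ} (hx : 0 < x) (hy : 0 < y) (h0 : 0 < η) (h1 : η ≤ 1/100)
    (hxy : y * (1 + 41 * η) ≤ x * (1 - 3 * η)) (hM : 0 < M)
    (hA : 8 * Real.exp (-(A:ℝ)) ≤ η) (d0 : 0 < δ) (d1 : δ ≤ 1) {l w : ℝ}
    (hn : 0 < n)
    (hl : l = Real.log n) (hw : w = 2 * Real.log l) (hl1 : 1 ≤ l)
    (w1 : 1 ≤ w) (w2 : (2000 / η) ^ 2 ≤ w) (w3 : (A:ℝ) ^ 2 ≤ w) (w4 : 16 ≤ δ * w)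
    (w5 : w ^ 2 * Real.exp (-(η ^ 2 / 512 * w)) ≤ δ * η / 2000)
    (w6 : w ^ 1 * Real.exp (-(η / 80 * w)) ≤ x) (w7 : x < w)
    (w8 : w ^ 1 * Real.exp (-(1 / 2 * w)) ≤ δ * η / (2000 * M))
    (l1 : l ^ 3 * Real.exp (-(η * l)) ≤ 1 / 16) :
    (nullMeasure n).real {v | x / (2 * Real.log n * Real.log (Real.log n)) ≤ MnPlus v} ≤
      1 / (1 + y / M) ^ M + 3 * δ := by
  have hl0 : 0 < l := by linarith
  have hw0 : 0 < w := by linarith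
  have hM' : (0:ℝ) < M := by exact_mod_cast hM
  have hM1 : (1:ℝ) ≤ M := by exact_mod_cast hM
  have hn' : (0:ℝ) < n := by exact_mod_cast hn
  set p : ℝ := x / (2 * Real.log n * Real.log (Real.log n)) with hp
  have hpe : p = x / (l * w) := by rw [hp, hw, ← hl]; ring_nf
  have hle : l = Real.exp (1 / 2 * w) := by
    rw [hw, show 1 / 2 * (2 * Real.log l) = Real.log l by ring, Real.exp_log hl0]
  have hne : (n:ℝ) = Real.exp l := by rw [hl, Real.exp_log hn']
  obtain ⟨u, hu0, huw⟩ : ∃ u : ℝ, 0 < u ∧ u ^ 2 = w :=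
    ⟨Real.sqrt w, Real.sqrt_pos.mpr hw0, Real.sq_sqrt hw0.le⟩
  have hu2 : 2000 / η ≤ u := by
    rw [← huw] at w2; exact le_of_sq_le_sq w2 hu0.le
  have hAu : (A:ℝ) ≤ u := by
    rw [← huw] at w3; exact le_of_sq_le_sq w3 hu0.le
  have hp0 : 0 < p := by rw [hpe]; positivity
  have hpl : p = x / w * Real.exp (-(w / 2)) := by
    rw [hpe, hle, Real.exp_neg, show 1 / 2 * w = w / 2 by ring]
    field_simp
  have hxw : x / w < 1 := (div_lt_one hw0).mpr w7
  have hp1 : p < 1 := by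
    rw [hpl]
    have : Real.exp (-(w/2)) ≤ 1 := Real.exp_le_one_iff.mpr (by linarith)
    have h3 := Real.exp_pos (-(w/2))
    nlinarith
  obtain ⟨c, hc⟩ := exists_QC n hp0 hp1
  set L : ℝ := Real.log (2000 * w / δ) with hL
  have hq : 1 ≤ 2000 * w / δ := by rw [le_div_iff₀ d0]; linarith
  have hL0 : 0 ≤ L := Real.log_nonneg hq
  have hL1 : L + 1 ≤ 2000 * w / δ := by
    have := Real.log_le_sub_one_of_pos (x := 2000 * w / δ) (by linarith)
    linarith
  have hLl : L + 1 ≤ η / M * l := by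
    have h3 : w ≤ δ * η / (2000 * M) * l := by
      rw [pow_one, Real.exp_neg, ← hle, ← div_eq_mul_inv, div_le_iff₀ hl0] at w8
      exact w8
    calc L + 1 ≤ 2000 * w / δ := hL1
      _ ≤ 2000 * (δ * η / (2000 * M) * l) / δ := by gcongr
      _ = η / M * l := by field_simp
  -- the index range
  set E := Real.exp (η * l) with hE
  have hE0 : 0 < E := Real.exp_pos _
  have hE16 : 16 * l ^ 3 ≤ E := by
    rw [Real.exp_neg, ← div_eq_mul_inv, div_le_iff₀ hE0] at l1
    linarith
  have hl3 : 1 ≤ l ^ 3 := one_le_pow₀ hl1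
  have hE1 : 16 ≤ E := by linarith
  set a : ℕ := ⌈E⌉₊ with ha
  have ha1 : E ≤ a := Nat.le_ceil _
  have ha2 : (a:ℝ) ≤ 2 * E := by
    have := Nat.ceil_lt_add_one hE0.le
    linarith
  have hEn : E * E * E ≤ n := by
    rw [hne, hE, ← Real.exp_add, ← Real.exp_add]
    apply Real.exp_le_exp.mpr
    have h3 : η * l ≤ 1/100 * l := by gcongr
    linarith
  have han : 4 * (a:ℝ) ≤ n := by
    have h3 : 16 * 16 * E ≤ E * E * E := by gcongr
    linarith
  have han' : 4 * a ≤ n := by exact_mod_cast han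
  have ha0 : 1 ≤ a := by
    have : (1:ℝ) ≤ a := by linarith
    exact_mod_cast this
  have hba : ((n - a : ℕ):ℝ) = n - a := Nat.cast_sub (by omega)
  have hidx : ∀ j, a ≤ j → j ≤ n - a → Idx n j u (sg n j) := by
    intro j hj1 hj2
    have e1 : (a:ℝ) ≤ j := by exact_mod_cast hj1
    have e2 : (j:ℝ) ≤ n - a := by rw [← hba]; exact_mod_cast hj2
    have e0 : (0:ℝ) ≤ (j:ℝ) * (n - j) / n := by
      apply div_nonneg _ hn'.le
      apply mul_nonneg <;> linarith
    have hsq : sg n j ^ 2 = j * (n - j) / n := Real.sq_sqrt e0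
    refine ⟨by omega, by omega, ?_, hsq⟩
    apply Real.le_sqrt_of_sq_le
    have h3 : (u^3)^2 = w^3 := by rw [← huw]; ring
    rw [h3, le_div_iff₀ hn']
    have h4 : w ≤ 2 * l := by
      rw [hw]; have := Real.log_le_sub_one_of_pos hl0; linarith
    have h5 : w ^ 3 ≤ (2 * l) ^ 3 := by gcongr
    have h6 : w ^ 3 ≤ a / 2 := by
      have h55 : (2 * l) ^ 3 = 8 * l ^ 3 := by ring
      linarith
    have h7 : (a:ℝ) * (n - a) ≤ j * (n - j) := by
      have := mul_nonneg (sub_nonneg.mpr e1) (sub_nonneg.mpr e2)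
      linarith
    have h8 : (a:ℝ) / 2 * n ≤ a * (n - a) := by
      have := mul_nonneg (show (0:ℝ) ≤ a by linarith) (show (0:ℝ) ≤ n / 2 - a by linarith)
      linarith
    have h9 : w ^ 3 * n ≤ a / 2 * n := by gcongr
    linarith
  have hstd : Std (η/20) u p := by
    refine ⟨by linarith, by linarith, ?_, ?_, ?_⟩
    · rw [div_le_iff₀ h0] at hu2; linarith
    · rw [huw, hpl, show -((1 + η/20/2) * w / 2) = -(η/80*w) + -(w/2) by ring, Real.exp_add]
      gcongr
      rw [le_div_iff₀ hw0]; linarith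
    · rw [huw, hpl]
      have h3 := Real.exp_pos (-(w/2))
      nlinarith
  have E' : Env n a (n - a) (η/20) u p c := ⟨hc, hstd, by omega, hidx⟩
  have hsl : sl n a + M * ((1 - 2 * η) * l / M) ≤ sl n (n - a : ℕ) := by
    rw [mul_div_cancel₀ _ hM'.ne']
    simp only [sl, hba]
    have e1 : (n:ℝ) - (n - a) = a := by ring
    rw [e1]
    have e2 : (1 - 2 * η) * l + Real.log a ≤ Real.log (n - a) := by
      have ha' : (0:ℝ) < a := by linarith
      rw [Real.le_log_iff_exp_le (by linarith), Real.exp_add, Real.exp_log ha']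
      have e3 : Real.exp ((1 - 2 * η) * l) * (E * E) = n := by
        rw [hne, hE, ← Real.exp_add, ← Real.exp_add]; ring_nf
      have e4 := Real.exp_pos ((1 - 2 * η) * l)
      have e5 : Real.exp ((1 - 2 * η) * l) * a ≤ Real.exp ((1 - 2 * η) * l) * (2 * E) := by gcongr
      have e6 : Real.exp ((1 - 2 * η) * l) * (2 * E) * 8 ≤ n := by
        rw [← e3]
        have e7 : 16 * E ≤ E * E := by gcongr
        have e8 : Real.exp ((1 - 2 * η) * l) * (16 * E) ≤ Real.exp ((1 - 2 * η) * l) * (E * E) := by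
          gcongr
        linarith
      linarith
    linarith
  refine E'.main_bound h0 h1 (by linarith) hA hAu hL0 ?_ d0 d1 (by rw [huw]; exact w4) ?_ hsl ?_ (by positivity) ?_
  · rw [huw, le_div_iff₀ hw0]
    have e1 : η ^ 2 * w / 512 = η^2/512*w := by ring
    rw [e1]
    calc (L + 1) * Real.exp (-(η^2/512*w)) * w ≤ (2000 * w / δ) * Real.exp (-(η^2/512*w)) * w := by gcongr
      _ = 2000 / δ * (w ^ 2 * Real.exp (-(η ^ 2 / 512 * w))) := by ring
      _ ≤ 2000 / δ * (δ * η / 2000) := by gcongr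
      _ = η := by field_simp
  · rw [huw, Real.exp_neg, hL, Real.exp_log (by linarith)]
    apply le_of_eq; field_simp
  · refine hLl.trans ?_
    rw [div_mul_eq_mul_div]; gcongr; linarith
  · rw [huw, hpe]
    have e1 : (1 - 3 * η) * l / M ≤ (1 - 2 * η) * l / M - L - 1 := by
      have : (1 - 3 * η) * l / M = (1 - 2 * η) * l / M - η / M * l := by ring
      linarith
    calc y / M * ((1 + 41 * η) / w) = y * (1 + 41 * η) / (M * w) := by field_simp
      _ ≤ x * (1 - 3 * η) / (M * w) := by gcongr
      _ = x / (l * w) * ((1 - 3 * η) * l / M) := by field_simp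
      _ ≤ _ := by gcongr

theorem final_bound (x : ℝ) (hx : 0 < x) (e : ℝ) (he : 0 < e) :
    ∀ᶠ n : ℕ in atTop,
      (nullMeasure n).real {v | x / (2 * Real.log n * Real.log (Real.log n)) ≤ MnPlus v} ≤
        Real.exp (-x) + e := by
  obtain ⟨y, hy, hyx, hye⟩ := choose_y hx (show 0 < e / 3 by linarith)
  obtain ⟨M, hM, hMe⟩ := choose_M (y := y) (show 0 < e / 3 by linarith)
  obtain ⟨δ, d0, d1, d2⟩ : ∃ δ : ℝ, 0 < δ ∧ δ ≤ 1 ∧ 3 * δ ≤ e / 3 :=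
    ⟨min 1 (e/9), lt_min one_pos (by linarith), min_le_left _ _, by
      have := min_le_right 1 (e/9); linarith⟩
  obtain ⟨η, h0, h1, h2⟩ : ∃ η : ℝ, 0 < η ∧ η ≤ 1/100 ∧ 44 * η * x ≤ x - y := by
    refine ⟨min (1/100) ((x-y)/(44*x)), lt_min (by norm_num) (div_pos (by linarith) (by linarith)),
      min_le_left _ _, ?_⟩
    have := min_le_right (1/100) ((x-y)/(44*x))
    rw [le_div_iff₀ (by linarith)] at this
    linarith
  have hxy : y * (1 + 41 * η) ≤ x * (1 - 3 * η) := by nlinarith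
  obtain ⟨A, hA⟩ : ∃ A : ℕ, 8 * Real.exp (-(A:ℝ)) ≤ η := by
    obtain ⟨A, hA⟩ := exists_nat_ge (8 / η)
    refine ⟨A, ?_⟩
    have h3 : 8 / η ≤ Real.exp A := by have := Real.add_one_le_exp (A:ℝ); linarith
    rw [div_le_iff₀ h0] at h3
    rw [Real.exp_neg, ← div_eq_mul_inv, div_le_iff₀ (Real.exp_pos _)]
    linarith
  have hM' : (0:ℝ) < M := by exact_mod_cast hM
  have tl : Tendsto (fun n : ℕ => Real.log n) atTop atTop :=
    Real.tendsto_log_atTop.comp tendsto_natCast_atTop_atTop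
  have tw : Tendsto (fun n : ℕ => 2 * Real.log (Real.log n)) atTop atTop :=
    (Real.tendsto_log_atTop.comp tl).const_mul_atTop (by norm_num)
  filter_upwards [eventually_gt_atTop 0, tl.eventually_ge_atTop 1, tw.eventually_ge_atTop 1,
    tw.eventually_ge_atTop ((2000 / η) ^ 2), tw.eventually_ge_atTop ((A:ℝ)^2),
    tw.eventually_ge_atTop (16 / δ), tw.eventually (ev_pow_exp 2 (c := η^2/512) (r := δ * η / 2000) (by positivity) (by positivity)),
    tw.eventually (ev_pow_exp 1 (c := η/80) (r := x) (by positivity) hx),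
    tw.eventually_gt_atTop x,
    tw.eventually (ev_pow_exp 1 (c := 1/2) (r := δ * η / (2000*M)) (by positivity) (by positivity)),
    tl.eventually (ev_pow_exp 3 (c := η) (r := 1/16) h0 (by norm_num))]
    with n n0 n1 n2 n3 n4 n5 n6 n7 n8 n9 n10
  have h5 : 16 ≤ δ * (2 * Real.log (Real.log n)) := by
    rw [div_le_iff₀ d0] at n5; linarith
  have := fixed_n hx hy h0 h1 hxy hM hA d0 d1 n0 rfl rfl n1 n2 n3 n4 h5 n6 n7 n8 n9 n10
  linarith

end BerkJonesPartM

theorem berk_jones_MnPlus_null_upper_bound (x : ℝ) (hx : 0 < x) :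
    ∀ ε > (0:ℝ), ∀ᶠ n : ℕ in Filter.atTop,
      ((nullMeasure n) {u | x / (2 * Real.log n * Real.log (Real.log n)) ≤ MnPlus u}).toReal ≤
        Real.exp (-x) + ε := by
  intro e he
  exact final_bound x hx e he
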